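/- arXiv:1311.6306 — 8 statements merged into one kernel-verified Lean document; each statement's English description precedes it below -/
import Mathlib

section
/- Let a_□(n) be the number of well-rounded sublattices of index n in the square lattice ℤ[i]. For every real s > 1, the Dirichlet series Φ_{□,wr}(s) = ∑_{n≥1} a_□(n) n^{−s} converges and satisfies the strict inequalities D_□(s) − ζ(s)·L(s,χ₋₄) < Φ_{□,wr}(s) < D_□(s) + ζ(s)·L(s,χ₋₄), where D_□(s) = ((2 + 2^s)/(1 + 2^s)) · ((1 − 3^{(1−s)/2})/(s − 1)) · (L(s,χ₋₄)/ζ(2s)) · ζ(s) · ζ(2s−1). -/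
noncomputable section

open Filter

/-- A subgroup `Λ` of `ℂ ≅ ℝ²` is well-rounded if it contains two `ℝ`-linearly
independent vectors, both of minimal norm among the nonzero elements of `Λ`. -/
def IsWellRounded (Λ : AddSubgroup ℂ) : Prop :=
  ∃ x y : ℂ, x ∈ Λ ∧ y ∈ Λ ∧ LinearIndependent ℝ ![x, y] ∧
    (∀ z ∈ Λ, z ≠ 0 → ‖x‖ ≤ ‖z‖) ∧ (∀ z ∈ Λ, z ≠ 0 → ‖y‖ ≤ ‖z‖)

/-- The square lattice, realised as the Gaussian integers `ℤ[i] = ℤ + ℤi ⊂ ℂ`. -/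
def squareLattice : AddSubgroup ℂ := AddSubgroup.closure {1, Complex.I}

/-- `aSquare n` is the number of well-rounded sublattices of index `n` in the square lattice. -/
def aSquare (n : ℕ) : ℕ :=
  Nat.card {Λ : AddSubgroup ℂ // Λ ≤ squareLattice ∧ IsWellRounded Λ ∧
    (Λ.addSubgroupOf squareLattice).index = n}

/-- The Dirichlet character mod 4 usually denoted `χ₋₄`. -/
def chiFour (n : ℕ) : ℝ := if n % 4 = 1 then 1 else if n % 4 = 3 then -1 else 0

/-- The L-series `L(s, χ₋₄)` for real `s`. -/
def LFour (s : ℝ) : ℝ := ∑' n : ℕ, chiFour n * (n : ℝ) ^ (-s)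

/-- The Riemann zeta function for real `s > 1`, as a real series
(the term `n = 0` vanishes since `(0:ℝ)^(-s) = 0` for `s ≠ 0`). -/
def zetaReal (s : ℝ) : ℝ := ∑' n : ℕ, (n : ℝ) ^ (-s)

/-- The comparison function `D_□(s)`. -/
def DSquare (s : ℝ) : ℝ :=
  ((2 + 2 ^ s) / (1 + 2 ^ s)) * ((1 - 3 ^ ((1 - s) / 2)) / (s - 1)) *
    (LFour s / zetaReal (2 * s)) * zetaReal s * zetaReal (2 * s - 1)

/-! ### Part 1: the sum over the angular sector -/

/-- A primitive of `t ↦ t ^ (-s)`. -/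
def primF (s t : ℝ) : ℝ := (1 - t ^ (1 - s)) / (s - 1)

theorem primF_slope {s x y : ℝ} (hs : 1 < s) (hx : 0 < x) (hxy : x < y) :
    (y - x) * y ^ (-s) ≤ primF s y - primF s x ∧
      primF s y - primF s x ≤ (y - x) * x ^ (-s) := by
  have hd : ∀ t : ℝ, 0 < t → HasDerivAt (primF s) (t ^ (-s)) t := by
    intro t ht
    have h1 := Real.hasDerivAt_rpow_const (x := t) (p := 1 - s) (Or.inl ht.ne')
    have h2 := (h1.const_sub 1).div_const (s - 1)
    have h3 : s - 1 ≠ 0 := by linarith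
    refine h2.congr_deriv ?_
    rw [show 1 - s - 1 = -s by ring]
    field_simp
    ring
  obtain ⟨c, hc, hce⟩ := exists_hasDerivAt_eq_slope (primF s) (fun t => t ^ (-s)) hxy
    (fun t ht => (hd t (lt_of_lt_of_le hx ht.1)).continuousAt.continuousWithinAt)
    (fun t ht => hd t (lt_trans hx ht.1))
  have hpos : 0 < y - x := by linarith
  rw [eq_div_iff hpos.ne'] at hce
  have hc0 : 0 < c := lt_trans hx hc.1
  rw [← hce, mul_comm (y - x), mul_comm (y - x)]
  constructor
  · exact mul_le_mul_of_nonneg_right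
      (Real.rpow_le_rpow_of_nonpos hc0 hc.2.le (by linarith)) hpos.le
  · exact mul_le_mul_of_nonneg_right
      (Real.rpow_le_rpow_of_nonpos hx hc.1.le (by linarith)) hpos.le

theorem primF_mono {s x y : ℝ} (hs : 1 < s) (hx : 0 < x) (hxy : x ≤ y) :
    primF s x ≤ primF s y := by
  rcases hxy.eq_or_lt with rfl | h
  · exact le_rfl
  · have := (primF_slope hs hx h).1
    have h2 : 0 ≤ (y - x) * y ^ (-s) :=
      mul_nonneg (by linarith) (Real.rpow_nonneg (by linarith) _)
    linarith

theorem primF_sum {s : ℝ} (hs : 1 < s) (a k : ℕ) (ha : 0 < a) (hk : 0 < k) (M : ℕ) :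
    (k : ℝ) * ∑ j ∈ Finset.range M, ((a + k * (j + 1) : ℕ) : ℝ) ^ (-s)
        ≤ primF s ((a + k * M : ℕ) : ℝ) - primF s a ∧
    primF s ((a + k * (M + 1) : ℕ) : ℝ) - primF s ((a + k : ℕ) : ℝ)
      ≤ (k : ℝ) * ∑ j ∈ Finset.range M, ((a + k * (j + 1) : ℕ) : ℝ) ^ (-s) := by
  have ha' : (0 : ℝ) < a := by exact_mod_cast ha
  have hk' : (0 : ℝ) < k := by exact_mod_cast hk
  induction M with
  | zero => simp
  | succ M ih =>
    rw [Finset.sum_range_succ, mul_add]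
    have hMM : (0:ℝ) ≤ M := by positivity
    have e1 := (primF_slope (s := s) (x := ((a + k * M : ℕ) : ℝ))
      (y := ((a + k * (M + 1) : ℕ) : ℝ)) hs (by push_cast; positivity)
      (by push_cast; nlinarith)).1
    have e2 := (primF_slope (s := s) (x := ((a + k * (M + 1) : ℕ) : ℝ))
      (y := ((a + k * (M + 1 + 1) : ℕ) : ℝ)) hs (by push_cast; positivity)
      (by push_cast; nlinarith)).2
    have d1 : ((a + k * (M + 1) : ℕ) : ℝ) - ((a + k * M : ℕ) : ℝ) = k := by push_cast; ring
    have d2 : ((a + k * (M + 1 + 1) : ℕ) : ℝ) - ((a + k * (M + 1) : ℕ) : ℝ) = k := by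
      push_cast; ring
    rw [d1] at e1
    rw [d2] at e2
    constructor <;> linarith [ih.1, ih.2]

/-- `∫_1^{√3} t^{-s} dt`. -/
def Jint (s : ℝ) : ℝ := (1 - 3 ^ ((1 - s) / 2)) / (s - 1)

theorem sqrt3_rpow (s : ℝ) : (Real.sqrt 3) ^ (1 - s) = 3 ^ ((1 - s) / 2) := by
  rw [Real.sqrt_eq_rpow, ← Real.rpow_mul (by norm_num)]
  congr 1
  ring

theorem primF_scale {s a : ℝ} (ha : 0 < a) :
    primF s (Real.sqrt 3 * a) - primF s a = a ^ (1 - s) * Jint s := by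
  unfold primF Jint
  rw [Real.mul_rpow (Real.sqrt_nonneg 3) ha.le, sqrt3_rpow]
  ring

/-- Number of steps of length `k` from `a` that stay below `√3 a`. -/
def stepsM (k a : ℕ) : ℕ := (Nat.sqrt (3 * a ^ 2 - 1) - a) / k

theorem stepsM_spec {k a : ℕ} (hk : 0 < k) (ha : 0 < a) (j : ℕ) :
    j ≤ stepsM k a ↔ (a + k * j) ^ 2 < 3 * a ^ 2 := by
  unfold stepsM
  have h1 : 0 < a ^ 2 := by positivity
  have h2 : a ≤ Nat.sqrt (3 * a ^ 2 - 1) := by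
    rw [Nat.le_sqrt']
    omega
  rw [Nat.le_div_iff_mul_le hk, mul_comm j k]
  have h3 : k * j ≤ Nat.sqrt (3 * a ^ 2 - 1) - a ↔ a + k * j ≤ Nat.sqrt (3 * a ^ 2 - 1) := by
    omega
  rw [h3, Nat.le_sqrt']
  omega

/-- The inner sum. -/
def innerS (s : ℝ) (k a : ℕ) : ℝ :=
  ∑ j ∈ Finset.range (stepsM k a), ((a + k * (j + 1) : ℕ) : ℝ) ^ (-s)

theorem innerS_bounds {s : ℝ} (hs : 1 < s) {k a : ℕ} (hk : 0 < k) (ha : 0 < a) :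
    (k : ℝ) * innerS s k a ≤ (a : ℝ) ^ (1 - s) * Jint s ∧
    (a : ℝ) ^ (1 - s) * Jint s - k * (a : ℝ) ^ (-s) ≤ (k : ℝ) * innerS s k a := by
  have ha' : (0 : ℝ) < a := by exact_mod_cast ha
  have hk' : (0 : ℝ) < k := by exact_mod_cast hk
  obtain ⟨h1, h2⟩ := primF_sum hs a k ha hk (stepsM k a)
  rw [← primF_scale ha']
  have hu : ((a + k * stepsM k a : ℕ) : ℝ) ≤ Real.sqrt 3 * a := by
    have := (stepsM_spec hk ha (stepsM k a)).1 le_rfl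
    have h' : (((a + k * stepsM k a : ℕ) : ℝ)) ^ 2 < 3 * (a : ℝ) ^ 2 := by exact_mod_cast this
    apply le_of_lt
    apply lt_of_pow_lt_pow_left₀ 2 (by positivity)
    rw [mul_pow, Real.sq_sqrt (by norm_num)]
    exact h'
  have hl : Real.sqrt 3 * a ≤ ((a + k * (stepsM k a + 1) : ℕ) : ℝ) := by
    have := mt (stepsM_spec hk ha (stepsM k a + 1)).2 (by omega)
    have h' : 3 * (a : ℝ) ^ 2 ≤ (((a + k * (stepsM k a + 1) : ℕ) : ℝ)) ^ 2 := by
      exact_mod_cast not_lt.1 this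
    apply le_of_sq_le_sq _ (by positivity)
    rw [mul_pow, Real.sq_sqrt (by norm_num)]
    exact h'
  have g1 := primF_mono hs (by positivity) hu
  have g2 := primF_mono hs (by positivity) hl
  have g3 := (primF_slope (s := s) (x := a) (y := ((a + k : ℕ) : ℝ)) hs ha'
    (by push_cast; linarith)).2
  have d : ((a + k : ℕ) : ℝ) - a = k := by push_cast; ring
  rw [d] at g3
  unfold innerS
  constructor <;> linarith

theorem stepsM_one {k : ℕ} : stepsM k 1 = 0 := by
  unfold stepsM
  have : Nat.sqrt (3 * 1 ^ 2 - 1) = 1 := by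
    symm
    rw [Nat.eq_sqrt']
    norm_num
  rw [this]
  simp

theorem Jint_pos {s : ℝ} (hs : 1 < s) : 0 < Jint s := by
  unfold Jint
  apply div_pos _ (by linarith)
  have : (3 : ℝ) ^ ((1 - s) / 2) < 1 :=
    Real.rpow_lt_one_of_one_lt_of_neg (by norm_num) (by linarith)
  linarith

theorem Jint_lt_one {s : ℝ} (hs : 1 < s) : Jint s < 1 := by
  have h := primF_scale (s := s) (a := 1) one_pos
  simp only [mul_one, Real.one_rpow, one_mul] at h
  rw [← h]
  have h3 : Real.sqrt 3 < 2 := by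
    rw [Real.sqrt_lt' (by norm_num)]; norm_num
  have h1 : 1 < Real.sqrt 3 := by
    rw [Real.lt_sqrt (by norm_num)]; norm_num
  have := (primF_slope hs one_pos h1).2
  simp only [Real.one_rpow, mul_one] at this
  linarith

/-- The sector condition together with a congruence condition. -/
def Reg (k : ℕ) (q : ℕ × ℕ) : Prop :=
  0 < q.1 ∧ 0 < q.2 ∧ q.1 ^ 2 < 3 * q.2 ^ 2 ∧ q.2 ^ 2 < 3 * q.1 ^ 2 ∧ q.1 ≡ q.2 [MOD k]

/-- Lower half of the sector. -/
def RegLt (k : ℕ) (q : ℕ × ℕ) : Prop :=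
  0 < q.1 ∧ q.1 < q.2 ∧ q.2 ^ 2 < 3 * q.1 ^ 2 ∧ q.1 ≡ q.2 [MOD k]

theorem regLt_iff {k a : ℕ} (hk : 0 < k) (ha : 0 < a) (b : ℕ) :
    RegLt k (a, b) ↔ b ∈ (Finset.range (stepsM k a)).image (fun j => a + k * (j + 1)) := by
  simp only [RegLt, Finset.mem_image, Finset.mem_range]
  constructor
  · rintro ⟨-, h1, h2, h3⟩
    obtain ⟨c, hc⟩ := (Nat.modEq_iff_dvd' h1.le).1 h3
    have hb : b = a + k * c := by omega
    have hc0 : c ≠ 0 := by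
      rintro rfl
      simp at hb
      omega
    refine ⟨c - 1, ?_, ?_⟩
    · have : c ≤ stepsM k a := by
        rw [stepsM_spec hk ha, ← hb]
        exact h2
      omega
    · rw [hb, Nat.sub_add_cancel (by omega)]
  · rintro ⟨j, hj, rfl⟩
    refine ⟨ha, ?_, ?_, ?_⟩
    · have : 0 < k * (j + 1) := by positivity
      omega
    · exact (stepsM_spec hk ha (j + 1)).1 hj
    · simp [Nat.ModEq]

open Classical in
/-- Summand on a region. -/
def regTerm (s : ℝ) (R : ℕ × ℕ → Prop) (q : ℕ × ℕ) : ℝ :=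
  if R q then ((q.1 * q.2 : ℕ) : ℝ) ^ (-s) else 0

theorem regTerm_nonneg (s : ℝ) (R : ℕ × ℕ → Prop) (q : ℕ × ℕ) : 0 ≤ regTerm s R q := by
  unfold regTerm
  split_ifs <;> positivity

theorem row_hasSum {s : ℝ} {k : ℕ} (hk : 0 < k) (a : ℕ) :
    HasSum (fun b => regTerm s (RegLt k) (a, b))
      (if a = 0 then 0 else (a : ℝ) ^ (-s) * innerS s k a) := by
  rcases Nat.eq_zero_or_pos a with rfl | ha
  · simp [regTerm, RegLt]
  · rw [if_neg ha.ne']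
    have h := hasSum_sum_of_ne_finset_zero (L := SummationFilter.unconditional ℕ)
      (f := fun b => regTerm s (RegLt k) (a, b))
      (s := (Finset.range (stepsM k a)).image (fun j => a + k * (j + 1))) (by
        intro b hb
        rw [← regLt_iff hk ha] at hb
        simp [regTerm, hb])
    convert h using 1
    rw [Finset.sum_image (by intro i _ j _ hij; simp at hij; omega), innerS, Finset.mul_sum]
    refine Finset.sum_congr rfl fun j hj => ?_
    have : RegLt k (a, a + k * (j + 1)) := by
      rw [regLt_iff hk ha]
      exact Finset.mem_image_of_mem _ hj
    rw [regTerm, if_pos this, Nat.cast_mul, Real.mul_rpow (by positivity) (by positivity)]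

theorem zeta_summable {s : ℝ} (hs : 1 < s) : Summable (fun n : ℕ => (n : ℝ) ^ (-s)) :=
  Real.summable_nat_rpow.2 (by linarith)

theorem regLt_sum {s : ℝ} (hs : 1 < s) {k : ℕ} (hk : 0 < k) :
    Summable (regTerm s (RegLt k)) ∧
    (k : ℝ) * ∑' q, regTerm s (RegLt k) q < Jint s * zetaReal (2 * s - 1) ∧
    Jint s * zetaReal (2 * s - 1) - k * zetaReal (2 * s)
      < (k : ℝ) * ∑' q, regTerm s (RegLt k) q := by
  have hk' : (0 : ℝ) < k := by exact_mod_cast hk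
  set rowf : ℕ → ℝ := fun a => if a = 0 then 0 else (a : ℝ) ^ (-s) * innerS s k a with hrowf
  have z1 := zeta_summable (s := 2 * s - 1) (by linarith)
  have z2 := zeta_summable (s := 2 * s) (by linarith)
  have hin : ∀ a, 0 ≤ innerS s k a := fun a => Finset.sum_nonneg fun j _ => by positivity
  have up : ∀ a, (k : ℝ) * rowf a ≤ Jint s * (a : ℝ) ^ (-(2 * s - 1)) := by
    intro a
    rcases Nat.eq_zero_or_pos a with rfl | ha
    · simp only [hrowf, if_true, mul_zero]
      exact mul_nonneg (Jint_pos hs).le (by positivity)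
    · have ha' : (0 : ℝ) < a := by exact_mod_cast ha
      simp only [hrowf, if_neg ha.ne']
      have := mul_le_mul_of_nonneg_left (innerS_bounds hs hk ha).1
        (Real.rpow_nonneg ha'.le (-s))
      have e : (a : ℝ) ^ (-(2 * s - 1)) = (a : ℝ) ^ (-s) * (a : ℝ) ^ (1 - s) := by
        rw [← Real.rpow_add ha']; congr 1; ring
      rw [e]
      linarith
  have lo : ∀ a : ℕ, Jint s * (a : ℝ) ^ (-(2 * s - 1)) - k * (a : ℝ) ^ (-(2 * s))
      ≤ (k : ℝ) * rowf a := by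
    intro a
    rcases Nat.eq_zero_or_pos a with rfl | ha
    · simp only [hrowf, if_true, mul_zero, Nat.cast_zero]
      rw [Real.zero_rpow (by linarith), Real.zero_rpow (by linarith)]
      simp
    · have ha' : (0 : ℝ) < a := by exact_mod_cast ha
      simp only [hrowf, if_neg ha.ne']
      have := mul_le_mul_of_nonneg_left (innerS_bounds hs hk ha).2
        (Real.rpow_nonneg ha'.le (-s))
      have e : (a : ℝ) ^ (-(2 * s - 1)) = (a : ℝ) ^ (-s) * (a : ℝ) ^ (1 - s) := by
        rw [← Real.rpow_add ha']; congr 1; ring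
      have e2 : (a : ℝ) ^ (-(2 * s)) = (a : ℝ) ^ (-s) * (a : ℝ) ^ (-s) := by
        rw [← Real.rpow_add ha']; congr 1; ring
      rw [e, e2]
      linarith
  have hrow0 : ∀ a, 0 ≤ rowf a := by
    intro a
    simp only [hrowf]
    split_ifs
    · exact le_rfl
    · exact mul_nonneg (by positivity) (hin a)
  have krow : Summable (fun a => (k : ℝ) * rowf a) :=
    Summable.of_nonneg_of_le (fun a => mul_nonneg hk'.le (hrow0 a)) up (z1.mul_left _)
  have hrs : Summable rowf := (summable_mul_left_iff hk'.ne').1 krow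
  have hsum : Summable (regTerm s (RegLt k)) := by
    rw [summable_prod_of_nonneg (fun q => regTerm_nonneg _ _ _)]
    refine ⟨fun a => (row_hasSum hk a).summable, ?_⟩
    refine hrs.congr fun a => ((row_hasSum hk a).tsum_eq).symm
  have htot : ∑' q, regTerm s (RegLt k) q = ∑' a, rowf a := by
    rw [hsum.tsum_prod' (fun a => (row_hasSum hk a).summable)]
    exact tsum_congr fun a => (row_hasSum hk a).tsum_eq
  have row1 : rowf 1 = 0 := by simp [hrowf, innerS, stepsM_one]
  refine ⟨hsum, ?_, ?_⟩
  · rw [htot, ← tsum_mul_left, zetaReal, ← tsum_mul_left]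
    refine Summable.tsum_lt_tsum (i := 1) up ?_ krow (z1.mul_left _)
    rw [row1]
    simpa using Jint_pos hs
  · rw [htot, ← tsum_mul_left, zetaReal, zetaReal, ← tsum_mul_left, ← tsum_mul_left,
      ← (z1.mul_left _).tsum_sub (z2.mul_left _)]
    refine Summable.tsum_lt_tsum (i := 1) lo ?_ ((z1.mul_left _).sub (z2.mul_left _)) krow
    rw [row1]
    have : (1 : ℝ) ≤ k := by exact_mod_cast hk
    simp only [Nat.cast_one, Real.one_rpow, mul_one, mul_zero]
    linarith [Jint_lt_one hs]

theorem regTerm_split (s : ℝ) (k : ℕ) (q : ℕ × ℕ) :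
    regTerm s (Reg k) q = regTerm s (RegLt k) q + regTerm s (RegLt k) q.swap
      + regTerm s (fun q => 0 < q.1 ∧ q.1 = q.2) q := by
  obtain ⟨a, b⟩ := q
  simp only [regTerm, Reg, RegLt, Prod.swap]
  rcases lt_trichotomy a b with h | h | h
  · have h2 : ¬ b < a := by omega
    have h3 : a ≠ b := by omega
    simp only [h, h2, h3, false_and, and_false, if_false, true_and, add_zero]
    congr 1
    apply propext
    constructor
    · rintro ⟨h4, h5, h6, h7, h8⟩
      exact ⟨h4, h7, h8⟩
    · rintro ⟨h4, h7, h8⟩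
      exact ⟨h4, by omega, by nlinarith, h7, h8⟩
  · subst h
    simp only [lt_irrefl, false_and, and_false, if_false, zero_add, and_true]
    congr 1
    apply propext
    constructor
    · rintro ⟨h4, -⟩
      exact h4
    · intro h4
      have : 0 < a ^ 2 := by positivity
      exact ⟨h4, h4, by omega, by omega, rfl⟩
  · have h2 : ¬ a < b := by omega
    have h3 : a ≠ b := by omega
    simp only [h, h2, h3, false_and, and_false, if_false, true_and, add_zero, zero_add]
    rw [mul_comm b a]
    congr 1
    apply propext
    constructor
    · rintro ⟨h4, h5, h6, h7, h8⟩
      exact ⟨h5, h6, h8.symm⟩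
    · rintro ⟨h4, h7, h8⟩
      exact ⟨by omega, h4, h7, by nlinarith, h8.symm⟩

theorem diag_hasSum {s : ℝ} (hs : 1 < s) :
    HasSum (regTerm s (fun q => 0 < q.1 ∧ q.1 = q.2)) (zetaReal (2 * s)) := by
  have z2 := zeta_summable (s := 2 * s) (by linarith)
  have inj : Function.Injective (fun n : ℕ => (n, n)) := fun a b h => (Prod.mk.inj h).1
  rw [← inj.hasSum_iff]
  · have e : (regTerm s (fun q => 0 < q.1 ∧ q.1 = q.2) ∘ fun n : ℕ => (n, n))
        = fun n : ℕ => (n : ℝ) ^ (-(2 * s)) := ?_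
    · rw [e]
      exact z2.hasSum
    funext n
    simp only [Function.comp, regTerm]
    rcases Nat.eq_zero_or_pos n with rfl | hn
    · simp
      rw [Real.zero_rpow (by linarith)]
    · have hn' : (0 : ℝ) < n := by exact_mod_cast hn
      rw [if_pos ⟨hn, trivial⟩, Nat.cast_mul, Real.mul_rpow hn'.le hn'.le, ← Real.rpow_add hn']
      congr 1
      ring
  · rintro ⟨a, b⟩ hab
    rw [regTerm, if_neg]
    rintro ⟨-, h⟩
    simp at h
    subst h
    exact hab ⟨a, rfl⟩

theorem reg_sum {s : ℝ} (hs : 1 < s) {k : ℕ} (hk : 0 < k) :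
    Summable (regTerm s (Reg k)) ∧
    (k : ℝ) * ∑' q, regTerm s (Reg k) q
      < 2 * Jint s * zetaReal (2 * s - 1) + k * zetaReal (2 * s) ∧
    2 * Jint s * zetaReal (2 * s - 1) - k * zetaReal (2 * s)
      < (k : ℝ) * ∑' q, regTerm s (Reg k) q := by
  obtain ⟨h1, h2, h3⟩ := regLt_sum hs hk
  have hsw : HasSum (fun q : ℕ × ℕ => regTerm s (RegLt k) q.swap)
      (∑' q, regTerm s (RegLt k) q) :=
    (Equiv.prodComm ℕ ℕ).hasSum_iff.2 h1.hasSum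
  have h := ((h1.hasSum.add hsw).add (diag_hasSum hs)).congr_fun (regTerm_split s k)
  refine ⟨h.summable, ?_, ?_⟩ <;> rw [h.tsum_eq] <;> linarith

/-! ### Part 2: primitive representations as sums of two squares -/

/-- Number of square roots of `-1` modulo `n`. -/
def fcount (n : ℕ) : ℕ := Nat.card {t : ZMod n // t ^ 2 = -1}

theorem exists_rep : ∀ n : ℕ, 0 < n → ∀ t : ℤ, (n : ℤ) ∣ t ^ 2 + 1 →
    ∃ x y : ℤ, x ^ 2 + y ^ 2 = n ∧ (n : ℤ) ∣ y - t * x ∧ IsCoprime x y := by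
  intro n
  induction n using Nat.strong_induction_on with
  | _ n ih =>
    intro hn t ht
    rcases Nat.lt_or_ge n 2 with h1 | h2
    · have : n = 1 := by omega
      subst this
      exact ⟨1, 0, by norm_num, by simp, isCoprime_one_left⟩
    · -- reduce `t`
      obtain ⟨r, hr1, hr2, hr3⟩ : ∃ r : ℤ, (n : ℤ) ∣ t - r ∧ -(n : ℤ) ≤ 2 * r ∧ 2 * r ≤ n := by
        refine ⟨Int.bmod t n, ?_, ?_, ?_⟩
        · exact Int.dvd_self_sub_bmod
        · have := Int.le_bmod (x := t) hn
          omega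
        · have := Int.bmod_lt (x := t) hn
          omega
      have hdvd : (n : ℤ) ∣ r ^ 2 + 1 := by
        have : r ^ 2 + 1 = t ^ 2 + 1 - (t - r) * (t + r) := by ring
        rw [this]
        exact dvd_sub ht (Dvd.dvd.mul_right hr1 _)
      obtain ⟨m, hm⟩ := hdvd
      have hn' : (2 : ℤ) ≤ n := by exact_mod_cast h2
      have hm0 : 0 < m := by
        by_contra hcon
        have : (n : ℤ) * m ≤ 0 := mul_nonpos_of_nonneg_of_nonpos (by omega) (by omega)
        nlinarith [sq_nonneg r]
      have hmn : m < n := by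
        by_contra hcon
        have h3 : (n : ℤ) * n ≤ n * m := mul_le_mul_of_nonneg_left (by omega) (by omega)
        have h4 : (2 * r) ^ 2 ≤ (n : ℤ) ^ 2 := sq_le_sq' (by omega) (by omega)
        nlinarith
      lift m to ℕ using hm0.le
      obtain ⟨x, y, hxy, ⟨c, hc⟩, -⟩ := ih m (by omega) (by omega) (-r) ⟨n, by rw [neg_sq, hm]; ring⟩
      have hmne : (m : ℤ) ≠ 0 := by omega
      -- `y = -r x + m c`
      have hy : y = -r * x + m * c := by linarith
      refine ⟨-c, (n : ℤ) * x - r * c, ?_, ?_, ?_⟩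
      · apply mul_left_cancel₀ hmne
        have e1 : (m : ℤ) * c = y + r * x := by linarith
        have e2 : (m : ℤ) * ((n : ℤ) * x - r * c) = x - r * y := by
          linear_combination (-x) * hm - r * e1
        apply mul_left_cancel₀ hmne
        have : (m : ℤ) * (m * ((-c) ^ 2 + (n * x - r * c) ^ 2))
            = (m * c) ^ 2 + (m * (n * x - r * c)) ^ 2 := by ring
        rw [this, e1, e2]
        have : (m : ℤ) * (m * n) = m * (r ^ 2 + 1) := by rw [hm]; ring
        rw [this, ← hxy]
        ring
      · obtain ⟨d, hd⟩ := hr1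
        refine ⟨x + d * c, ?_⟩
        linear_combination c * hd
      · refine ⟨-y, x, ?_⟩
        apply mul_left_cancel₀ hmne
        have e1 : (m : ℤ) * c = y + r * x := by linarith
        linear_combination y * e1 + x * ((-x) * hm - r * e1) + hxy
  

/-- Primitive elements in the first quadrant, of norm `n`. -/
def Prim (q : ℕ × ℕ) : Prop := 0 < q.1 ∧ Nat.Coprime q.1 q.2

/-- The norm. -/
def nrm (q : ℕ × ℕ) : ℕ := q.1 ^ 2 + q.2 ^ 2

theorem prim_coprime_nrm {q : ℕ × ℕ} (h : Prim q) : Nat.Coprime q.1 (nrm q) := by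
  have h2 : Nat.Coprime q.1 (q.2 ^ 2) := Nat.Coprime.pow_right 2 h.2
  have : nrm q = q.2 ^ 2 + q.1 * q.1 := by unfold nrm; ring
  rw [this]
  exact (Nat.coprime_add_mul_left_right _ _ _).2 h2

theorem exists_quadrant (x y : ℤ) (hxy : x ≠ 0 ∨ y ≠ 0) :
    ∃ u v : ℕ, 0 < u ∧ (((u : ℤ), (v : ℤ)) = (x, y) ∨ ((u : ℤ), (v : ℤ)) = (-y, x) ∨
      ((u : ℤ), (v : ℤ)) = (-x, -y) ∨ ((u : ℤ), (v : ℤ)) = (y, -x)) := by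
  by_cases h1 : 0 < x ∧ 0 ≤ y
  · exact ⟨x.toNat, y.toNat, by omega, Or.inl (by ext <;> simp <;> omega)⟩
  by_cases h2 : 0 < -y ∧ 0 ≤ x
  · exact ⟨(-y).toNat, x.toNat, by omega, Or.inr (Or.inl (by ext <;> simp <;> omega))⟩
  by_cases h3 : 0 < -x ∧ 0 ≤ -y
  · exact ⟨(-x).toNat, (-y).toNat, by omega, Or.inr (Or.inr (Or.inl (by ext <;> simp <;> omega)))⟩
  by_cases h4 : 0 < y ∧ 0 ≤ -x
  · exact ⟨y.toNat, (-x).toNat, by omega, Or.inr (Or.inr (Or.inr (by ext <;> simp <;> omega)))⟩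
  omega

theorem card_prim (n : ℕ) (hn : 0 < n) :
    Nat.card {q : ℕ × ℕ // Prim q ∧ nrm q = n} = fcount n := by
  have key : ∀ q : {q : ℕ × ℕ // Prim q ∧ nrm q = n},
      ((q.1.1 : ZMod n) * (q.1.1 : ZMod n)⁻¹ = 1) := by
    rintro ⟨q, hq, rfl⟩
    exact ZMod.coe_mul_inv_eq_one _ (prim_coprime_nrm hq)
  have nrm0 : ∀ q : {q : ℕ × ℕ // Prim q ∧ nrm q = n},
      ((q.1.1 : ZMod n) ^ 2 + (q.1.2 : ZMod n) ^ 2 = 0) := by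
    rintro ⟨q, hq, rfl⟩
    have : ((nrm q : ℕ) : ZMod (nrm q)) = 0 := ZMod.natCast_self _
    have h2 : ((nrm q : ℕ) : ZMod (nrm q)) = (q.1 : ZMod (nrm q)) ^ 2 + (q.2 : ZMod (nrm q)) ^ 2 := by
      conv_lhs => arg 1; unfold nrm
      push_cast
      rfl
    rw [← h2, this]
  refine Nat.card_congr (Equiv.ofBijective (fun q => ⟨(q.1.2 : ZMod n) * (q.1.1 : ZMod n)⁻¹, ?_⟩)
    ⟨?_, ?_⟩)
  · have h1 := key q
    have h2 := nrm0 q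
    linear_combination ((q.1.1 : ZMod n)⁻¹) ^ 2 * h2
      - ((q.1.1 : ZMod n) * (q.1.1 : ZMod n)⁻¹ + 1) * h1
  · intro q q' h
    have h0 := congrArg Subtype.val h
    simp only at h0
    have k1 := key q
    have k2 := key q'
    have h3 : (q.1.2 : ZMod n) * q'.1.1 = q'.1.2 * q.1.1 := by
      linear_combination (q.1.1 : ZMod n) * q'.1.1 * h0 - (q.1.2 : ZMod n) * q'.1.1 * k1
        + (q'.1.2 : ZMod n) * q.1.1 * k2
    obtain ⟨⟨u, v⟩, ⟨hu, hc⟩, hq⟩ := q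
    obtain ⟨⟨u', v'⟩, ⟨hu', hc'⟩, hq'⟩ := q'
    simp only [nrm] at *
    have h4 : (n : ℤ) ∣ (v : ℤ) * u' - v' * u := by
      rw [← ZMod.intCast_zmod_eq_zero_iff_dvd]
      push_cast
      rw [h3, sub_self]
    obtain ⟨c, hc4⟩ := h4
    have hqz : (u : ℤ) ^ 2 + v ^ 2 = n := by exact_mod_cast hq
    have hqz' : (u' : ℤ) ^ 2 + v' ^ 2 = n := by exact_mod_cast hq'
    have hid : ((v : ℤ) * u' - v' * u) ^ 2 + (u * u' + v * v') ^ 2 = n ^ 2 := by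
      rw [sq (n : ℤ)]
      nth_rewrite 1 [← hqz]
      rw [← hqz']
      ring
    have hpos : (0 : ℤ) < u * u' + v * v' := by positivity
    have hnz : (0 : ℤ) < n := by exact_mod_cast hn
    have hc0 : c = 0 := by
      rw [hc4] at hid
      by_contra hcn
      have : 1 ≤ c ^ 2 := by
        have : 0 < c ^ 2 := by positivity
        omega
      nlinarith [mul_pos hnz hnz, pow_pos hpos 2]
    rw [hc0, mul_zero] at hc4
    have h5 : v * u' = v' * u := by
      have : (v : ℤ) * u' = v' * u := by linarith
      exact_mod_cast this
    have d1 : u ∣ u' := hc.dvd_of_dvd_mul_left ⟨v', by rw [h5]; ring⟩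
    have d2 : u' ∣ u := hc'.dvd_of_dvd_mul_left ⟨v, by rw [← h5]; ring⟩
    have e : u = u' := Nat.dvd_antisymm d1 d2
    subst e
    have e2 : v = v' := Nat.eq_of_mul_eq_mul_right hu h5
    subst e2
    rfl
  · rintro ⟨t, ht⟩
    have : NeZero n := ⟨hn.ne'⟩
    obtain ⟨T, rfl⟩ : ∃ T : ℤ, (T : ZMod n) = t := ZMod.intCast_surjective t
    have hT : (n : ℤ) ∣ T ^ 2 + 1 := by
      rw [← ZMod.intCast_zmod_eq_zero_iff_dvd]
      push_cast
      rw [ht]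
      ring
    obtain ⟨x, y, h1, h2, h3⟩ := exists_rep n hn T hT
    have hne : x ≠ 0 ∨ y ≠ 0 := by
      by_contra hcon
      push Not at hcon
      rw [hcon.1, hcon.2] at h1
      simp at h1
      omega
    have h2' : (y : ZMod n) = T * x := by
      rw [← ZMod.intCast_zmod_eq_zero_iff_dvd] at h2
      push_cast at h2
      linear_combination h2
    obtain ⟨u, v, hu, huv⟩ := exists_quadrant x y hne
    have main : (u : ℤ) ^ 2 + v ^ 2 = n ∧ (((v : ℤ) : ZMod n) = T * ((u : ℤ) : ZMod n)) ∧
        IsCoprime (u : ℤ) v := by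
      simp only [Prod.mk.injEq] at huv
      rcases huv with ⟨e1, e2⟩ | ⟨e1, e2⟩ | ⟨e1, e2⟩ | ⟨e1, e2⟩
      · rw [e1, e2]
        exact ⟨h1, h2', h3⟩
      · rw [e1, e2]
        refine ⟨by rw [← h1]; ring, ?_, h3.symm.neg_left⟩
        push_cast
        linear_combination (x : ZMod n) * ht + (T : ZMod n) * h2'
      · rw [e1, e2]
        refine ⟨by rw [← h1]; ring, ?_, h3.neg_neg⟩
        push_cast
        linear_combination -h2'
      · rw [e1, e2]
        refine ⟨by rw [← h1]; ring, ?_, h3.symm.neg_right⟩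
        push_cast
        linear_combination -((x : ZMod n) * ht + (T : ZMod n) * h2')
    obtain ⟨m1, m2, m3⟩ := main
    have hP : Prim (u, v) := ⟨hu, Nat.isCoprime_iff_coprime.1 m3⟩
    have hN : nrm (u, v) = n := by
      unfold nrm
      exact_mod_cast m1
    refine ⟨⟨(u, v), hP, hN⟩, ?_⟩
    apply Subtype.ext
    have := key ⟨(u, v), hP, hN⟩
    simp only at this ⊢
    push_cast at m2
    rw [m2, mul_assoc, this, mul_one]

theorem fcount_mul {m n : ℕ} (h : Nat.Coprime m n) : fcount (m * n) = fcount m * fcount n := by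
  unfold fcount
  rw [← Nat.card_prod]
  let e := ZMod.chineseRemainder h
  refine Nat.card_congr (Equiv.trans (Equiv.subtypeEquiv (q := fun z : ZMod m × ZMod n =>
    z.1 ^ 2 = -1 ∧ z.2 ^ 2 = -1) e.toEquiv ?_) (Equiv.subtypeProdEquivProd (p := fun t : ZMod m => t ^ 2 = -1)
      (q := fun t : ZMod n => t ^ 2 = -1)))
  intro t
  have : t ^ 2 = -1 ↔ e (t ^ 2) = e (-1) := e.injective.eq_iff.symm
  rw [this, map_pow, map_neg, map_one, Prod.ext_iff]
  rfl

theorem fcount_one : fcount 1 = 1 := by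
  unfold fcount
  rw [Nat.card_eq_one_iff_unique]
  exact ⟨⟨fun a b => Subtype.ext (Subsingleton.elim _ _)⟩, ⟨⟨0, Subsingleton.elim _ _⟩⟩⟩

theorem fcount_two : fcount 2 = 1 := by
  unfold fcount
  rw [Nat.card_eq_fintype_card]
  decide

theorem fcount_four_dvd {n : ℕ} (h : 4 ∣ n) : fcount n = 0 := by
  unfold fcount
  rw [Nat.card_eq_zero]
  left
  constructor
  rintro ⟨t, ht⟩
  have := congrArg (ZMod.castHom h (ZMod 4)) ht
  rw [map_pow, map_neg, map_one] at this
  generalize (ZMod.castHom h (ZMod 4)) t = z at this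
  revert z
  decide

theorem fcount_prime_pow {p k : ℕ} (hp : p.Prime) (hp2 : p ≠ 2) (hk : 0 < k) :
    (fcount (p ^ k) : ℝ) = 1 + chiFour p := by
  have hodd : p % 2 = 1 := hp.eq_two_or_odd.resolve_left hp2
  set N := p ^ k with hN
  have : NeZero N := ⟨(pow_pos hp.pos k).ne'⟩
  have hcyc : IsCyclic (ZMod N)ˣ := ZMod.isCyclic_units_of_prime_pow p hp hp2 k
  have hN2 : 2 < N := by
    have h1 : p ≤ N := by
      rw [hN]
      exact Nat.le_self_pow hk.ne' p
    have := hp.two_le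
    omega
  have : Fact (2 < N) := ⟨hN2⟩
  have hneg : (-1 : (ZMod N)ˣ) ≠ 1 := by
    intro h
    have := congrArg Units.val h
    simp only [Units.val_neg, Units.val_one] at this
    exact ZMod.neg_one_ne_one this
  have hcardU : Fintype.card (ZMod N)ˣ = p ^ (k - 1) * (p - 1) := by
    rw [ZMod.card_units_eq_totient, hN, Nat.totient_prime_pow hp hk]
  have h2dvd : 2 ∣ Fintype.card (ZMod N)ˣ := by
    rw [hcardU]
    exact Dvd.dvd.mul_left (by omega) _
  have hneg2 : orderOf (-1 : (ZMod N)ˣ) = 2 :=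
    orderOf_eq_prime (by simp) hneg
  have huniq : ∀ w : (ZMod N)ˣ, orderOf w = 2 → w = -1 := by
    have h1 := IsCyclic.card_orderOf_eq_totient (α := (ZMod N)ˣ) h2dvd
    rw [Nat.totient_two, Finset.card_eq_one] at h1
    obtain ⟨a, ha⟩ := h1
    have hm : ∀ w : (ZMod N)ˣ, orderOf w = 2 → w = a := by
      intro w hw
      have : w ∈ ({a} : Finset (ZMod N)ˣ) := by
        rw [← ha]
        simp [hw]
      simpa using this
    intro w hw
    rw [hm w hw, hm _ hneg2]
  have hiff : ∀ w : (ZMod N)ˣ, w ^ 2 = -1 ↔ orderOf w = 4 := by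
    intro w
    constructor
    · intro h
      have := orderOf_eq_prime_pow (x := w) (p := 2) (n := 1) (by simpa [h] using hneg)
        (by norm_num; rw [show (4 : ℕ) = 2 * 2 by norm_num, pow_mul, h]; simp)
      simpa using this
    · intro h
      apply huniq
      rw [orderOf_pow, h]
      norm_num
  have hcount : fcount N = (Finset.univ.filter fun w : (ZMod N)ˣ => orderOf w = 4).card := by
    unfold fcount
    rw [← Fintype.card_subtype, ← Nat.card_eq_fintype_card]
    symm
    refine Nat.card_congr (Equiv.ofBijective (fun w => ⟨(w.1 : ZMod N), ?_⟩) ⟨?_, ?_⟩)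
    · have := congrArg Units.val ((hiff w.1).2 w.2)
      simpa using this
    · intro w w' h
      have := congrArg Subtype.val h
      exact Subtype.ext (Units.ext this)
    · rintro ⟨t, ht⟩
      let w : (ZMod N)ˣ := ⟨t, -t, by linear_combination -ht, by linear_combination -ht⟩
      refine ⟨⟨w, (hiff w).1 (Units.ext ?_)⟩, rfl⟩
      simpa [w] using ht
  have h4 : 4 ∣ Fintype.card (ZMod N)ˣ ↔ p % 4 = 1 := by
    rw [hcardU]
    have hc : Nat.Coprime 4 (p ^ (k - 1)) := by
      apply Nat.Coprime.pow_right
      rw [show 4 = 2 ^ 2 by norm_num]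
      apply Nat.Coprime.pow_left
      rw [Nat.coprime_two_left, Nat.odd_iff]
      exact hodd
    rw [hc.dvd_mul_left]
    omega
  rw [hcount]
  unfold chiFour
  by_cases h1 : p % 4 = 1
  · rw [IsCyclic.card_orderOf_eq_totient (h4.2 h1), if_pos h1]
    have : Nat.totient 4 = 2 := by decide
    rw [this]
    norm_num
  · have h3 : p % 4 = 3 := by omega
    rw [if_neg h1, if_pos h3]
    have : (Finset.univ.filter fun w : (ZMod N)ˣ => orderOf w = 4) = ∅ := by
      rw [Finset.filter_eq_empty_iff]
      intro w _ hw
      apply h1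
      rw [← h4, ← hw]
      exact orderOf_dvd_card
    rw [this]
    simp

/-! ### Part 3: Dirichlet series -/

theorem dirichlet_bridge (f : ℕ → ℝ) (hf : f 0 = 0) (s A : ℝ) :
    HasSum (fun n : ℕ => f n * (n : ℝ) ^ (-s)) A ↔
      LSeriesHasSum (fun n => (f n : ℂ)) (s : ℂ) (A : ℂ) := by
  unfold LSeriesHasSum
  rw [← Complex.hasSum_ofReal]
  refine iff_of_eq (congrArg (fun F => HasSum F (A : ℂ)) ?_)
  funext n
  rcases Nat.eq_zero_or_pos n with rfl | hn
  · simp [hf]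
  · rw [LSeries.term_of_ne_zero hn.ne', Complex.ofReal_mul, Complex.ofReal_cpow (by positivity),
      Complex.ofReal_neg, Complex.cpow_neg, div_eq_mul_inv]
    simp

theorem dirichlet_mul (f g : ArithmeticFunction ℝ) (s A B : ℝ)
    (hf : HasSum (fun n : ℕ => f n * (n : ℝ) ^ (-s)) A)
    (hg : HasSum (fun n : ℕ => g n * (n : ℝ) ^ (-s)) B) :
    HasSum (fun n : ℕ => (f * g) n * (n : ℝ) ^ (-s)) (A * B) := by
  rw [dirichlet_bridge _ (by simp)] at hf hg ⊢
  have h := hf.convolution hg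
  rw [Complex.ofReal_mul]
  convert h using 1
  funext n
  rw [LSeries.convolution_def, ArithmeticFunction.mul_apply]
  push_cast
  rfl

theorem mul_prime_pow (U H : ArithmeticFunction ℝ) {p : ℕ} (hp : p.Prime) (j : ℕ)
    (hH : ∀ i, H (p ^ (i + 2)) = 0) :
    (U * H) (p ^ (j + 1)) = U (p ^ (j + 1)) * H 1 + U (p ^ j) * H p := by
  rw [ArithmeticFunction.mul_apply,
    Nat.sum_divisorsAntidiagonal' (f := fun x y => U x * H y),
    Nat.sum_divisors_prime_pow hp, Finset.sum_range_succ', Finset.sum_range_succ']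
  have hz : ∑ i ∈ Finset.range j, U (p ^ (j + 1) / p ^ (i + 1 + 1)) * H (p ^ (i + 1 + 1)) = 0 :=
    Finset.sum_eq_zero fun i _ => by rw [hH, mul_zero]
  rw [hz]
  simp only [zero_add, pow_one, pow_zero, Nat.div_one]
  rw [pow_succ, Nat.mul_div_cancel _ hp.pos]
  ring

theorem chiFour_mul (m n : ℕ) : chiFour (m * n) = chiFour m * chiFour n := by
  unfold chiFour
  rw [Nat.mul_mod]
  have h1 : m % 4 < 4 := Nat.mod_lt _ (by norm_num)
  have h2 : n % 4 < 4 := Nat.mod_lt _ (by norm_num)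
  interval_cases m % 4 <;> interval_cases n % 4 <;> simp

/-- `χ₋₄` as an arithmetic function. -/
def chiA : ArithmeticFunction ℝ := ⟨chiFour, by simp [chiFour]⟩

/-- Squares of odd numbers. -/
def sqA : ArithmeticFunction ℝ := by
  classical
  exact ⟨fun n => if IsSquare n ∧ Odd n then 1 else 0, by simp⟩

/-- Odd numbers. -/
def oddA : ArithmeticFunction ℝ := ⟨fun n => if Odd n then 1 else 0, by simp⟩

/-- `χ₋₄ μ²`. -/
def hA : ArithmeticFunction ℝ :=
  ⟨fun n => chiFour n * ((ArithmeticFunction.moebius n : ℤ) : ℝ) ^ 2, by simp⟩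

/-- Primitive representations of odd numbers. -/
def gA : ArithmeticFunction ℝ := ⟨fun n => if Odd n then (fcount n : ℝ) else 0, by simp⟩

theorem chiA_mult : chiA.IsMultiplicative :=
  ⟨by simp [chiA, chiFour], fun _ => chiFour_mul _ _⟩

theorem oddA_mult : oddA.IsMultiplicative := by
  refine ⟨by simp [oddA], fun {m n} _ => ?_⟩
  simp only [oddA, ArithmeticFunction.coe_mk, Nat.odd_mul]
  by_cases h1 : Odd m <;> by_cases h2 : Odd n <;> simp [h1, h2]

theorem gA_mult : gA.IsMultiplicative := by
  refine ⟨by simp [gA, fcount_one], fun {m n} h => ?_⟩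
  simp only [gA, ArithmeticFunction.coe_mk, Nat.odd_mul]
  by_cases h1 : Odd m <;> by_cases h2 : Odd n <;> simp [h1, h2, fcount_mul h]

theorem hA_mult : hA.IsMultiplicative := by
  refine ⟨by simp [hA, chiFour], fun {m n} h => ?_⟩
  simp only [hA, ArithmeticFunction.coe_mk]
  rw [chiFour_mul, ArithmeticFunction.isMultiplicative_moebius.map_mul_of_coprime h]
  push_cast
  ring

theorem isSquare_mul_coprime {m n : ℕ} (h : Nat.Coprime m n) :
    IsSquare (m * n) ↔ IsSquare m ∧ IsSquare n := by
  constructor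
  · rintro ⟨c, hc⟩
    have h1 : m * n = c ^ 2 := by rw [hc, sq]
    obtain ⟨d, hd⟩ := exists_eq_pow_of_mul_eq_pow (by rw [Nat.isUnit_iff]; exact h) h1
    obtain ⟨e, he⟩ := exists_eq_pow_of_mul_eq_pow (by rw [Nat.isUnit_iff]; exact h.symm)
      (by rw [mul_comm]; exact h1)
    exact ⟨⟨d, by rw [hd, sq]⟩, ⟨e, by rw [he, sq]⟩⟩
  · rintro ⟨h1, h2⟩
    exact h1.mul h2

theorem sqA_mult : sqA.IsMultiplicative := by
  refine ⟨by simp [sqA], fun {m n} h => ?_⟩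
  simp only [sqA, ArithmeticFunction.coe_mk, Nat.odd_mul, isSquare_mul_coprime h]
  by_cases h1 : Odd m <;> by_cases h2 : Odd n <;> by_cases h3 : IsSquare m <;>
    by_cases h4 : IsSquare n <;> simp [h1, h2, h3, h4]

theorem isSquare_prime_pow {p : ℕ} (hp : p.Prime) (k : ℕ) : IsSquare (p ^ k) ↔ Even k := by
  constructor
  · rintro ⟨c, hc⟩
    have h0 : c ≠ 0 := by
      rintro rfl
      simp at hc
      exact hp.ne_zero hc.1
    have := congrArg (fun n => n.factorization p) hc
    simp only [Nat.factorization_mul h0 h0, hp.factorization_pow, Finsupp.add_apply,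
      Finsupp.single_eq_same] at this
    exact ⟨_, this⟩
  · rintro ⟨c, rfl⟩
    exact ⟨p ^ c, by rw [pow_add]⟩

theorem hA_high {p : ℕ} (hp : p.Prime) (i : ℕ) : hA (p ^ (i + 2)) = 0 := by
  simp only [hA, ArithmeticFunction.coe_mk]
  rw [ArithmeticFunction.moebius_apply_prime_pow hp (by omega), if_neg (by omega)]
  simp

theorem hA_one : hA 1 = 1 := hA_mult.1

theorem hA_prime {p : ℕ} (hp : p.Prime) : hA p = chiFour p := by
  simp only [hA, ArithmeticFunction.coe_mk]
  rw [ArithmeticFunction.moebius_apply_prime hp]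
  simp

theorem chiFour_odd_prime {p : ℕ} (hp : p.Prime) (hp2 : p ≠ 2) :
    chiFour p = 1 ∨ chiFour p = -1 := by
  have hodd : p % 2 = 1 := hp.eq_two_or_odd.resolve_left hp2
  unfold chiFour
  rcases (by omega : p % 4 = 1 ∨ p % 4 = 3) with h | h <;> simp [h]

theorem chiA_pow (p k : ℕ) : chiA (p ^ k) = chiFour p ^ k := by
  induction k with
  | zero => simp [chiA, chiFour]
  | succ k ih =>
    rw [pow_succ, pow_succ, ← ih]
    exact chiFour_mul _ _

theorem gA_eq : gA = oddA * hA := by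
  rw [ArithmeticFunction.IsMultiplicative.eq_iff_eq_on_prime_powers _ gA_mult _
    (oddA_mult.mul hA_mult)]
  intro p k hp
  rcases k with _ | j
  · rw [pow_zero, gA_mult.1, (oddA_mult.mul hA_mult).1]
  rw [mul_prime_pow _ _ hp j (hA_high hp), hA_one, hA_prime hp]
  by_cases hp2 : p = 2
  · subst hp2
    have h1 : chiFour 2 = 0 := by simp [chiFour]
    have h2 : ¬ Odd (2 ^ (j + 1)) := by
      rw [Nat.not_odd_iff_even]
      exact (even_two).pow_of_ne_zero (by omega)
    simp only [gA, oddA, ArithmeticFunction.coe_mk, if_neg h2, h1]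
    simp
  · have ho : Odd p := hp.odd_of_ne_two hp2
    simp only [gA, oddA, ArithmeticFunction.coe_mk, if_pos ho.pow]
    rw [fcount_prime_pow hp hp2 (by omega)]
    ring

theorem chiA_eq : chiA = sqA * hA := by
  rw [ArithmeticFunction.IsMultiplicative.eq_iff_eq_on_prime_powers _ chiA_mult _
    (sqA_mult.mul hA_mult)]
  intro p k hp
  rcases k with _ | j
  · rw [pow_zero, chiA_mult.1, (sqA_mult.mul hA_mult).1]
  rw [mul_prime_pow _ _ hp j (hA_high hp), hA_one, hA_prime hp, chiA_pow]
  by_cases hp2 : p = 2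
  · subst hp2
    have h1 : chiFour 2 = 0 := by simp [chiFour]
    have h2 : ¬ Odd (2 ^ (j + 1)) := by
      rw [Nat.not_odd_iff_even]
      exact (even_two).pow_of_ne_zero (by omega)
    simp only [sqA, ArithmeticFunction.coe_mk, h2, and_false, if_false, h1]
    simp
  · have ho : Odd p := hp.odd_of_ne_two hp2
    simp only [sqA, ArithmeticFunction.coe_mk, isSquare_prime_pow hp, ho.pow, and_true]
    have hc := chiFour_odd_prime hp hp2
    have hsq : chiFour p ^ 2 = 1 := by rcases hc with h | h <;> rw [h] <;> norm_num
    rcases Nat.even_or_odd j with ⟨c, hj⟩ | ⟨c, hj⟩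
    · have he : ¬ Even (j + 1) := by rw [Nat.not_even_iff_odd]; exact ⟨c, by omega⟩
      rw [if_neg he, if_pos ⟨c, hj⟩, hj, show c + c + 1 = 2 * c + 1 by ring, pow_succ, pow_mul, hsq]
      simp
    · have he : Even (j + 1) := ⟨c + 1, by omega⟩
      have he' : ¬ Even j := by rw [Nat.not_even_iff_odd]; exact ⟨c, hj⟩
      rw [if_pos he, if_neg he', hj, show 2 * c + 1 + 1 = 2 * (c + 1) by ring, pow_mul, hsq]
      simp

theorem hA_summable {s : ℝ} (hs : 1 < s) : Summable (fun n : ℕ => hA n * (n : ℝ) ^ (-s)) := by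
  refine Summable.of_norm_bounded (zeta_summable hs) fun n => ?_
  rw [norm_mul, Real.norm_of_nonneg (r := (n : ℝ) ^ (-s)) (by positivity)]
  refine mul_le_of_le_one_left (by positivity) ?_
  simp only [hA, ArithmeticFunction.coe_mk]
  rw [norm_mul, norm_pow]
  have h1 : ‖chiFour n‖ ≤ 1 := by
    unfold chiFour
    split_ifs <;> simp
  have h2 : ‖((ArithmeticFunction.moebius n : ℤ) : ℝ)‖ ≤ 1 := by
    rw [Real.norm_eq_abs]
    exact_mod_cast ArithmeticFunction.abs_moebius_le_one
  calc _ ≤ (1 : ℝ) * 1 ^ 2 := by gcongr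
    _ = 1 := by norm_num

theorem odd_hasSum {s : ℝ} (hs : 1 < s) :
    HasSum (fun n : ℕ => oddA n * (n : ℝ) ^ (-s)) ((1 - 2 ^ (-s)) * zetaReal s) := by
  have z := zeta_summable hs
  have ev : HasSum (fun n : ℕ => if Even n then (n : ℝ) ^ (-s) else 0) (2 ^ (-s) * zetaReal s) := by
    have inj : Function.Injective (fun n : ℕ => 2 * n) := fun a b h => by simpa using h
    rw [← inj.hasSum_iff]
    · have : ((fun n : ℕ => if Even n then (n : ℝ) ^ (-s) else 0) ∘ fun n : ℕ => 2 * n)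
          = fun n : ℕ => (2 : ℝ) ^ (-s) * (n : ℝ) ^ (-s) := by
        funext n
        simp only [Function.comp, even_two_mul, if_true]
        push_cast
        rw [Real.mul_rpow (by norm_num) (by positivity)]
      rw [this]
      exact z.hasSum.mul_left _
    · intro n hn
      rw [if_neg]
      rintro ⟨c, hc⟩
      exact hn ⟨c, by simp; omega⟩
  have h := z.hasSum.sub ev
  have e : zetaReal s - 2 ^ (-s) * zetaReal s = (1 - 2 ^ (-s)) * zetaReal s := by ring
  rw [← e]
  refine h.congr_fun fun n => ?_
  simp only [oddA, ArithmeticFunction.coe_mk]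
  by_cases ho : Odd n
  · rw [if_pos ho, if_neg (Nat.not_even_iff_odd.2 ho)]
    ring
  · rw [if_neg ho, if_pos (Nat.not_odd_iff_even.1 ho)]
    ring

theorem sq_hasSum {s : ℝ} (hs : 1 < s) :
    HasSum (fun n : ℕ => sqA n * (n : ℝ) ^ (-s)) ((1 - 2 ^ (-(2 * s))) * zetaReal (2 * s)) := by
  have inj : Function.Injective (fun n : ℕ => n * n) := fun a b h => by
    simpa using Nat.mul_self_inj.1 h
  rw [← inj.hasSum_iff]
  · refine (odd_hasSum (s := 2 * s) (by linarith)).congr_fun fun n => ?_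
    simp only [Function.comp, oddA, sqA, ArithmeticFunction.coe_mk, Nat.odd_mul]
    have : IsSquare (n * n) := ⟨n, rfl⟩
    rcases Nat.eq_zero_or_pos n with rfl | hn
    · simp
    · have hn' : (0 : ℝ) < n := by exact_mod_cast hn
      have e : ((n * n : ℕ) : ℝ) ^ (-s) = (n : ℝ) ^ (-(2 * s)) := by
        rw [Nat.cast_mul, Real.mul_rpow hn'.le hn'.le, ← Real.rpow_add hn']
        congr 1
        ring
      rw [e]
      simp [this]
  · intro n hn
    simp only [sqA, ArithmeticFunction.coe_mk]
    rw [if_neg, zero_mul]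
    rintro ⟨⟨c, hc⟩, -⟩
    exact hn ⟨c, hc.symm⟩

theorem g_series {s : ℝ} (hs : 1 < s) : ∃ P : ℝ, 0 < P ∧
    HasSum (fun n : ℕ => gA n * (n : ℝ) ^ (-s)) P ∧
    P * (1 + 2 ^ (-s)) * zetaReal (2 * s) = zetaReal s * LFour s := by
  have h1 := dirichlet_mul _ _ s _ _ (odd_hasSum hs) (hA_summable hs).hasSum
  have h2 := dirichlet_mul _ _ s _ _ (sq_hasSum hs) (hA_summable hs).hasSum
  rw [← gA_eq] at h1
  rw [← chiA_eq] at h2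
  set H := ∑' n : ℕ, hA n * (n : ℝ) ^ (-s)
  have hL : LFour s = (1 - 2 ^ (-(2 * s))) * zetaReal (2 * s) * H := h2.tsum_eq
  refine ⟨_, ?_, h1, ?_⟩
  · rw [← h1.tsum_eq]
    refine h1.summable.tsum_pos (fun n => ?_) 1 ?_
    · simp only [gA, ArithmeticFunction.coe_mk]
      split_ifs <;> positivity
    · rw [gA_mult.1]
      simp
  · rw [hL]
    have : (2 : ℝ) ^ (-(2 * s)) = 2 ^ (-s) * 2 ^ (-s) := by
      rw [← Real.rpow_add (by norm_num)]
      congr 1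
      ring
    rw [this]
    ring


/-! ## Part 4: fibers -/

theorem fiber_to_series {α : Type*} (N : α → ℕ) (s S : ℝ)
    (h : HasSum (fun a => (N a : ℝ) ^ (-s)) S) :
    HasSum (fun n : ℕ => (Nat.card {a // N a = n} : ℝ) * (n : ℝ) ^ (-s)) S := by
  have h1 := (Equiv.sigmaFiberEquiv N).hasSum_iff.mpr h
  have h2 := HasSum.sigma h1 (fun n => (h1.summable.sigma_factor n).hasSum)
  refine h2.congr_fun (fun n => ?_)
  have : ∀ c : {a // N a = n}, ((fun a => (N a : ℝ) ^ (-s)) ∘ (Equiv.sigmaFiberEquiv N)) ⟨n, c⟩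
      = (n : ℝ) ^ (-s) := by
    rintro ⟨a, ha⟩
    simp [Equiv.sigmaFiberEquiv, ha]
  simp only [this, tsum_const, nsmul_eq_mul]

theorem series_to_fiber {α : Type*} (N : α → ℕ) (s S : ℝ)
    (hfin : ∀ n, Finite {a // N a = n})
    (h : HasSum (fun n : ℕ => (Nat.card {a // N a = n} : ℝ) * (n : ℝ) ^ (-s)) S) :
    HasSum (fun a => (N a : ℝ) ^ (-s)) S := by
  have key : ∀ n (c : {a // N a = n}),
      ((fun a => (N a : ℝ) ^ (-s)) ∘ (Equiv.sigmaFiberEquiv N)) ⟨n, c⟩ = (n : ℝ) ^ (-s) := by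
    rintro n ⟨a, ha⟩
    simp [Equiv.sigmaFiberEquiv, ha]
  have hs : Summable (fun a => (N a : ℝ) ^ (-s)) := by
    rw [← (Equiv.sigmaFiberEquiv N).summable_iff, summable_sigma_of_nonneg]
    · constructor
      · intro n
        have := hfin n
        exact Summable.of_finite
      · simp only [key, tsum_const, nsmul_eq_mul]
        exact h.summable
    · intro x
      simp only [Function.comp]
      positivity
  have h2 := fiber_to_series N s _ hs.hasSum
  rw [h.unique h2]
  exact hs.hasSum

theorem nrm_fiber_finite (R : ℕ × ℕ → Prop) (n : ℕ) :
    Finite {q : ℕ × ℕ // R q ∧ nrm q = n} := by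
  refine Set.Finite.subset (Set.finite_Iic ((n, n) : ℕ × ℕ)) ?_
  rintro ⟨u, v⟩ ⟨_, h⟩
  simp only [nrm] at h
  refine ⟨?_, ?_⟩ <;> simp <;> nlinarith

theorem fcount_two_mul (m : ℕ) (hm : 0 < m) : (fcount (2 * m) : ℝ) = gA m := by
  simp only [gA, ArithmeticFunction.coe_mk]
  split_ifs with h
  · have := fcount_mul (m := 2) (n := m) (by simpa using h)
    rw [this, fcount_two, one_mul]
  · rw [fcount_four_dvd]
    · simp
    · rw [Nat.not_odd_iff_even] at h
      obtain ⟨k, rfl⟩ := h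
      exact ⟨k, by ring⟩

theorem podd_sum {s P : ℝ} (hs : 1 < s) (h : HasSum (fun n : ℕ => gA n * (n : ℝ) ^ (-s)) P) :
    HasSum (fun q : {q : ℕ × ℕ // Prim q ∧ Odd (nrm q)} => (nrm q.1 : ℝ) ^ (-s)) P := by
  have e : ∀ n : ℕ, Odd n → {a : {q : ℕ × ℕ // Prim q ∧ Odd (nrm q)} // nrm a.1 = n} ≃
      {q : ℕ × ℕ // Prim q ∧ nrm q = n} := fun n hn =>
    { toFun := fun a => ⟨a.1.1, a.1.2.1, a.2⟩
      invFun := fun q => ⟨⟨q.1, q.2.1, by rw [q.2.2]; exact hn⟩, q.2.2⟩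
      left_inv := fun a => rfl
      right_inv := fun a => rfl }
  apply series_to_fiber (fun q : {q : ℕ × ℕ // Prim q ∧ Odd (nrm q)} => nrm q.1)
  · intro n
    by_cases hn : Odd n
    · have := nrm_fiber_finite Prim n
      exact Finite.of_equiv _ (e n hn).symm
    · have : IsEmpty {a : {q : ℕ × ℕ // Prim q ∧ Odd (nrm q)} // nrm a.1 = n} :=
        ⟨fun a => hn (a.2 ▸ a.1.2.2)⟩
      infer_instance
  · refine h.congr_fun (fun n => ?_)
    simp only [gA, ArithmeticFunction.coe_mk]
    split_ifs with hn
    · rw [Nat.card_congr (e n hn), card_prim n hn.pos]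
    · have : IsEmpty {a : {q : ℕ × ℕ // Prim q ∧ Odd (nrm q)} // nrm a.1 = n} :=
        ⟨fun a => hn (a.2 ▸ a.1.2.2)⟩
      simp

theorem peven_sum {s P : ℝ} (hs : 1 < s) (h : HasSum (fun n : ℕ => gA n * (n : ℝ) ^ (-s)) P) :
    HasSum (fun q : {q : ℕ × ℕ // Prim q ∧ Even (nrm q)} => (nrm q.1 : ℝ) ^ (-s))
      ((2 : ℝ) ^ (-s) * P) := by
  have e : ∀ n : ℕ, Even n → {a : {q : ℕ × ℕ // Prim q ∧ Even (nrm q)} // nrm a.1 = n} ≃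
      {q : ℕ × ℕ // Prim q ∧ nrm q = n} := fun n hn =>
    { toFun := fun a => ⟨a.1.1, a.1.2.1, a.2⟩
      invFun := fun q => ⟨⟨q.1, q.2.1, by rw [q.2.2]; exact hn⟩, q.2.2⟩
      left_inv := fun a => rfl
      right_inv := fun a => rfl }
  have hemp : ∀ n : ℕ, ¬ Even n →
      IsEmpty {a : {q : ℕ × ℕ // Prim q ∧ Even (nrm q)} // nrm a.1 = n} := fun n hn =>
    ⟨fun a => hn (a.2 ▸ a.1.2.2)⟩
  apply series_to_fiber (fun q : {q : ℕ × ℕ // Prim q ∧ Even (nrm q)} => nrm q.1)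
  · intro n
    by_cases hn : Even n
    · have := nrm_fiber_finite Prim n
      exact Finite.of_equiv _ (e n hn).symm
    · have := hemp n hn
      infer_instance
  · have hinj : Function.Injective (fun m : ℕ => 2 * m) := fun a b hab => by
      simpa using hab
    rw [← hinj.hasSum_iff]
    · refine (h.mul_left ((2 : ℝ) ^ (-s))).congr_fun (fun m => ?_)
      simp only [Function.comp]
      rw [Nat.card_congr (e (2 * m) (by simp))]
      rcases Nat.eq_zero_or_pos m with rfl | hm
      · have : (-s) ≠ 0 := by linarith
        simp [Real.zero_rpow this]
      · rw [card_prim _ (by omega), fcount_two_mul m hm]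
        push_cast
        rw [Real.mul_rpow (by norm_num) (by positivity)]
        ring
    · intro n hn
      have := hemp n (fun ⟨k, hk⟩ => hn ⟨k, by simp; omega⟩)
      simp

theorem reg_subtype_sum {s : ℝ} {k : ℕ} (h : Summable (regTerm s (Reg k))) :
    HasSum (fun q : {q : ℕ × ℕ // Reg k q} => ((q.1.1 * q.1.2 : ℕ) : ℝ) ^ (-s))
      (∑' q, regTerm s (Reg k) q) := by
  have h1 := h.hasSum
  have h2 : regTerm s (Reg k) = Set.indicator {q | Reg k q}
      (fun q : ℕ × ℕ => ((q.1 * q.2 : ℕ) : ℝ) ^ (-s)) := by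
    funext q
    simp [regTerm, Set.indicator]
  rw [h2] at h1
  rw [h2]
  exact hasSum_subtype_iff_indicator.mpr h1

theorem mul_sum_nonneg {α β : Type*} {f : α → ℝ} {g : β → ℝ} {A B : ℝ}
    (hf : HasSum f A) (hg : HasSum g B) (hf0 : ∀ a, 0 ≤ f a) (hg0 : ∀ b, 0 ≤ g b) :
    HasSum (fun x : α × β => f x.1 * g x.2) (A * B) :=
  hf.mul hg (hf.summable.mul_of_nonneg hg.summable hf0 hg0)

/-! ## Part 5: lattices -/

def gi (a b : ℤ) : ℂ := ⟨a, b⟩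

theorem gi_inj {a b c d : ℤ} : gi a b = gi c d ↔ a = c ∧ b = d := by
  simp [gi, Complex.ext_iff]

theorem gi_add (a b c d : ℤ) : gi a b + gi c d = gi (a + c) (b + d) := by
  simp [gi, Complex.ext_iff]

theorem gi_neg (a b : ℤ) : -gi a b = gi (-a) (-b) := by
  simp [gi, Complex.ext_iff]

theorem gi_zsmul (m a b : ℤ) : m • gi a b = gi (m * a) (m * b) := by
  simp [gi, Complex.ext_iff]

theorem gi_zero : gi 0 0 = 0 := by
  simp [gi, Complex.ext_iff]

theorem gi_normSq (a b : ℤ) : ‖gi a b‖ ^ 2 = ((a ^ 2 + b ^ 2 : ℤ) : ℝ) := by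
  rw [Complex.sq_norm, Complex.normSq_apply]
  simp [gi]
  ring

theorem gi_norm_le {a b c d : ℤ} : ‖gi a b‖ ≤ ‖gi c d‖ ↔ a ^ 2 + b ^ 2 ≤ c ^ 2 + d ^ 2 := by
  rw [← sq_le_sq₀ (norm_nonneg _) (norm_nonneg _), gi_normSq, gi_normSq, Int.cast_le]

theorem mem_square {z : ℂ} : z ∈ squareLattice ↔ ∃ a b : ℤ, z = gi a b := by
  rw [squareLattice, AddSubgroup.mem_closure_pair]
  constructor
  · rintro ⟨m, n, rfl⟩
    exact ⟨m, n, by simp [gi, Complex.ext_iff]⟩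
  · rintro ⟨m, n, rfl⟩
    exact ⟨m, n, by simp [gi, Complex.ext_iff]⟩

theorem mem_pair {x1 x2 y1 y2 c1 c2 : ℤ} :
    gi c1 c2 ∈ AddSubgroup.closure {gi x1 x2, gi y1 y2} ↔
      ∃ k l : ℤ, c1 = k * x1 + l * y1 ∧ c2 = k * x2 + l * y2 := by
  rw [AddSubgroup.mem_closure_pair]
  simp only [gi_zsmul, gi_add, gi_inj]
  exact ⟨fun ⟨k, l, h1, h2⟩ => ⟨k, l, h1.symm, h2.symm⟩,
    fun ⟨k, l, h1, h2⟩ => ⟨k, l, h1.symm, h2.symm⟩⟩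

def giHom : (Fin 2 → ℤ) →+ ℂ where
  toFun v := gi (v 0) (v 1)
  map_zero' := gi_zero
  map_add' v w := by simp [gi_add]

theorem giHom_inj : Function.Injective giHom := by
  intro v w h
  simp only [giHom, AddMonoidHom.coe_mk, ZeroHom.coe_mk, gi_inj] at h
  funext i
  fin_cases i
  · exact h.1
  · exact h.2

theorem index_pair (x1 x2 y1 y2 : ℤ) (hD : x1 * y2 - x2 * y1 ≠ 0) :
    (AddSubgroup.closure {gi x1 x2, gi y1 y2}).relIndex squareLattice
      = (x1 * y2 - x2 * y1).natAbs := by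
  have h1 : AddSubgroup.closure {gi x1 x2, gi y1 y2} =
      (AddSubgroup.closure {![x1, x2], ![y1, y2]}).map giHom := by
    rw [AddMonoidHom.map_closure, Set.image_pair]
    simp [giHom]
  have h2 : squareLattice = (⊤ : AddSubgroup (Fin 2 → ℤ)).map giHom := by
    ext z
    rw [mem_square]
    simp only [AddSubgroup.mem_map, AddSubgroup.mem_top, true_and]
    constructor
    · rintro ⟨a, b, rfl⟩
      exact ⟨![a, b], by simp [giHom]⟩
    · rintro ⟨v, rfl⟩
      exact ⟨v 0, v 1, rfl⟩
  rw [h1, h2, AddSubgroup.relIndex_map_map_of_injective _ _ giHom_inj, AddSubgroup.relIndex_top_right]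
  have hli : LinearIndependent ℤ ![![x1, x2], ![y1, y2]] := by
    rw [LinearIndependent.pair_iff]
    intro s t h
    have e1 := congrFun h 0
    have e2 := congrFun h 1
    simp at e1 e2
    constructor
    · have : s * (x1 * y2 - x2 * y1) = 0 := by linear_combination y2 * e1 - y1 * e2
      exact (mul_eq_zero.mp this).resolve_right hD
    · have : t * (x1 * y2 - x2 * y1) = 0 := by linear_combination x1 * e2 - x2 * e1
      exact (mul_eq_zero.mp this).resolve_right hD
  have h3 : AddSubgroup.closure {![x1, x2], ![y1, y2]} =
      (Submodule.span ℤ (Set.range ![![x1, x2], ![y1, y2]])).toAddSubgroup := by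
    rw [Submodule.span_int_eq_addSubgroupClosure]
    simp [Matrix.range_cons]
    rw [Set.pair_comm]
  rw [h3]
  have h4 := Submodule.natAbs_det_basis_change (Pi.basisFun ℤ (Fin 2))
    (Submodule.span ℤ (Set.range ![![x1, x2], ![y1, y2]])) (Module.Basis.span hli)
  have h5 : (fun i => ((Module.Basis.span hli i : Submodule.span ℤ (Set.range ![![x1, x2], ![y1, y2]])) : Fin 2 → ℤ)) = ![![x1, x2], ![y1, y2]] := by
    funext i
    rw [Module.Basis.span_apply]
  have h6 : (Subtype.val ∘ (Module.Basis.span hli) : Fin 2 → Fin 2 → ℤ) = ![![x1, x2], ![y1, y2]] := h5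
  rw [h6, Pi.basisFun_det_apply, Matrix.det_fin_two] at h4
  change (x1 * y2 - x2 * y1).natAbs = _ at h4
  rw [AddSubgroup.index, h4]
  rfl

/-- The lattice of half-integral same-parity combinations of `z` and `w`. -/
def olat (z1 z2 w1 w2 : ℤ) : AddSubgroup ℂ where
  carrier := {c | ∃ c1 c2 m n : ℤ, c = gi c1 c2 ∧ 2 ∣ m - n ∧
    2 * c1 = m * z1 + n * w1 ∧ 2 * c2 = m * z2 + n * w2}
  zero_mem' := ⟨0, 0, 0, 0, gi_zero.symm, by simp, by simp, by simp⟩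
  add_mem' := by
    rintro _ _ ⟨c1, c2, m, n, rfl, h, h1, h2⟩ ⟨d1, d2, m', n', rfl, h', h1', h2'⟩
    exact ⟨c1 + d1, c2 + d2, m + m', n + n', gi_add _ _ _ _, by omega,
      by linear_combination h1 + h1', by linear_combination h2 + h2'⟩
  neg_mem' := by
    rintro _ ⟨c1, c2, m, n, rfl, h, h1, h2⟩
    exact ⟨-c1, -c2, -m, -n, gi_neg _ _, by omega,
      by linear_combination -h1, by linear_combination -h2⟩

theorem mem_olat {z1 z2 w1 w2 : ℤ} {c : ℂ} : c ∈ olat z1 z2 w1 w2 ↔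
    ∃ c1 c2 m n : ℤ, c = gi c1 c2 ∧ 2 ∣ m - n ∧
    2 * c1 = m * z1 + n * w1 ∧ 2 * c2 = m * z2 + n * w2 := Iff.rfl

theorem gi_mem_olat {z1 z2 w1 w2 c1 c2 : ℤ} : gi c1 c2 ∈ olat z1 z2 w1 w2 ↔
    ∃ m n : ℤ, 2 ∣ m - n ∧ 2 * c1 = m * z1 + n * w1 ∧ 2 * c2 = m * z2 + n * w2 := by
  rw [mem_olat]
  constructor
  · rintro ⟨d1, d2, m, n, h, h'⟩
    obtain ⟨rfl, rfl⟩ := gi_inj.mp h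
    exact ⟨m, n, h'⟩
  · rintro ⟨m, n, h⟩
    exact ⟨c1, c2, m, n, rfl, h⟩

theorem olat_le (z1 z2 w1 w2 : ℤ) : olat z1 z2 w1 w2 ≤ squareLattice := by
  rintro _ ⟨c1, c2, m, n, rfl, _⟩
  exact mem_square.mpr ⟨c1, c2, rfl⟩

theorem le_ext {A B : AddSubgroup ℂ} (hA : A ≤ squareLattice) (hB : B ≤ squareLattice)
    (h : ∀ c1 c2 : ℤ, gi c1 c2 ∈ A ↔ gi c1 c2 ∈ B) : A = B := by
  ext z
  constructor
  · intro hz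
    obtain ⟨a, b, rfl⟩ := mem_square.mp (hA hz)
    exact (h a b).mp hz
  · intro hz
    obtain ⟨a, b, rfl⟩ := mem_square.mp (hB hz)
    exact (h a b).mpr hz

theorem pair_le (x1 x2 y1 y2 : ℤ) :
    AddSubgroup.closure {gi x1 x2, gi y1 y2} ≤ squareLattice := by
  rw [AddSubgroup.closure_le]
  rintro z (rfl | rfl)
  · exact mem_square.mpr ⟨_, _, rfl⟩
  · exact mem_square.mpr ⟨_, _, rfl⟩

theorem olat_eq_pair (x1 x2 y1 y2 : ℤ) :
    olat (x1 + y1) (x2 + y2) (x1 - y1) (x2 - y2) = AddSubgroup.closure {gi x1 x2, gi y1 y2} := by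
  apply le_ext (olat_le _ _ _ _) (pair_le _ _ _ _)
  intro c1 c2
  rw [gi_mem_olat, mem_pair]
  constructor
  · rintro ⟨m, n, ⟨k, hk⟩, h1, h2⟩
    have hm : m = n + 2 * k := by omega
    subst hm
    exact ⟨n + k, k, by linarith, by linarith⟩
  · rintro ⟨k, l, rfl, rfl⟩
    exact ⟨k + l, k - l, ⟨l, by ring⟩, by ring, by ring⟩

theorem olat_neg_left (z1 z2 w1 w2 : ℤ) : olat (-z1) (-z2) w1 w2 = olat z1 z2 w1 w2 := by
  apply le_ext (olat_le _ _ _ _) (olat_le _ _ _ _)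
  intro c1 c2
  rw [gi_mem_olat, gi_mem_olat]
  constructor
  · rintro ⟨m, n, h, h1, h2⟩
    exact ⟨-m, n, by omega, by linarith, by linarith⟩
  · rintro ⟨m, n, h, h1, h2⟩
    exact ⟨-m, n, by omega, by linarith, by linarith⟩

theorem olat_swap (z1 z2 w1 w2 : ℤ) : olat w1 w2 z1 z2 = olat z1 z2 w1 w2 := by
  apply le_ext (olat_le _ _ _ _) (olat_le _ _ _ _)
  intro c1 c2
  rw [gi_mem_olat, gi_mem_olat]
  constructor
  · rintro ⟨m, n, h, h1, h2⟩
    exact ⟨n, m, by omega, by linarith, by linarith⟩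
  · rintro ⟨m, n, h, h1, h2⟩
    exact ⟨n, m, by omega, by linarith, by linarith⟩

theorem olat_neg_right (z1 z2 w1 w2 : ℤ) : olat z1 z2 (-w1) (-w2) = olat z1 z2 w1 w2 := by
  rw [← olat_swap, olat_neg_left, olat_swap]

/-- The lattice with parameters `p = (u, v)`, `q = (a, b)`. -/
def lat (p q : ℕ × ℕ) : AddSubgroup ℂ :=
  olat (q.1 * p.1) (q.1 * p.2) (-(q.2 * p.2)) (q.2 * p.1)

def Good (p q : ℕ × ℕ) : Prop :=
  Prim p ∧ 0 < q.1 ∧ 0 < q.2 ∧ q.1 ^ 2 < 3 * q.2 ^ 2 ∧ q.2 ^ 2 < 3 * q.1 ^ 2 ∧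
    ((Even q.1 ∧ Even q.2) ∨ (Even (nrm p) ∧ q.1 % 2 = q.2 % 2))

/-- Half-vectors of a good parameter pair are integral. -/
theorem good_half {p q : ℕ × ℕ} (h : Good p q) : ∃ x1 x2 y1 y2 : ℤ,
    ((q.1 : ℤ) * p.1 = x1 + y1) ∧ ((q.1 : ℤ) * p.2 = x2 + y2) ∧
    (-((q.2 : ℤ) * p.2) = x1 - y1) ∧ ((q.2 : ℤ) * p.1 = x2 - y2) := by
  obtain ⟨u, v⟩ := p
  obtain ⟨a, b⟩ := q
  obtain ⟨-, -, -, -, -, h⟩ := h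
  simp only [nrm] at h
  have key : ∃ x1 x2 : ℤ, (a : ℤ) * u - b * v = 2 * x1 ∧ (a : ℤ) * v + b * u = 2 * x2 := by
    rcases h with ⟨⟨k, rfl⟩, ⟨l, rfl⟩⟩ | ⟨h1, h2⟩
    · exact ⟨k * u - l * v, k * v + l * u, by push_cast; ring, by push_cast; ring⟩
    · have h3 : u % 2 = v % 2 := by
        rw [Nat.even_add, Nat.even_pow' (by norm_num), Nat.even_pow' (by norm_num),
          Nat.even_iff, Nat.even_iff] at h1
        omega
      obtain ⟨k, hk⟩ : ∃ k : ℤ, (b : ℤ) = a + 2 * k := ⟨((b : ℤ) - a) / 2, by omega⟩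
      obtain ⟨l, hl⟩ : ∃ l : ℤ, (v : ℤ) = u + 2 * l := ⟨((v : ℤ) - u) / 2, by omega⟩
      rw [hk, hl]
      exact ⟨-(a * l + k * u + 2 * k * l), a * u + a * l + k * u, by ring, by ring⟩
  obtain ⟨x1, x2, h1, h2⟩ := key
  refine ⟨x1, x2, a * u - x1, a * v - x2, ?_, ?_, ?_, ?_⟩ <;> simp only <;> linarith

theorem lat_index {p q : ℕ × ℕ} (h : Good p q) :
    2 * (lat p q).relIndex squareLattice = q.1 * q.2 * nrm p := by
  obtain ⟨x1, x2, y1, y2, h1, h2, h3, h4⟩ := good_half h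
  have hD : 2 * (x1 * y2 - x2 * y1) = -((q.1 * q.2 * nrm p : ℕ) : ℤ) := by
    simp only [nrm]
    push_cast
    have e : ((q.1 : ℤ) * p.1) * ((q.2 : ℤ) * p.1) - ((q.1 : ℤ) * p.2) * (-((q.2 : ℤ) * p.2))
        = (x1 + y1) * (x2 - y2) - (x2 + y2) * (x1 - y1) := by rw [h1, h2, h3, h4]
    linear_combination e
  have hpos : 0 < q.1 * q.2 * nrm p := by
    have := h.1.1
    have := h.2.1
    have := h.2.2.1
    simp only [nrm]
    positivity
  rw [lat, h1, h2, h3, h4, olat_eq_pair, index_pair _ _ _ _ (by omega)]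
  omega

theorem sq_one_le {m : ℤ} (h : m ≠ 0) : 1 ≤ m ^ 2 := by
  have : 0 < m ^ 2 := by positivity
  omega

theorem min_form {a b m n : ℤ} (ha : 0 < a) (hb : 0 < b) (h1 : a ^ 2 < 3 * b ^ 2)
    (h2 : b ^ 2 < 3 * a ^ 2) (hp : 2 ∣ m - n) (h0 : m ≠ 0 ∨ n ≠ 0) :
    a ^ 2 + b ^ 2 ≤ m ^ 2 * a ^ 2 + n ^ 2 * b ^ 2 ∧
      (m ^ 2 * a ^ 2 + n ^ 2 * b ^ 2 ≤ a ^ 2 + b ^ 2 → m ^ 2 = 1 ∧ n ^ 2 = 1) := by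
  have ha2 : 0 < a ^ 2 := by positivity
  have hb2 : 0 < b ^ 2 := by positivity
  rcases Int.emod_two_eq_zero_or_one m with hm | hm
  · obtain ⟨k, rfl⟩ : ∃ k, m = 2 * k := ⟨m / 2, by omega⟩
    obtain ⟨l, rfl⟩ : ∃ l, n = 2 * l := ⟨n / 2, by omega⟩
    have : a ^ 2 + b ^ 2 < (2 * k) ^ 2 * a ^ 2 + (2 * l) ^ 2 * b ^ 2 := by
      rcases h0 with h0 | h0
      · have hk : 1 ≤ k ^ 2 := sq_one_le (by rintro rfl; simp at h0)
        have hl : 0 ≤ l ^ 2 * b ^ 2 := by positivity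
        nlinarith
      · have hk : 1 ≤ l ^ 2 := sq_one_le (by rintro rfl; simp at h0)
        have hl : 0 ≤ k ^ 2 * a ^ 2 := by positivity
        nlinarith
    exact ⟨this.le, fun h => absurd h (not_le.mpr this)⟩
  · have hm1 : 1 ≤ m ^ 2 := sq_one_le (by omega)
    have hn1 : 1 ≤ n ^ 2 := sq_one_le (by omega)
    have e1 : 0 ≤ (m ^ 2 - 1) * a ^ 2 := mul_nonneg (by omega) ha2.le
    have e2 : 0 ≤ (n ^ 2 - 1) * b ^ 2 := mul_nonneg (by omega) hb2.le
    refine ⟨by nlinarith, fun h => ⟨?_, ?_⟩⟩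
    · have : (m ^ 2 - 1) * a ^ 2 = 0 := by linarith
      have := (mul_eq_zero.mp this).resolve_right ha2.ne'
      omega
    · have : (n ^ 2 - 1) * b ^ 2 = 0 := by linarith
      have := (mul_eq_zero.mp this).resolve_right hb2.ne'
      omega

/-- Minimal vectors of `lat`. -/
theorem lat_min {p q : ℕ × ℕ} (h : Good p q) {c1 c2 m n : ℤ}
    (hp : 2 ∣ m - n)
    (h1 : 2 * c1 = m * (q.1 * p.1) + n * (-(q.2 * p.2)))
    (h2 : 2 * c2 = m * (q.1 * p.2) + n * (q.2 * p.1))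
    (hc : c1 ≠ 0 ∨ c2 ≠ 0) :
    ((q.1 ^ 2 + q.2 ^ 2) * nrm p : ℤ) ≤ 4 * (c1 ^ 2 + c2 ^ 2) ∧
      (4 * (c1 ^ 2 + c2 ^ 2) ≤ ((q.1 ^ 2 + q.2 ^ 2) * nrm p : ℤ) → m ^ 2 = 1 ∧ n ^ 2 = 1) := by
  obtain ⟨⟨hu, -⟩, ha, hb, ha3, hb3, -⟩ := h
  have h0 : m ≠ 0 ∨ n ≠ 0 := by
    by_contra! hcon
    obtain ⟨rfl, rfl⟩ := hcon
    simp at h1 h2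
    tauto
  have hN : (0 : ℤ) < nrm p := by
    simp only [nrm]; positivity
  have e : 4 * (c1 ^ 2 + c2 ^ 2) = (m ^ 2 * (q.1 : ℤ) ^ 2 + n ^ 2 * (q.2 : ℤ) ^ 2) * nrm p := by
    have : 4 * (c1 ^ 2 + c2 ^ 2) = (2 * c1) ^ 2 + (2 * c2) ^ 2 := by ring
    rw [this, h1, h2]
    simp only [nrm]
    push_cast
    ring
  obtain ⟨k1, k2⟩ := min_form (a := q.1) (b := q.2) (m := m) (n := n) (by omega) (by omega)
    (by exact_mod_cast ha3) (by exact_mod_cast hb3) hp h0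
  rw [e]
  exact ⟨mul_le_mul_of_nonneg_right k1 hN.le, fun hh => k2 (le_of_mul_le_mul_right hh hN)⟩

theorem lin_indep_gi {x1 x2 y1 y2 : ℤ} (hD : x1 * y2 - x2 * y1 ≠ 0) :
    LinearIndependent ℝ ![gi x1 x2, gi y1 y2] := by
  rw [LinearIndependent.pair_iff]
  intro s t h
  have hD' : (x1 * y2 - x2 * y1 : ℝ) ≠ 0 := by exact_mod_cast hD
  have e1 := congrArg Complex.re h
  have e2 := congrArg Complex.im h
  simp [gi] at e1 e2
  constructor
  · have : s * (x1 * y2 - x2 * y1 : ℝ) = 0 := by linear_combination y2 * e1 - y1 * e2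
    exact (mul_eq_zero.mp this).resolve_right hD'
  · have : t * (x1 * y2 - x2 * y1 : ℝ) = 0 := by linear_combination x1 * e2 - x2 * e1
    exact (mul_eq_zero.mp this).resolve_right hD'

theorem lin_indep_gi_conv {x1 x2 y1 y2 : ℤ} (h : LinearIndependent ℝ ![gi x1 x2, gi y1 y2]) :
    x1 * y2 - x2 * y1 ≠ 0 := by
  intro hD
  have hD' : (x1 * y2 - x2 * y1 : ℝ) = 0 := by exact_mod_cast hD
  rw [LinearIndependent.pair_iff] at h
  have k1 := h y2 (-x2) (by
    simp [gi, Complex.ext_iff]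
    constructor
    · linarith
    · ring)
  have k2 := h y1 (-x1) (by
    simp [gi, Complex.ext_iff]
    constructor
    · ring
    · linarith)
  simp at k1 k2
  have k3 := h 1 0 (by simp [gi, Complex.ext_iff, k1, k2])
  simp at k3

theorem lat_half_mem {p q : ℕ × ℕ} {x1 x2 y1 y2 : ℤ}
    (h1 : (q.1 : ℤ) * p.1 = x1 + y1) (h2 : (q.1 : ℤ) * p.2 = x2 + y2)
    (h3 : -((q.2 : ℤ) * p.2) = x1 - y1) (h4 : (q.2 : ℤ) * p.1 = x2 - y2) :
    gi x1 x2 ∈ lat p q ∧ gi y1 y2 ∈ lat p q ∧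
      4 * (x1 ^ 2 + x2 ^ 2) = ((q.1 ^ 2 + q.2 ^ 2) * nrm p : ℤ) ∧
      4 * (y1 ^ 2 + y2 ^ 2) = ((q.1 ^ 2 + q.2 ^ 2) * nrm p : ℤ) := by
  have e : ((q.1 ^ 2 + q.2 ^ 2) * nrm p : ℤ) = ((q.1 : ℤ) * p.1) ^ 2 + ((q.1 : ℤ) * p.2) ^ 2 +
      (-((q.2 : ℤ) * p.2)) ^ 2 + ((q.2 : ℤ) * p.1) ^ 2 := by
    simp only [nrm]; push_cast; ring
  have o : (x1 + y1) * (x1 - y1) + (x2 + y2) * (x2 - y2) = 0 := by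
    rw [← h1, ← h2, ← h3, ← h4]; ring
  refine ⟨?_, ?_, ?_, ?_⟩
  · rw [lat, gi_mem_olat]
    exact ⟨1, 1, by simp, by rw [h1, h3]; ring, by rw [h2, h4]; ring⟩
  · rw [lat, gi_mem_olat]
    exact ⟨1, -1, by norm_num, by rw [h1, h3]; ring, by rw [h2, h4]; ring⟩
  · rw [e, h1, h2, h3, h4]
    linear_combination 2 * o
  · rw [e, h1, h2, h3, h4]
    linear_combination -2 * o

theorem lat_wr {p q : ℕ × ℕ} (h : Good p q) : IsWellRounded (lat p q) := by
  obtain ⟨x1, x2, y1, y2, h1, h2, h3, h4⟩ := good_half h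
  obtain ⟨hx, hy, nx, ny⟩ := lat_half_mem h1 h2 h3 h4
  have hD : x1 * y2 - x2 * y1 ≠ 0 := by
    have e : ((q.1 : ℤ) * p.1) * ((q.2 : ℤ) * p.1) - ((q.1 : ℤ) * p.2) * (-((q.2 : ℤ) * p.2))
        = (x1 + y1) * (x2 - y2) - (x2 + y2) * (x1 - y1) := by rw [h1, h2, h3, h4]
    have hpos : (0 : ℤ) < q.1 * q.2 * (p.1 ^ 2 + p.2 ^ 2) := by
      have := h.1.1
      have := h.2.1
      have := h.2.2.1
      positivity
    intro h0
    nlinarith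
  have key : ∀ c1 c2 : ℤ, gi c1 c2 ∈ lat p q → gi c1 c2 ≠ 0 →
      ((q.1 ^ 2 + q.2 ^ 2) * nrm p : ℤ) ≤ 4 * (c1 ^ 2 + c2 ^ 2) := by
    intro c1 c2 hc h0
    rw [lat, gi_mem_olat] at hc
    obtain ⟨m, n, hp, e1, e2⟩ := hc
    refine (lat_min h hp e1 e2 ?_).1
    by_contra! hcon
    obtain ⟨rfl, rfl⟩ := hcon
    exact h0 gi_zero
  refine ⟨gi x1 x2, gi y1 y2, hx, hy, lin_indep_gi hD, ?_, ?_⟩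
  · intro z hz h0
    obtain ⟨c1, c2, rfl⟩ := mem_square.mp (olat_le _ _ _ _ hz)
    rw [gi_norm_le]
    have := key c1 c2 hz h0
    omega
  · intro z hz h0
    obtain ⟨c1, c2, rfl⟩ := mem_square.mp (olat_le _ _ _ _ hz)
    rw [gi_norm_le]
    have := key c1 c2 hz h0
    omega

theorem lat_min_ge {p q : ℕ × ℕ} (h : Good p q) {c1 c2 : ℤ} (hc : gi c1 c2 ∈ lat p q)
    (h0 : 0 < c1 ^ 2 + c2 ^ 2) :
    ((q.1 ^ 2 + q.2 ^ 2) * nrm p : ℤ) ≤ 4 * (c1 ^ 2 + c2 ^ 2) := by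
  rw [lat, gi_mem_olat] at hc
  obtain ⟨m, n, hp, e1, e2⟩ := hc
  refine (lat_min h hp e1 e2 ?_).1
  by_contra! hcon
  obtain ⟨rfl, rfl⟩ := hcon
  simp at h0

theorem good_N_pos {p q : ℕ × ℕ} (h : Good p q) :
    (0 : ℤ) < (q.1 ^ 2 + q.2 ^ 2) * nrm p := by
  have := h.1.1
  have := h.2.1
  have := h.2.2.1
  simp only [nrm]
  positivity

theorem sq_one_cases {m : ℤ} (h : m ^ 2 = 1) : m = 1 ∨ m = -1 := by
  rw [pow_two] at h
  exact mul_self_eq_one_iff.mp h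

theorem inj_lin {A B C E A' B' C' E' x1 x2 y1 y2 m n m2 n2 : ℤ}
    (hA : 0 < A) (hB : 0 ≤ B) (hC : 0 ≤ C) (hE : 0 < E)
    (hA' : 0 < A') (hB' : 0 ≤ B') (hC' : 0 ≤ C') (hE' : 0 < E')
    (h1 : A' = x1 + y1) (h2 : B' = x2 + y2) (h3 : -C' = x1 - y1) (h4 : E' = x2 - y2)
    (e1 : 2 * x1 = m * A + n * (-C)) (e2 : 2 * x2 = m * B + n * E)
    (e3 : 2 * y1 = m2 * A + n2 * (-C)) (e4 : 2 * y2 = m2 * B + n2 * E)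
    (hm : m ^ 2 = 1) (hn : n ^ 2 = 1) (hm2 : m2 ^ 2 = 1) (hn2 : n2 ^ 2 = 1) :
    A' = A ∧ B' = B ∧ E' = E := by
  rcases sq_one_cases hm with rfl | rfl <;>
  rcases sq_one_cases hn with rfl | rfl <;>
  rcases sq_one_cases hm2 with rfl | rfl <;>
  rcases sq_one_cases hn2 with rfl | rfl <;>
  omega

theorem lat_inj {p q p' q' : ℕ × ℕ} (h : Good p q) (h' : Good p' q') (heq : lat p q = lat p' q') :
    p = p' ∧ q = q' := by
  obtain ⟨x1, x2, y1, y2, h1, h2, h3, h4⟩ := good_half h'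
  obtain ⟨hx, hy, nx, ny⟩ := lat_half_mem h1 h2 h3 h4
  obtain ⟨r1, r2, t1, t2, k1, k2, k3, k4⟩ := good_half h
  obtain ⟨hr, -, nr, -⟩ := lat_half_mem k1 k2 k3 k4
  have Np := good_N_pos h
  have Np' := good_N_pos h'
  rw [heq] at hr
  have le1 := lat_min_ge h' hr (by omega)
  rw [← heq] at hx hy
  have hx' := hx
  have hy' := hy
  rw [lat, gi_mem_olat] at hx' hy'
  obtain ⟨m, n, hp, e1, e2⟩ := hx'
  obtain ⟨m2, n2, hp2, e3, e4⟩ := hy'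
  have hne : ∀ c1 c2 : ℤ, 0 < c1 ^ 2 + c2 ^ 2 → c1 ≠ 0 ∨ c2 ≠ 0 := by
    intro c1 c2 h0
    by_contra! hcon
    obtain ⟨rfl, rfl⟩ := hcon
    simp at h0
  obtain ⟨hm, hn⟩ := (lat_min h hp e1 e2 (hne _ _ (by omega))).2 (by omega)
  obtain ⟨hm2, hn2⟩ := (lat_min h hp2 e3 e4 (hne _ _ (by omega))).2 (by omega)
  have hu := h.1.1
  have ha := h.2.1
  have hb := h.2.2.1
  have hu' := h'.1.1
  have ha' := h'.2.1
  have hb' := h'.2.2.1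
  obtain ⟨f1, f2, f3⟩ := inj_lin (by positivity) (by positivity) (by positivity) (by positivity)
    (by positivity) (by positivity) (by positivity) (by positivity) h1 h2 h3 h4 e1 e2 e3 e4
    hm hn hm2 hn2
  have g1 : q'.1 * p'.1 = q.1 * p.1 := by exact_mod_cast f1
  have g2 : q'.1 * p'.2 = q.1 * p.2 := by exact_mod_cast f2
  have g3 : q'.2 * p'.1 = q.2 * p.1 := by exact_mod_cast f3
  have ga : q'.1 = q.1 := by
    have e := congrArg₂ Nat.gcd g1 g2
    rw [Nat.gcd_mul_left, Nat.gcd_mul_left, h.1.2, h'.1.2] at e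
    simpa using e
  rw [ga] at g1 g2
  have gu : p'.1 = p.1 := Nat.eq_of_mul_eq_mul_left ha g1
  have gv : p'.2 = p.2 := Nat.eq_of_mul_eq_mul_left ha g2
  rw [gu] at g3
  have gb : q'.2 = q.2 := Nat.eq_of_mul_eq_mul_right hu g3
  exact ⟨Prod.ext gu.symm gv.symm, Prod.ext ga.symm gb.symm⟩

theorem exists_near (α : ℤ) {D : ℤ} (hD : D ≠ 0) : ∃ k : ℤ, 4 * (α - D * k) ^ 2 ≤ D ^ 2 := by
  have h1 := Int.emod_nonneg α hD
  have h2 := Int.emod_lt_abs α hD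
  have h3 := Int.mul_ediv_add_emod α D
  have key : ∀ r : ℤ, |2 * r| ≤ |D| → 4 * r ^ 2 ≤ D ^ 2 := by
    intro r hr
    have := sq_le_sq.mpr hr
    linarith
  by_cases h : 2 * (α % D) ≤ |D|
  · refine ⟨α / D, key _ ?_⟩
    have : α - D * (α / D) = α % D := by linarith
    rw [this, abs_of_nonneg (by omega)]
    exact h
  · refine ⟨α / D + D.sign, key _ ?_⟩
    have : α - D * (α / D + D.sign) = α % D - |D| := by
      have h4 := Int.mul_sign_self D
      rw [mul_add, h4, ← Int.abs_eq_natAbs]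
      linarith
    rw [this, abs_le]
    constructor <;> omega

theorem wr_basis {x1 x2 y1 y2 : ℤ} {Λ : AddSubgroup ℂ} (hΛ : Λ ≤ squareLattice)
    (hx : gi x1 x2 ∈ Λ) (hy : gi y1 y2 ∈ Λ) (hD : x1 * y2 - x2 * y1 ≠ 0)
    (hN : x1 ^ 2 + x2 ^ 2 = y1 ^ 2 + y2 ^ 2)
    (hmin : ∀ c1 c2 : ℤ, gi c1 c2 ∈ Λ → gi c1 c2 ≠ 0 → x1 ^ 2 + x2 ^ 2 ≤ c1 ^ 2 + c2 ^ 2) :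
    Λ = AddSubgroup.closure {gi x1 x2, gi y1 y2} := by
  apply le_antisymm
  · intro z hz
    obtain ⟨c1, c2, rfl⟩ := mem_square.mp (hΛ hz)
    rw [mem_pair]
    obtain ⟨k, hk⟩ := exists_near (c1 * y2 - c2 * y1) hD
    obtain ⟨l, hl⟩ := exists_near (x1 * c2 - x2 * c1) hD
    have hc' : gi (c1 - k * x1 - l * y1) (c2 - k * x2 - l * y2) ∈ Λ := by
      have e : gi (c1 - k * x1 - l * y1) (c2 - k * x2 - l * y2)
          = gi c1 c2 - k • gi x1 x2 - l • gi y1 y2 := by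
        simp only [gi_zsmul, sub_eq_add_neg, gi_neg, gi_add]
      rw [e]
      exact Λ.sub_mem (Λ.sub_mem hz (Λ.zsmul_mem hx k)) (Λ.zsmul_mem hy l)
    by_cases h0 : gi (c1 - k * x1 - l * y1) (c2 - k * x2 - l * y2) = 0
    · rw [← gi_zero, gi_inj] at h0
      exact ⟨k, l, by linarith [h0.1], by linarith [h0.2]⟩
    · exfalso
      have hm := hmin _ _ hc' h0
      set α := c1 * y2 - c2 * y1 - (x1 * y2 - x2 * y1) * k with hα
      set β := x1 * c2 - x2 * c1 - (x1 * y2 - x2 * y1) * l with hβ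
      set D := x1 * y2 - x2 * y1 with hDd
      set N := x1 ^ 2 + x2 ^ 2 with hNd
      set S := x1 * y1 + x2 * y2 with hS
      have hDS : D ^ 2 + S ^ 2 = N ^ 2 := by
        have : N ^ 2 = N * (y1 ^ 2 + y2 ^ 2) := by rw [← hN]; ring
        rw [this, hDd, hS, hNd]; ring
      have hexp : D ^ 2 * ((c1 - k * x1 - l * y1) ^ 2 + (c2 - k * x2 - l * y2) ^ 2)
          = (α ^ 2 + β ^ 2) * N + 2 * (α * β) * S := by
        have e1 : D * (c1 - k * x1 - l * y1) = α * x1 + β * y1 := by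
          rw [hα, hβ, hDd]; ring
        have e2 : D * (c2 - k * x2 - l * y2) = α * x2 + β * y2 := by
          rw [hα, hβ, hDd]; ring
        have : D ^ 2 * ((c1 - k * x1 - l * y1) ^ 2 + (c2 - k * x2 - l * y2) ^ 2)
          = (D * (c1 - k * x1 - l * y1)) ^ 2 + (D * (c2 - k * x2 - l * y2)) ^ 2 := by ring
        rw [this, e1, e2, hS]
        have : (α ^ 2 + β ^ 2) * N = α ^ 2 * N + β ^ 2 * (y1 ^ 2 + y2 ^ 2) := by rw [← hN]; ring
        rw [this, hNd]
        ring
      have hD2 : 0 < D ^ 2 := by positivity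
      have hN0 : 0 ≤ N := by positivity
      have hSN : |S| < N := by
        rw [← abs_of_nonneg hN0]
        exact sq_lt_sq.mp (by linarith)
      have hab : |α * β| * 4 ≤ D ^ 2 := by
        rw [abs_mul]
        nlinarith [sq_nonneg (|α| - |β|), sq_abs α, sq_abs β]
      have hS2 : (α * β) * S ≤ |α * β| * |S| := by
        rw [← abs_mul]; exact le_abs_self _
      have t1 : D ^ 2 * N ≤ (α ^ 2 + β ^ 2) * N + 2 * (α * β) * S := by
        rw [← hexp]
        exact mul_le_mul_of_nonneg_left hm hD2.le
      have t2 : (|α * β| * 4) * |S| ≤ D ^ 2 * |S| :=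
        mul_le_mul_of_nonneg_right hab (abs_nonneg _)
      have t3 : D ^ 2 * |S| < D ^ 2 * N := mul_lt_mul_of_pos_left hSN hD2
      have t4 : (4 * α ^ 2 + 4 * β ^ 2) * N ≤ (D ^ 2 + D ^ 2) * N :=
        mul_le_mul_of_nonneg_right (add_le_add hk hl) hN0
      clear_value α β D N S
      clear hexp hm hmin hc' h0 hDS
      linarith
  · rw [AddSubgroup.closure_le]
    rintro z (rfl | rfl)
    · exact hx
    · exact hy

theorem sq_ne_three {a b : ℕ} (ha : 0 < a) : b ^ 2 ≠ 3 * a ^ 2 := by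
  intro h
  have hirr := Nat.Prime.irrational_sqrt Nat.prime_three
  apply hirr
  refine ⟨(b : ℚ) / a, ?_⟩
  have h' : ((b : ℝ)) ^ 2 = 3 * (a : ℝ) ^ 2 := by exact_mod_cast h
  have ha' : (a : ℝ) ≠ 0 := by positivity
  have e : ((3 : ℕ) : ℝ) = ((b : ℝ) / a) ^ 2 := by
    rw [div_pow, h']
    field_simp
    norm_num
  rw [e, Real.sqrt_sq (by positivity)]
  push_cast
  rfl

theorem good_finish {g h : ℤ} {u v : ℕ} (hu : 0 < u) (hc : Nat.Coprime u v) (hg : g ≠ 0)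
    (hh : h ≠ 0) (h1 : g ^ 2 ≤ 3 * h ^ 2) (h2 : h ^ 2 ≤ 3 * g ^ 2)
    (p1 : 2 ∣ g * u - h * v) (p2 : 2 ∣ g * v + h * u) :
    ∃ p q, Good p q ∧ lat p q = olat (g * u) (g * v) (-(h * v)) (h * u) := by
  have ha : 0 < g.natAbs := Int.natAbs_pos.mpr hg
  have hb : 0 < h.natAbs := Int.natAbs_pos.mpr hh
  have e1 : g.natAbs ^ 2 ≤ 3 * h.natAbs ^ 2 := by zify; simpa using h1
  have e2 : h.natAbs ^ 2 ≤ 3 * g.natAbs ^ 2 := by zify; simpa using h2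
  refine ⟨(u, v), (g.natAbs, h.natAbs), ⟨⟨hu, hc⟩, ha, hb,
    lt_of_le_of_ne e1 (sq_ne_three hb), lt_of_le_of_ne e2 (sq_ne_three ha), ?_⟩, ?_⟩
  · simp only [nrm]
    have hg2 : (g.natAbs % 2 : ℕ) = (g % 2).natAbs := by omega
    have hnn : ¬ (u % 2 = 0 ∧ v % 2 = 0) := by
      rintro ⟨a1, a2⟩
      have := Nat.dvd_gcd (Nat.dvd_of_mod_eq_zero a1) (Nat.dvd_of_mod_eq_zero a2)
      rw [hc] at this
      omega
    rw [← even_iff_two_dvd] at p1 p2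
    simp only [Int.even_sub, Int.even_add, Int.even_mul, Int.even_coe_nat] at p1 p2
    simp only [Nat.even_add, Nat.even_pow' two_ne_zero, Int.natAbs_even]
    have eg : g.natAbs % 2 = h.natAbs % 2 ↔ (Even g ↔ Even h) := by
      rw [Int.even_iff, Int.even_iff]; omega
    rw [eg]
    rw [← Nat.even_iff, ← Nat.even_iff] at hnn
    clear eg e1 e2 h1 h2 hc hg2
    by_cases c1 : Even g <;> by_cases c2 : Even h <;> by_cases c3 : Even u <;>
      by_cases c4 : Even v <;> simp_all [-Int.not_even_iff_odd, -Nat.not_even_iff_odd]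
  · simp only [lat]
    rcases Int.natAbs_eq g with k1 | k1 <;> rcases Int.natAbs_eq h with k2 | k2
    · rw [← k1, ← k2]
    · have : ((h.natAbs : ℕ) : ℤ) = -h := by omega
      rw [← k1, this, ← olat_neg_right (g * u)]
      congr 1 <;> ring
    · have : ((g.natAbs : ℕ) : ℤ) = -g := by omega
      rw [← k2, this, ← olat_neg_left (g * u)]
      congr 1 <;> ring
    · have e : ((h.natAbs : ℕ) : ℤ) = -h := by omega
      have : ((g.natAbs : ℕ) : ℤ) = -g := by omega
      rw [e, this, ← olat_neg_left (g * u), ← olat_neg_right]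
      congr 1 <;> ring

theorem orth_shape {z1 z2 w1 w2 : ℤ} (hz : z1 ≠ 0 ∨ z2 ≠ 0) (ho : z1 * w1 + z2 * w2 = 0) :
    ∃ g h p1 p2 : ℤ, IsCoprime p1 p2 ∧ z1 = g * p1 ∧ z2 = g * p2 ∧ w1 = -(h * p2) ∧
      w2 = h * p1 := by
  have hg : 0 < Int.gcd z1 z2 := by
    rw [Int.gcd_pos_iff]; exact hz
  obtain ⟨p1, p2, hco, e1, e2⟩ := Int.exists_gcd_one hg
  set g : ℤ := (Int.gcd z1 z2 : ℤ) with hgd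
  have hg0 : g ≠ 0 := by omega
  have hco' : IsCoprime p1 p2 := Int.isCoprime_iff_gcd_eq_one.mpr hco
  have hpw : p1 * w1 + p2 * w2 = 0 := by
    have : g * (p1 * w1 + p2 * w2) = 0 := by
      rw [← ho]
      calc g * (p1 * w1 + p2 * w2) = (p1 * g) * w1 + (p2 * g) * w2 := by ring
        _ = _ := by rw [← e1, ← e2]
    exact (mul_eq_zero.mp this).resolve_left hg0
  have hcc := hco'
  obtain ⟨α, β, hab⟩ := hco'
  refine ⟨g, α * w2 - β * w1, p1, p2, hcc, by linarith, by linarith, ?_, ?_⟩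
  · linear_combination (-w1) * hab + α * hpw
  · linear_combination (-w2) * hab + β * hpw

theorem wr_surj {Λ : AddSubgroup ℂ} (hΛ : Λ ≤ squareLattice) (hw : IsWellRounded Λ) :
    ∃ p q, Good p q ∧ lat p q = Λ := by
  obtain ⟨x, y, hx, hy, hli, hmx, hmy⟩ := hw
  obtain ⟨x1, x2, rfl⟩ := mem_square.mp (hΛ hx)
  obtain ⟨y1, y2, rfl⟩ := mem_square.mp (hΛ hy)
  have hD := lin_indep_gi_conv hli
  have hx0 : gi x1 x2 ≠ 0 := hli.ne_zero 0
  have hy0 : gi y1 y2 ≠ 0 := hli.ne_zero 1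
  have hN : x1 ^ 2 + x2 ^ 2 = y1 ^ 2 + y2 ^ 2 :=
    le_antisymm (gi_norm_le.mp (hmx _ hy hy0)) (gi_norm_le.mp (hmy _ hx hx0))
  have hmin : ∀ c1 c2 : ℤ, gi c1 c2 ∈ Λ → gi c1 c2 ≠ 0 → x1 ^ 2 + x2 ^ 2 ≤ c1 ^ 2 + c2 ^ 2 :=
    fun c1 c2 hc h0 => gi_norm_le.mp (hmx _ hc h0)
  have hz : x1 + y1 ≠ 0 ∨ x2 + y2 ≠ 0 := by
    by_contra! hcon
    apply hD
    linear_combination x1 * hcon.2 - x2 * hcon.1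
  have hwn : x1 - y1 ≠ 0 ∨ x2 - y2 ≠ 0 := by
    by_contra! hcon
    apply hD
    linear_combination -x1 * hcon.2 + x2 * hcon.1
  have hne : ∀ c1 c2 : ℤ, c1 ≠ 0 ∨ c2 ≠ 0 → gi c1 c2 ≠ 0 := by
    intro c1 c2 h h0
    rw [← gi_zero, gi_inj] at h0
    tauto
  have hzN : x1 ^ 2 + x2 ^ 2 ≤ (x1 + y1) ^ 2 + (x2 + y2) ^ 2 := by
    apply hmin _ _ _ (hne _ _ hz)
    rw [← gi_add]
    exact Λ.add_mem hx hy
  have hwN : x1 ^ 2 + x2 ^ 2 ≤ (x1 - y1) ^ 2 + (x2 - y2) ^ 2 := by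
    apply hmin _ _ _ (hne _ _ hwn)
    rw [sub_eq_add_neg, sub_eq_add_neg, ← gi_add, ← gi_neg]
    exact Λ.add_mem hx (Λ.neg_mem hy)
  rw [wr_basis hΛ hx hy hD hN hmin, ← olat_eq_pair]
  obtain ⟨g, h, p1, p2, hco, e1, e2, e3, e4⟩ := orth_shape (w1 := x1 - y1) (w2 := x2 - y2) hz
    (by linear_combination hN)
  have par1 : 2 * x1 = g * p1 - h * p2 := by linarith
  have par2 : 2 * x2 = g * p2 + h * p1 := by linarith
  have hg : g ≠ 0 := by
    rintro rfl
    simp only [zero_mul] at e1 e2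
    tauto
  have hh : h ≠ 0 := by
    rintro rfl
    simp only [zero_mul, neg_zero] at e3 e4
    tauto
  have hP : 0 < p1 ^ 2 + p2 ^ 2 := by
    rcases hz with k | k
    · have : p1 ≠ 0 := by rintro rfl; simp at e1; exact k e1
      positivity
    · have : p2 ≠ 0 := by rintro rfl; simp at e2; exact k e2
      positivity
  have q1 : (x1 + y1) ^ 2 + (x2 + y2) ^ 2 = g ^ 2 * (p1 ^ 2 + p2 ^ 2) := by
    rw [e1, e2]; ring
  have q2 : (x1 - y1) ^ 2 + (x2 - y2) ^ 2 = h ^ 2 * (p1 ^ 2 + p2 ^ 2) := by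
    rw [e3, e4]; ring
  have i1 : h ^ 2 ≤ 3 * g ^ 2 := by
    apply le_of_mul_le_mul_right _ hP
    rw [mul_assoc, ← q1, ← q2]
    linarith
  have i2 : g ^ 2 ≤ 3 * h ^ 2 := by
    apply le_of_mul_le_mul_right _ hP
    rw [mul_assoc, ← q1, ← q2]
    linarith
  rw [e1, e2, e3, e4]
  obtain ⟨u, v, hu, hq⟩ := exists_quadrant p1 p2 (by
    by_contra! hcon
    rw [hcon.1, hcon.2] at hP
    simp at hP)
  simp only [Prod.mk.injEq] at hq
  have hcop : Nat.Coprime u v := by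
    rw [← Nat.isCoprime_iff_coprime]
    rcases hq with ⟨a, b⟩ | ⟨a, b⟩ | ⟨a, b⟩ | ⟨a, b⟩ <;> rw [a, b]
    · exact hco
    · exact hco.symm.neg_left
    · exact hco.neg_neg
    · exact hco.symm.neg_right
  rcases hq with ⟨a, b⟩ | ⟨a, b⟩ | ⟨a, b⟩ | ⟨a, b⟩
  · rw [← a, ← b]
    exact good_finish hu hcop hg hh i2 i1 ⟨x1, by rw [a, b]; linarith⟩ ⟨x2, by rw [a, b]; linarith⟩
  · -- p = (v, -u)
    obtain ⟨p, q, G, L⟩ := good_finish (g := h) (h := -g) hu hcop hh (neg_ne_zero.mpr hg)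
      (by simpa using i1) (by simpa using i2)
      ⟨x1, by rw [a, b]; linarith⟩ ⟨x2, by rw [a, b]; linarith⟩
    refine ⟨p, q, G, ?_⟩
    rw [L, ← olat_swap, a, b]
    congr 1 <;> ring
  · obtain ⟨p, q, G, L⟩ := good_finish (g := -g) (h := -h) hu hcop (neg_ne_zero.mpr hg)
      (neg_ne_zero.mpr hh) (by simpa using i2) (by simpa using i1)
      ⟨x1, by rw [a, b]; linarith⟩ ⟨x2, by rw [a, b]; linarith⟩
    refine ⟨p, q, G, ?_⟩
    rw [L, a, b]
    congr 1 <;> ring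
  · obtain ⟨p, q, G, L⟩ := good_finish (g := -h) (h := g) hu hcop (neg_ne_zero.mpr hh)
      hg (by simpa using i1) (by simpa using i2)
      ⟨x1, by rw [a, b]; linarith⟩ ⟨x2, by rw [a, b]; linarith⟩
    refine ⟨p, q, G, ?_⟩
    rw [L, ← olat_swap, a, b]
    congr 1 <;> ring

/-! ## Part 6: assembly -/

abbrev POdd := {q : ℕ × ℕ // Prim q ∧ Odd (nrm q)}
abbrev PEven := {q : ℕ × ℕ // Prim q ∧ Even (nrm q)}
abbrev RegT (k : ℕ) := {q : ℕ × ℕ // Reg k q}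
abbrev Param := (POdd × RegT 1) ⊕ (PEven × RegT 2)
abbrev WRLat := {Λ : AddSubgroup ℂ // Λ ≤ squareLattice ∧ IsWellRounded Λ}

theorem good_odd (x : POdd × RegT 1) : Good x.1.1 (2 * x.2.1.1, 2 * x.2.1.2) := by
  obtain ⟨⟨p, hp, _⟩, ⟨q, h1, h2, h3, h4, _⟩⟩ := x
  refine ⟨hp, by simp only; omega, by simp only; omega, ?_, ?_, Or.inl ⟨by simp, by simp⟩⟩
  · simp only; nlinarith
  · simp only; nlinarith

theorem good_even (x : PEven × RegT 2) : Good x.1.1 x.2.1 := by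
  obtain ⟨⟨p, hp, he⟩, ⟨q, h1, h2, h3, h4, h5⟩⟩ := x
  exact ⟨hp, h1, h2, h3, h4, Or.inr ⟨he, h5⟩⟩

def paramLat : Param → WRLat
  | Sum.inl x => ⟨lat x.1.1 (2 * x.2.1.1, 2 * x.2.1.2), olat_le _ _ _ _, lat_wr (good_odd x)⟩
  | Sum.inr x => ⟨lat x.1.1 x.2.1, olat_le _ _ _ _, lat_wr (good_even x)⟩

theorem paramLat_bij : Function.Bijective paramLat := by
  constructor
  · rintro (⟨⟨p, hp⟩, ⟨q, hq⟩⟩ | ⟨⟨p, hp⟩, ⟨q, hq⟩⟩) (⟨⟨p', hp'⟩, ⟨q', hq'⟩⟩ | ⟨⟨p', hp'⟩, ⟨q', hq'⟩⟩) h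
    · have e := lat_inj (good_odd ⟨⟨p, hp⟩, ⟨q, hq⟩⟩) (good_odd ⟨⟨p', hp'⟩, ⟨q', hq'⟩⟩)
        (congrArg Subtype.val h)
      obtain ⟨e1, e2⟩ := e
      simp only [Prod.mk.injEq] at e1 e2
      have : q = q' := Prod.ext (by omega) (by omega)
      subst e1 this
      rfl
    · have e := lat_inj (good_odd ⟨⟨p, hp⟩, ⟨q, hq⟩⟩) (good_even ⟨⟨p', hp'⟩, ⟨q', hq'⟩⟩)
        (congrArg Subtype.val h)
      have e1 : p = p' := e.1
      subst e1
      exact absurd hp'.2 (Nat.not_even_iff_odd.mpr hp.2)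
    · have e := lat_inj (good_even ⟨⟨p, hp⟩, ⟨q, hq⟩⟩) (good_odd ⟨⟨p', hp'⟩, ⟨q', hq'⟩⟩)
        (congrArg Subtype.val h)
      have e1 : p = p' := e.1
      subst e1
      exact absurd hp.2 (Nat.not_even_iff_odd.mpr hp'.2)
    · have e := lat_inj (good_even ⟨⟨p, hp⟩, ⟨q, hq⟩⟩) (good_even ⟨⟨p', hp'⟩, ⟨q', hq'⟩⟩)
        (congrArg Subtype.val h)
      obtain ⟨e1, e2⟩ := e
      simp only at e1 e2
      subst e1 e2
      rfl
  · rintro ⟨Λ, hΛ, hw⟩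
    obtain ⟨p, ⟨a, b⟩, ⟨g1, g2, g3, g4, g5, g6⟩, rfl⟩ := wr_surj hΛ hw
    simp only at g2 g3 g4 g5 g6
    by_cases hp : Even (nrm p)
    · have hab : a % 2 = b % 2 := by
        rcases g6 with ⟨h1, h2⟩ | ⟨_, h⟩
        · rw [Nat.even_iff] at h1 h2; omega
        · exact h
      exact ⟨Sum.inr ⟨⟨p, g1, hp⟩, ⟨(a, b), g2, g3, g4, g5, hab⟩⟩, rfl⟩
    · have hab : Even a ∧ Even b := by tauto
      obtain ⟨⟨k, rfl⟩, ⟨l, rfl⟩⟩ := hab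
      refine ⟨Sum.inl ⟨⟨p, g1, Nat.not_even_iff_odd.mp hp⟩, ⟨(k, l), by simp only; omega,
        by simp only; omega, by simp only; nlinarith, by simp only; nlinarith, Nat.modEq_one⟩⟩, ?_⟩
      apply Subtype.ext
      simp only [paramLat, two_mul]

def wrIdx (Λ : WRLat) : ℕ := Λ.1.relIndex squareLattice

theorem wrIdx_inl (x : POdd × RegT 1) :
    wrIdx (paramLat (Sum.inl x)) = 2 * (nrm x.1.1 * (x.2.1.1 * x.2.1.2)) := by
  have := lat_index (good_odd x)
  simp only [wrIdx, paramLat]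
  simp only at this
  linarith

theorem wrIdx_inr (x : PEven × RegT 2) :
    2 * wrIdx (paramLat (Sum.inr x)) = nrm x.1.1 * (x.2.1.1 * x.2.1.2) := by
  have := lat_index (good_even x)
  simp only [wrIdx, paramLat]
  linarith

theorem wr_hasSum {s P : ℝ} (hs : 1 < s) (hP : HasSum (fun n : ℕ => gA n * (n : ℝ) ^ (-s)) P) :
    HasSum (fun n : ℕ => (aSquare n : ℝ) * (n : ℝ) ^ (-s))
      (P * (2 ^ (-s) * (∑' q, regTerm s (Reg 1) q) + ∑' q, regTerm s (Reg 2) q)) := by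
  have hA := reg_subtype_sum (reg_sum hs (k := 1) (by norm_num)).1
  have hE := reg_subtype_sum (reg_sum hs (k := 2) (by norm_num)).1
  have h1 := (mul_sum_nonneg (podd_sum hs hP) hA (fun _ => by positivity)
    (fun _ => by positivity)).mul_left ((2 : ℝ) ^ (-s))
  have h2 := (mul_sum_nonneg (peven_sum hs hP) hE (fun _ => by positivity)
    (fun _ => by positivity)).mul_left ((2 : ℝ) ^ s)
  have h3 : HasSum (fun x : Param => ((wrIdx (paramLat x) : ℕ) : ℝ) ^ (-s))
      (P * (2 ^ (-s) * (∑' q, regTerm s (Reg 1) q) + ∑' q, regTerm s (Reg 2) q)) := by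
    have ht : (2 : ℝ) ^ s * 2 ^ (-s) = 1 := by
      rw [← Real.rpow_add (by norm_num)]; simp
    have e : P * (2 ^ (-s) * (∑' q, regTerm s (Reg 1) q) + ∑' q, regTerm s (Reg 2) q) =
        (2 : ℝ) ^ (-s) * (P * ∑' q, regTerm s (Reg 1) q) +
        (2 : ℝ) ^ s * (2 ^ (-s) * P * ∑' q, regTerm s (Reg 2) q) := by
      linear_combination (-P * ∑' q, regTerm s (Reg 2) q) * ht
    rw [e]
    refine HasSum.sum (h1.congr_fun fun x => ?_) (h2.congr_fun fun x => ?_)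
    · simp only [Function.comp, wrIdx_inl]
      push_cast
      rw [Real.mul_rpow (by positivity) (by positivity),
        Real.mul_rpow (by positivity) (by positivity)]
    · simp only [Function.comp]
      have e2 : ((2 * wrIdx (paramLat (Sum.inr x)) : ℕ) : ℝ) ^ (-s)
          = ((nrm x.1.1 * (x.2.1.1 * x.2.1.2) : ℕ) : ℝ) ^ (-s) := by rw [wrIdx_inr]
      push_cast at e2 ⊢
      rw [Real.mul_rpow (by positivity) (by positivity),
        Real.mul_rpow (y := (x.2.1.1 * x.2.1.2 : ℝ)) (by positivity) (by positivity)] at e2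
      rw [← e2, ← mul_assoc, ht, one_mul]
  have h4 : HasSum (fun Λ : WRLat => ((wrIdx Λ : ℕ) : ℝ) ^ (-s))
      (P * (2 ^ (-s) * (∑' q, regTerm s (Reg 1) q) + ∑' q, regTerm s (Reg 2) q)) :=
    (Equiv.ofBijective paramLat paramLat_bij).hasSum_iff.mp h3
  refine (fiber_to_series _ s _ h4).congr_fun (fun n => ?_)
  congr 2
  apply Nat.card_congr
  exact
    { toFun := fun Λ => ⟨⟨Λ.1, Λ.2.1, Λ.2.2.1⟩, Λ.2.2.2⟩
      invFun := fun Λ => ⟨Λ.1.1, Λ.1.2.1, Λ.1.2.2, Λ.2⟩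
      left_inv := fun _ => rfl
      right_inv := fun _ => rfl }

theorem zetaReal_pos {s : ℝ} (hs : 1 < s) : 0 < zetaReal s :=
  (zeta_summable hs).tsum_pos (fun n => by positivity) 1 (by simp)

theorem DSquare_eq {s P : ℝ} (hs : 1 < s)
    (h : P * (1 + 2 ^ (-s)) * zetaReal (2 * s) = zetaReal s * LFour s) :
    DSquare s = P * ((1 + 2 * 2 ^ (-s)) * (Jint s * zetaReal (2 * s - 1))) := by
  have hz : 0 < zetaReal (2 * s) := zetaReal_pos (by linarith)
  have ht : (0 : ℝ) < 2 ^ s := by positivity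
  rw [Real.rpow_neg (by norm_num)] at h ⊢
  have e : LFour s / zetaReal (2 * s) * zetaReal s = P * (1 + (2 ^ s)⁻¹) := by
    field_simp
    field_simp at h
    linarith
  have e3 : DSquare s = ((2 + 2 ^ s) / (1 + 2 ^ s)) * Jint s *
      (LFour s / zetaReal (2 * s) * zetaReal s) * zetaReal (2 * s - 1) := by
    simp only [DSquare, Jint]; ring
  rw [e3, e]
  field_simp
  ring

theorem wellRounded_square_dirichlet_series_bounds :
    ∀ s : ℝ, 1 < s →
      Summable (fun n : ℕ => (aSquare n : ℝ) * (n : ℝ) ^ (-s)) ∧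
      DSquare s - zetaReal s * LFour s < ∑' n : ℕ, (aSquare n : ℝ) * (n : ℝ) ^ (-s) ∧
      ∑' n : ℕ, (aSquare n : ℝ) * (n : ℝ) ^ (-s) < DSquare s + zetaReal s * LFour s := by

  intro s hs
  obtain ⟨P, hP, hsum, hPe⟩ := g_series hs
  have H := wr_hasSum hs hsum
  obtain ⟨-, a1, a2⟩ := reg_sum hs (k := 1) (by norm_num)
  obtain ⟨-, b1, b2⟩ := reg_sum hs (k := 2) (by norm_num)
  have ht : (0 : ℝ) < 2 ^ (-s) := by positivity
  refine ⟨H.summable, ?_, ?_⟩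
  · rw [H.tsum_eq, DSquare_eq hs hPe, ← hPe, mul_assoc P, ← mul_sub]
    apply mul_lt_mul_of_pos_left _ hP
    push_cast at a2 b2
    have := mul_lt_mul_of_pos_left a2 ht
    linarith
  · rw [H.tsum_eq, DSquare_eq hs hPe, ← hPe, mul_assoc P, ← mul_add]
    apply mul_lt_mul_of_pos_left _ hP
    push_cast at a1 b1
    have := mul_lt_mul_of_pos_left a1 ht
    linarith
end
end

section
/- The set of positive integers n such that the square lattice ℤ[i] possesses a well-rounded sublattice of index n is exactly { 2·p·q·|z|² : p, q positive integers with q ≤ p ≤ √3·q, z ∈ ℤ[i] nonzero } ∪ { p·q·|z|² : p, q positive integers with q ≤ p ≤ √3·q, z ∈ ℤ[i] nonzero, and p·q·|z|² is odd }, where |z|² = a² + b² for z = a + bi. -/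
noncomputable section

open Module in
theorem index_eq_abs_det_aux (L₁ L₂ : AddSubgroup ℂ) (H : L₁ ≤ L₂)
    (b₁ b₂ : Basis (Fin 2) ℝ ℂ) (h₁ : L₁ = .closure (Set.range b₁))
    (h₂ : L₂ = .closure (Set.range b₂)) :
    ((L₁.relIndex L₂ : ℕ) : ℝ) = |b₂.det b₁| := by
  rw [AddSubgroup.relIndex_eq_natAbs_det L₁ L₂ H (b₁.addSubgroupOfClosure L₁ h₁)
    (b₂.addSubgroupOfClosure L₂ h₂), Nat.cast_natAbs, Int.cast_abs]
  change |algebraMap ℤ ℝ _| = _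
  rw [Basis.det_apply, Basis.det_apply, RingHom.map_det]
  congr
  ext i j
  simp only [RingHom.mapMatrix_apply, Matrix.map_apply, Basis.toMatrix_apply]
  have := b₂.addSubgroupOfClosure_repr_apply L₂ h₂
    ⟨b₁.addSubgroupOfClosure L₁ h₁ j, (H (SetLike.coe_mem _))⟩ i
  refine Eq.trans this ?_
  simp

theorem linInd_iff_aux (x y : ℂ) :
    LinearIndependent ℝ ![x, y] ↔ x.re * y.im - x.im * y.re ≠ 0 := by
  rw [LinearIndependent.pair_iff]
  constructor
  · intro h h0
    have h1 := h y.im (-x.im) (by apply Complex.ext <;> simp <;> linarith)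
    have h2 := h y.re (-x.re) (by apply Complex.ext <;> simp <;> linarith)
    have h3 := h 1 0 (by apply Complex.ext <;> simp <;> linarith [h1.2, h2.2])
    exact one_ne_zero h3.1
  · intro h s t hst
    have h1 := congrArg Complex.re hst
    have h2 := congrArg Complex.im hst
    simp at h1 h2
    constructor
    · apply (mul_eq_zero.mp (_ : s * (x.re * y.im - x.im * y.re) = 0)).resolve_right h
      linear_combination y.im * h1 - y.re * h2
    · apply (mul_eq_zero.mp (_ : t * (x.re * y.im - x.im * y.re) = 0)).resolve_right h
      linear_combination - x.im * h1 + x.re * h2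

theorem mem_square_aux (z : ℂ) : z ∈ squareLattice ↔ ∃ a b : ℤ, z = ⟨a, b⟩ := by
  unfold squareLattice
  rw [AddSubgroup.mem_closure_pair]
  constructor
  · rintro ⟨m, n, rfl⟩
    exact ⟨m, n, by apply Complex.ext <;> simp⟩
  · rintro ⟨m, n, rfl⟩
    exact ⟨m, n, by apply Complex.ext <;> simp⟩

open Module in
theorem index_aux (x1 x2 y1 y2 : ℤ) (hD : x1 * y2 - x2 * y1 ≠ 0) :
    AddSubgroup.closure {(⟨x1, x2⟩ : ℂ), ⟨y1, y2⟩} ≤ squareLattice ∧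
    ((AddSubgroup.closure {(⟨x1, x2⟩ : ℂ), ⟨y1, y2⟩}).addSubgroupOf squareLattice).index
      = (x1 * y2 - x2 * y1).natAbs := by
  have hle : AddSubgroup.closure {(⟨x1, x2⟩ : ℂ), ⟨y1, y2⟩} ≤ squareLattice := by
    rw [AddSubgroup.closure_le]
    rintro z (rfl | rfl)
    · exact (mem_square_aux _).2 ⟨_, _, rfl⟩
    · exact (mem_square_aux _).2 ⟨_, _, rfl⟩
  refine ⟨hle, ?_⟩
  have hli : LinearIndependent ℝ ![(⟨x1, x2⟩ : ℂ), ⟨y1, y2⟩] := by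
    rw [linInd_iff_aux]
    dsimp only
    exact_mod_cast hD
  let b₁ : Basis (Fin 2) ℝ ℂ := basisOfLinearIndependentOfCardEqFinrank hli (by simp)
  have hb₁ : (b₁ : Fin 2 → ℂ) = ![(⟨x1, x2⟩ : ℂ), ⟨y1, y2⟩] := by simp [b₁]
  have key := index_eq_abs_det_aux _ squareLattice hle b₁ Complex.basisOneI
    (by rw [hb₁]; simp [Set.pair_comm]) (by rw [Complex.coe_basisOneI]; simp [squareLattice, Set.pair_comm])
  have hd : Complex.basisOneI.det b₁ = ((x1 * y2 - x2 * y1 : ℤ) : ℝ) := by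
    rw [Basis.det_apply, Matrix.det_fin_two]
    simp [Basis.toMatrix_apply, hb₁]
    ring
  rw [hd, ← Int.cast_abs, Int.abs_eq_natAbs] at key
  exact_mod_cast key

theorem basis_aux (Λ : AddSubgroup ℂ) (x y : ℂ) (hx : x ∈ Λ) (hy : y ∈ Λ)
    (hD : x.re * y.im - x.im * y.re ≠ 0)
    (hmx : ∀ z ∈ Λ, z ≠ 0 → Complex.normSq x ≤ Complex.normSq z)
    (hxy : Complex.normSq x = Complex.normSq y)
    (h1 : |2 * (x.re * y.re + x.im * y.im)| ≤ Complex.normSq x) :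
    Λ = AddSubgroup.closure {x, y} := by
  apply le_antisymm
  · intro z hz
    set D := x.re * y.im - x.im * y.re with hDdef
    set α := (z.re * y.im - z.im * y.re) / D with hα
    set β := (x.re * z.im - x.im * z.re) / D with hβ
    have hα' : α * D = z.re * y.im - z.im * y.re := by rw [hα]; field_simp
    have hβ' : β * D = x.re * z.im - x.im * z.re := by rw [hβ]; field_simp
    have hre : z.re = α * x.re + β * y.re := by
      apply mul_right_cancel₀ hD
      linear_combination (-x.re) * hα' - y.re * hβ' + z.re * hDdef
    have him : z.im = α * x.im + β * y.im := by
      apply mul_right_cancel₀ hD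
      linear_combination (-x.im) * hα' - y.im * hβ' + z.im * hDdef
    set w := z - (round α • x + round β • y) with hw
    have hwm : w ∈ Λ := Λ.sub_mem hz (Λ.add_mem (Λ.zsmul_mem hx _) (Λ.zsmul_mem hy _))
    have hw0 : w = 0 := by
      by_contra hne
      have hm := hmx w hwm hne
      have ha := abs_sub_round α
      have hb := abs_sub_round β
      set s := α - round α with hs
      set t := β - round β with ht
      have hwr : w.re = s * x.re + t * y.re := by
        rw [hw, hs, ht]; simp [hre]; ring
      have hwi : w.im = s * x.im + t * y.im := by
        rw [hw, hs, ht]; simp [him]; ring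
      have hN : Complex.normSq w = (s ^ 2 + t ^ 2) * Complex.normSq x
          + s * t * (2 * (x.re * y.re + x.im * y.im)) := by
        have : Complex.normSq w = s ^ 2 * Complex.normSq x + t ^ 2 * Complex.normSq y
          + s * t * (2 * (x.re * y.re + x.im * y.im)) := by
          simp only [Complex.normSq_apply, hwr, hwi]; ring
        rw [this, ← hxy]; ring
      have hpos : 0 < Complex.normSq x := by
        rw [Complex.normSq_pos]
        rintro rfl
        simp [hDdef] at hD
      have hs2 : s ^ 2 ≤ 1 / 4 := by
        rw [← sq_abs]; nlinarith [abs_nonneg s]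
      have ht2 : t ^ 2 ≤ 1 / 4 := by
        rw [← sq_abs]; nlinarith [abs_nonneg t]
      have hst : |s * t| ≤ 1 / 4 := by
        rw [abs_mul]; nlinarith [abs_nonneg s, abs_nonneg t]
      have hc : s * t * (2 * (x.re * y.re + x.im * y.im)) ≤ 1 / 4 * Complex.normSq x := by
        refine (le_abs_self _).trans ?_
        rw [abs_mul (s * t)]
        exact mul_le_mul hst h1 (abs_nonneg _) (by norm_num)
      nlinarith
    rw [AddSubgroup.mem_closure_pair]
    exact ⟨round α, round β, (sub_eq_zero.mp hw0).symm⟩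
  · rw [AddSubgroup.closure_le]
    rintro z (rfl | rfl)
    · exact hx
    · exact hy

theorem pq_aux (p q : ℕ) (hp : 0 < p) (hq : 0 < q) (h1 : p ^ 2 ≤ 3 * q ^ 2)
    (h2 : q ^ 2 ≤ 3 * p ^ 2) : ∃ p' q' : ℕ, 0 < p' ∧ 0 < q' ∧ q' ≤ p' ∧
      (p' : ℝ) ≤ Real.sqrt 3 * q' ∧ p' * q' = p * q := by
  have key : ∀ a b : ℕ, a ^ 2 ≤ 3 * b ^ 2 → (a : ℝ) ≤ Real.sqrt 3 * b := by
    intro a b h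
    apply abs_le_of_sq_le_sq' _ (by positivity) |>.2
    rw [mul_pow, Real.sq_sqrt (by norm_num)]
    exact_mod_cast h
  rcases le_total q p with h | h
  · exact ⟨p, q, hp, hq, h, key _ _ h1, rfl⟩
  · exact ⟨q, p, hq, hp, h, key _ _ h2, mul_comm _ _⟩

theorem pq_conv_aux (p q : ℕ) (h : (p : ℝ) ≤ Real.sqrt 3 * q) : (p : ℤ) ^ 2 ≤ 3 * (q : ℤ) ^ 2 := by
  have : (p : ℝ) ^ 2 ≤ 3 * (q : ℝ) ^ 2 := by
    have := pow_le_pow_left₀ (by positivity) h 2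
    rwa [mul_pow, Real.sq_sqrt (by norm_num)] at this
  exact_mod_cast this

theorem prop_aux (p q a b : Prop) (e1 : p ∨ a ↔ q ∨ b) (e2 : p ∨ b ↔ q ∨ a)
    (hab : ¬ (a ∧ b)) (hev : ¬ (p ∧ q)) : ¬ p ∧ ¬ q ∧ ¬ a ∧ ¬ b := by
  by_cases p <;> by_cases q <;> by_cases a <;> by_cases b <;> simp_all

/-- The arithmetic core of the forward direction. -/
theorem forward_aux (x1 x2 y1 y2 : ℤ) (hD : x1 * y2 - x2 * y1 ≠ 0)
    (hxy : x1 ^ 2 + x2 ^ 2 = y1 ^ 2 + y2 ^ 2)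
    (h1 : |2 * (x1 * y1 + x2 * y2)| ≤ x1 ^ 2 + x2 ^ 2) (n : ℕ)
    (hn : n = (x1 * y2 - x2 * y1).natAbs) :
    n ∈ {n : ℕ | ∃ p q : ℕ, 0 < p ∧ 0 < q ∧ q ≤ p ∧ (p : ℝ) ≤ Real.sqrt 3 * q ∧
          ∃ a b : ℤ, ¬(a = 0 ∧ b = 0) ∧ (n : ℤ) = 2 * p * q * (a ^ 2 + b ^ 2)} ∪
      {n : ℕ | Odd n ∧ ∃ p q : ℕ, 0 < p ∧ 0 < q ∧ q ≤ p ∧ (p : ℝ) ≤ Real.sqrt 3 * q ∧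
          ∃ a b : ℤ, ¬(a = 0 ∧ b = 0) ∧ (n : ℤ) = p * q * (a ^ 2 + b ^ 2)} := by
  obtain ⟨h1a, h1b⟩ := abs_le.mp h1
  have hu : ¬ (x1 + y1 = 0 ∧ x2 + y2 = 0) := by
    rintro ⟨ha, hb⟩
    apply hD
    linear_combination (-x2) * ha + x1 * hb
  have hg : 0 < Int.gcd (x1 + y1) (x2 + y2) := by
    rw [Nat.pos_iff_ne_zero]
    intro h
    exact hu (Int.gcd_eq_zero_iff.mp h)
  obtain ⟨p, a, b, hp, hab, hu1, hu2⟩ : ∃ p a b : ℤ, 0 < p ∧ IsCoprime a b ∧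
      x1 + y1 = p * a ∧ x2 + y2 = p * b := by
    obtain ⟨a, b, hab, ha, hb⟩ := Int.exists_gcd_one hg
    exact ⟨(Int.gcd (x1 + y1) (x2 + y2) : ℕ), a, b, by exact_mod_cast hg, Int.isCoprime_iff_gcd_eq_one.2 hab,
      by rw [mul_comm]; exact ha, by rw [mul_comm]; exact hb⟩
  have horth : a * (x1 - y1) = - b * (x2 - y2) := by
    apply mul_left_cancel₀ hp.ne'
    linear_combination (-(x1 - y1)) * hu1 - (x2 - y2) * hu2 + hxy
  have hab0 : ¬ (a = 0 ∧ b = 0) := by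
    rintro ⟨rfl, rfl⟩
    exact hu ⟨by simpa using hu1, by simpa using hu2⟩
  have hab2 : ¬ (Even a ∧ Even b) := by
    rintro ⟨ha, hb⟩
    have h2 : IsUnit (2 : ℤ) := hab.isUnit_of_dvd' ha.two_dvd hb.two_dvd
    rcases Int.isUnit_iff.mp h2 with h | h <;> omega
  obtain ⟨q, hv1, hv2⟩ : ∃ q : ℤ, x1 - y1 = - q * b ∧ x2 - y2 = q * a := by
    obtain ⟨r, s, hrs⟩ := hab
    refine ⟨r * (x2 - y2) - s * (x1 - y1), ?_, ?_⟩
    · linear_combination (-(x1 - y1)) * hrs + r * horth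
    · linear_combination (-(x2 - y2)) * hrs + s * horth
  have hW : 0 < a ^ 2 + b ^ 2 := by
    rcases not_and_or.mp hab0 with h | h <;> positivity
  have hdet : 2 * (x1 * y2 - x2 * y1) = - (p * q * (a ^ 2 + b ^ 2)) := by
    linear_combination (-(x2 - y2)) * hu1 + (x1 - y1) * hu2 - p * a * hv2 + p * b * hv1
  have hq0 : q ≠ 0 := by
    rintro rfl
    apply hD
    linarith
  have hU : (x1 + y1) ^ 2 + (x2 + y2) ^ 2 = p ^ 2 * (a ^ 2 + b ^ 2) := by
    rw [hu1, hu2]; ring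
  have hV : (x1 - y1) ^ 2 + (x2 - y2) ^ 2 = q ^ 2 * (a ^ 2 + b ^ 2) := by
    rw [hv1, hv2]; ring
  have hpq1 : p ^ 2 ≤ 3 * q ^ 2 := by
    apply le_of_mul_le_mul_right _ hW
    linarith
  have hpq2 : q ^ 2 ≤ 3 * p ^ 2 := by
    apply le_of_mul_le_mul_right _ hW
    linarith
  have hn2 : 2 * (n : ℤ) = |p| * |q| * (a ^ 2 + b ^ 2) := by
    have := congrArg abs hdet
    rw [abs_neg, abs_mul, abs_mul, abs_mul, abs_of_pos hW] at this
    rw [hn, Int.natCast_natAbs, ← this]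
    norm_num
  have e1 : Even (p * a - q * b) := ⟨x1, by linear_combination -hu1 - hv1⟩
  have e2 : Even (p * b + q * a) := ⟨x2, by linear_combination -hu2 - hv2⟩
  rw [Int.even_sub, Int.even_mul, Int.even_mul] at e1
  rw [Int.even_add, Int.even_mul, Int.even_mul] at e2
  by_cases hev : Even p ∧ Even q
  · left
    obtain ⟨⟨p', rfl⟩, ⟨q', rfl⟩⟩ := hev
    obtain ⟨P, Q, hP, hQ, hQP, hPQ, hmul⟩ := pq_aux p'.natAbs q'.natAbs
      (by omega) (by omega) (by zify; simp only [sq_abs]; nlinarith)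
      (by zify; simp only [sq_abs]; nlinarith)
    refine ⟨P, Q, hP, hQ, hQP, hPQ, a, b, hab0, ?_⟩
    zify at hmul
    rw [← two_mul, ← two_mul, abs_mul, abs_mul, abs_two] at hn2
    apply mul_left_cancel₀ (two_ne_zero (α := ℤ))
    linear_combination hn2 - 4 * (a ^ 2 + b ^ 2) * hmul
  · right
    have hodd : ¬ Even p ∧ ¬ Even q ∧ ¬ Even a ∧ ¬ Even b := prop_aux _ _ _ _ e1 e2 hab2 hev
    obtain ⟨hpo, hqo, hao, hbo⟩ := hodd
    rw [Int.not_even_iff_odd] at hpo hqo hao hbo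
    obtain ⟨c, rfl⟩ := hao
    obtain ⟨d, rfl⟩ := hbo
    obtain ⟨P, Q, hP, hQ, hQP, hPQ, hmul⟩ := pq_aux p.natAbs q.natAbs
      (by omega) (by omega) (by zify; simp only [sq_abs]; exact hpq1)
      (by zify; simp only [sq_abs]; exact hpq2)
    zify at hmul
    have hn3 : (n : ℤ) = |p| * |q| * ((c + d + 1) ^ 2 + (c - d) ^ 2) := by
      apply mul_left_cancel₀ (two_ne_zero (α := ℤ))
      linear_combination hn2
    refine ⟨?_, P, Q, hP, hQ, hQP, hPQ, c + d + 1, c - d, by omega, ?_⟩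
    · have : Odd (n : ℤ) := by
        rw [hn3]
        refine ((odd_abs.mpr hpo).mul (odd_abs.mpr hqo)).mul ?_
        exact ⟨c ^ 2 + d ^ 2 + c + d, by ring⟩
      exact_mod_cast this
    · rw [hn3, hmul]

theorem backward_aux (x1 x2 y1 y2 P Q W : ℤ)
    (hs : (x1 + y1) ^ 2 + (x2 + y2) ^ 2 = P ^ 2 * W)
    (ht : (x1 - y1) ^ 2 + (x2 - y2) ^ 2 = Q ^ 2 * W)
    (hc : x1 ^ 2 + x2 ^ 2 = y1 ^ 2 + y2 ^ 2)
    (hP : 0 < P) (hQ : 0 < Q) (hW : 0 < W) (h1 : Q ≤ P) (h2 : P ^ 2 ≤ 3 * Q ^ 2)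
    (hD : x1 * y2 - x2 * y1 ≠ 0) (n : ℕ) (hn : n = (x1 * y2 - x2 * y1).natAbs) :
    0 < n ∧ ∃ Λ : AddSubgroup ℂ, Λ ≤ squareLattice ∧ IsWellRounded Λ ∧
        (Λ.addSubgroupOf squareLattice).index = n := by
  obtain ⟨hle, hind⟩ := index_aux x1 x2 y1 y2 hD
  refine ⟨by rw [hn]; exact Int.natAbs_pos.mpr hD, _, hle, ?_, by rw [hind, hn]⟩
  have hmin : ∀ z ∈ AddSubgroup.closure {(⟨x1, x2⟩ : ℂ), ⟨y1, y2⟩}, z ≠ 0 →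
      ((x1 ^ 2 + x2 ^ 2 : ℤ) : ℝ) ≤ Complex.normSq z := by
    intro z hz hz0
    obtain ⟨k, l, rfl⟩ := AddSubgroup.mem_closure_pair.mp hz
    have hkl : ¬ (k = 0 ∧ l = 0) := by
      rintro ⟨rfl, rfl⟩
      simp at hz0
    have hns : Complex.normSq (k • (⟨x1, x2⟩ : ℂ) + l • ⟨y1, y2⟩) =
        (((k * x1 + l * y1) ^ 2 + (k * x2 + l * y2) ^ 2 : ℤ) : ℝ) := by
      simp [Complex.normSq_apply]
      ring
    rw [hns]
    norm_cast
    have e1 : 4 * ((k * x1 + l * y1) ^ 2 + (k * x2 + l * y2) ^ 2)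
        = ((k + l) ^ 2 * P ^ 2 + (k - l) ^ 2 * Q ^ 2) * W := by
      linear_combination (k + l) ^ 2 * hs + (k - l) ^ 2 * ht + 2 * (k ^ 2 - l ^ 2) * hc
    have e2 : 4 * (x1 ^ 2 + x2 ^ 2) = (P ^ 2 + Q ^ 2) * W := by
      linear_combination hs + ht + 2 * hc
    have e3 : P ^ 2 + Q ^ 2 ≤ (k + l) ^ 2 * P ^ 2 + (k - l) ^ 2 * Q ^ 2 := by
      by_cases h3 : k + l = 0
      · have : k ≠ 0 := by omega
        have h4 : 1 ≤ k ^ 2 := by have := sq_pos_of_ne_zero this; omega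
        have : (k - l) ^ 2 = 4 * k ^ 2 := by
          rw [show l = -k by omega]; ring
        rw [h3, this]
        nlinarith [sq_nonneg Q]
      · by_cases h5 : k - l = 0
        · have : k ≠ 0 := by omega
          have h4 : 1 ≤ k ^ 2 := by have := sq_pos_of_ne_zero this; omega
          have : (k + l) ^ 2 = 4 * k ^ 2 := by
            rw [show l = k by omega]; ring
          rw [h5, this]
          nlinarith [sq_nonneg P]
        · have h6 : 1 ≤ (k + l) ^ 2 := by have := sq_pos_of_ne_zero h3; omega
          have h7 : 1 ≤ (k - l) ^ 2 := by have := sq_pos_of_ne_zero h5; omega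
          nlinarith [sq_nonneg P, sq_nonneg Q]
    have := mul_le_mul_of_nonneg_right e3 hW.le
    omega
  have hnx : Complex.normSq (⟨x1, x2⟩ : ℂ) = ((x1 ^ 2 + x2 ^ 2 : ℤ) : ℝ) := by
    simp [Complex.normSq_apply]; ring
  have hny : Complex.normSq (⟨y1, y2⟩ : ℂ) = ((x1 ^ 2 + x2 ^ 2 : ℤ) : ℝ) := by
    rw [hc]; simp [Complex.normSq_apply]; ring
  refine ⟨⟨x1, x2⟩, ⟨y1, y2⟩, AddSubgroup.subset_closure (by simp),
    AddSubgroup.subset_closure (by simp), ?_, ?_, ?_⟩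
  · rw [linInd_iff_aux]
    dsimp only
    exact_mod_cast hD
  · intro z hz hz0
    rw [Complex.norm_def, Complex.norm_def]
    apply Real.sqrt_le_sqrt
    rw [hnx]
    exact hmin z hz hz0
  · intro z hz hz0
    rw [Complex.norm_def, Complex.norm_def]
    apply Real.sqrt_le_sqrt
    rw [hny]
    exact hmin z hz hz0

theorem wellRounded_square_index_set :
    {n : ℕ | 0 < n ∧ ∃ Λ : AddSubgroup ℂ, Λ ≤ squareLattice ∧ IsWellRounded Λ ∧
        (Λ.addSubgroupOf squareLattice).index = n} =
      {n : ℕ | ∃ p q : ℕ, 0 < p ∧ 0 < q ∧ q ≤ p ∧ (p : ℝ) ≤ Real.sqrt 3 * q ∧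
          ∃ a b : ℤ, ¬(a = 0 ∧ b = 0) ∧ (n : ℤ) = 2 * p * q * (a ^ 2 + b ^ 2)} ∪
      {n : ℕ | Odd n ∧ ∃ p q : ℕ, 0 < p ∧ 0 < q ∧ q ≤ p ∧ (p : ℝ) ≤ Real.sqrt 3 * q ∧
          ∃ a b : ℤ, ¬(a = 0 ∧ b = 0) ∧ (n : ℤ) = p * q * (a ^ 2 + b ^ 2)} := by
  apply Set.Subset.antisymm
  · rintro n ⟨hn, Λ, hle, ⟨x, y, hx, hy, hli, hmx, hmy⟩, hind⟩
    rw [linInd_iff_aux] at hli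
    have hnorm : ∀ u v : ℂ, ‖u‖ ≤ ‖v‖ → Complex.normSq u ≤ Complex.normSq v := by
      intro u v h
      rw [Complex.normSq_eq_norm_sq, Complex.normSq_eq_norm_sq]
      exact pow_le_pow_left₀ (norm_nonneg _) h 2
    have hx0 : x ≠ 0 := by rintro rfl; simp at hli
    have hy0 : y ≠ 0 := by rintro rfl; simp at hli
    have hp0 : x + y ≠ 0 := by
      intro h
      rw [eq_neg_of_add_eq_zero_right h] at hli
      apply hli; simp; ring
    have hm0 : x - y ≠ 0 := by
      intro h
      rw [sub_eq_zero.mp h] at hli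
      apply hli; ring
    have hxy : Complex.normSq x = Complex.normSq y :=
      le_antisymm (hnorm _ _ (hmx y hy hy0)) (hnorm _ _ (hmy x hx hx0))
    have hp1 := hnorm _ _ (hmx _ (Λ.add_mem hx hy) hp0)
    have hm1 := hnorm _ _ (hmx _ (Λ.sub_mem hx hy) hm0)
    have h1 : |2 * (x.re * y.re + x.im * y.im)| ≤ Complex.normSq x := by
      simp only [Complex.normSq_apply, Complex.add_re, Complex.add_im, Complex.sub_re,
        Complex.sub_im] at hp1 hm1 hxy ⊢
      rw [abs_le]
      constructor <;> nlinarith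
    have hΛ := basis_aux Λ x y hx hy hli (fun z hz hz0 => hnorm _ _ (hmx z hz hz0)) hxy h1
    obtain ⟨x1, x2, rfl⟩ := (mem_square_aux x).1 (hle hx)
    obtain ⟨y1, y2, rfl⟩ := (mem_square_aux y).1 (hle hy)
    have hD : x1 * y2 - x2 * y1 ≠ 0 := by
      dsimp only at hli
      exact_mod_cast hli
    have hi := (index_aux x1 x2 y1 y2 hD).2
    rw [← hΛ, hind] at hi
    simp only [Complex.normSq_apply] at hxy h1
    norm_cast at hxy h1
    refine forward_aux x1 x2 y1 y2 hD (by linarith) (by rw [sq, sq]; exact h1) n hi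
  · rintro n (⟨p, q, hp, hq, hqp, hpq, a, b, hab, hn⟩ | ⟨hodd, p, q, hp, hq, hqp, hpq, a, b, hab, hn⟩)
    · have hW : 0 < a ^ 2 + b ^ 2 := by
        rcases not_and_or.mp hab with h | h <;> positivity
      have hdet : (p * a - q * b) * (p * b - q * a) - (p * b + q * a) * (p * a + q * b)
          = - (2 * p * q * (a ^ 2 + b ^ 2) : ℤ) := by ring
      apply backward_aux (p * a - q * b) (p * b + q * a) (p * a + q * b) (p * b - q * a)
        (2 * p) (2 * q) (a ^ 2 + b ^ 2) (by ring) (by ring) (by ring) (by omega) (by omega) hW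
        (by omega) (by have := pq_conv_aux p q hpq; nlinarith)
      · rw [hdet]
        have : (0 : ℤ) < p := by exact_mod_cast hp
        have : (0 : ℤ) < q := by exact_mod_cast hq
        have : 0 < 2 * p * q * (a ^ 2 + b ^ 2) := by positivity
        omega
      · rw [hdet, ← hn]; simp
    · have hW : 0 < a ^ 2 + b ^ 2 := by
        rcases not_and_or.mp hab with h | h <;> positivity
      have ho : Odd ((p : ℤ) * q * (a ^ 2 + b ^ 2)) := by
        rw [← hn]; exact_mod_cast hodd
      rw [Int.odd_mul, Int.odd_mul] at ho
      obtain ⟨⟨⟨P, hP⟩, ⟨Q, hQ⟩⟩, -⟩ := ho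
      have hdet : ((P - Q) * a - (P + Q + 1) * b) * ((P + Q + 1) * b + (P - Q) * a)
         - ((P - Q) * b + (P + Q + 1) * a) * ((P + Q + 1) * a - (P - Q) * b)
          = - (p * q * (a ^ 2 + b ^ 2) : ℤ) := by rw [hP, hQ]; ring
      apply backward_aux ((P - Q) * a - (P + Q + 1) * b) ((P - Q) * b + (P + Q + 1) * a)
        ((P + Q + 1) * a - (P - Q) * b) ((P + Q + 1) * b + (P - Q) * a)
        p q (2 * (a ^ 2 + b ^ 2)) (by rw [hP]; ring) (by rw [hQ]; ring) (by ring)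
        (by omega) (by omega) (by omega)
        (by omega) (pq_conv_aux p q hpq)
      · rw [hdet]
        have : (0 : ℤ) < p := by exact_mod_cast hp
        have : (0 : ℤ) < q := by exact_mod_cast hq
        have : 0 < p * q * (a ^ 2 + b ^ 2) := by positivity
        omega
      · rw [hdet, ← hn]; simp
end
end

section
/- Let w, z ∈ ℝ² be nonzero vectors with ⟨w, z⟩ = 0, and let R : ℝ² → ℝ² be the linear reflection determined by Rw = w and Rz = −z. Let Λ ⊆ ℝ² be a planar lattice such that ℤw + ℤz ⊆ Λ, R(Λ) = Λ, and both w and z are primitive in Λ. Then either Λ = ℤw + ℤz, or Λ = ℤ·(w+z)/2 + ℤ·(w−z)/2. -/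
noncomputable section

open scoped RealInnerProductSpace

/-- The Euclidean plane. -/
abbrev EucPlane : Type := EuclideanSpace ℝ (Fin 2)

/-- A planar lattice: the additive subgroup generated by two linearly independent vectors. -/
def IsPlanarLattice (Λ : AddSubgroup EucPlane) : Prop :=
  ∃ v₁ v₂ : EucPlane, LinearIndependent ℝ ![v₁, v₂] ∧ Λ = AddSubgroup.closure {v₁, v₂}

/-- A vector `w` is primitive in `Λ` if `w ∈ Λ` and it is not a proper integral
multiple of a lattice vector. -/
def IsPrimitiveIn (Λ : AddSubgroup EucPlane) (w : EucPlane) : Prop :=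
  w ∈ Λ ∧ ∀ (m : ℤ) (u : EucPlane), u ∈ Λ → w = m • u → m = 1 ∨ m = -1

/-- A real multiple of a primitive vector lying in the lattice is an integral multiple. -/
theorem real_mul_primitive (Λ : AddSubgroup EucPlane) (hΛ : IsPlanarLattice Λ) (w : EucPlane)
    (hpw : IsPrimitiveIn Λ w) (c : ℝ) (hc : c • w ∈ Λ) : ∃ n : ℤ, c = n := by
  obtain ⟨v₁, v₂, hli, rfl⟩ := hΛ
  obtain ⟨hwm, hprim⟩ := hpw
  obtain ⟨p, q, hpq⟩ := AddSubgroup.mem_closure_pair.1 hwm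
  obtain ⟨r, s, hrs⟩ := AddSubgroup.mem_closure_pair.1 hc
  have hg : IsCoprime p q := by
    rw [Int.isCoprime_iff_gcd_eq_one]
    obtain ⟨p', hp'⟩ := Int.gcd_dvd_left p q
    obtain ⟨q', hq'⟩ := Int.gcd_dvd_right p q
    have := hprim (Int.gcd p q) (p' • v₁ + q' • v₂)
      (AddSubgroup.mem_closure_pair.2 ⟨p', q', rfl⟩) (by
        rw [smul_add, smul_smul, smul_smul, ← hp', ← hq', hpq])
    omega
  obtain ⟨x, y, hxy⟩ := hg
  have key := LinearIndependent.pair_iff.1 hli (c * p - r) (c * q - s) (by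
    have h : c • (p • v₁ + q • v₂) = r • v₁ + s • v₂ := by rw [hpq, hrs]
    simp only [← Int.cast_smul_eq_zsmul ℝ] at h
    have h2 := sub_eq_zero.2 h
    rw [← h2]
    module)
  refine ⟨x * r + y * s, ?_⟩
  have h1 : (x : ℝ) * p + y * q = 1 := by exact_mod_cast hxy
  push_cast
  linear_combination x * key.1 + y * key.2 - c * h1

theorem exists_coords (w z : EucPlane) (hw : w ≠ 0) (hz : z ≠ 0) (horth : ⟪w, z⟫ = 0)
    (v : EucPlane) : ∃ a b : ℝ, v = a • w + b • z := by
  have hli : LinearIndependent ℝ ![w, z] := by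
    rw [LinearIndependent.pair_iff]
    intro s t h
    have h1 : ⟪w, s • w + t • z⟫ = 0 := by rw [h, inner_zero_right]
    have h2 : ⟪s • w + t • z, z⟫ = 0 := by rw [h, inner_zero_left]
    rw [inner_add_right, inner_smul_right, inner_smul_right, horth] at h1
    rw [inner_add_left, real_inner_smul_left, real_inner_smul_left, horth] at h2
    have h3 := inner_self_ne_zero (𝕜 := ℝ).2 hw
    have h4 := inner_self_ne_zero (𝕜 := ℝ).2 hz
    constructor
    · simpa [hw] using h1
    · simpa [hz] using h2
  have ht := hli.span_eq_top_of_card_eq_finrank (by simp)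
  have hv : v ∈ Submodule.span ℝ (Set.range ![w, z]) := by rw [ht]; trivial
  rw [Matrix.range_cons, Matrix.range_cons, Matrix.range_empty, Set.union_empty,
    Set.singleton_union, Submodule.mem_span_pair] at hv
  obtain ⟨a, b, h⟩ := hv
  exact ⟨a, b, h.symm⟩

theorem reflection_invariant_superlattice
    (w z : EucPlane) (hw : w ≠ 0) (hz : z ≠ 0) (horth : ⟪w, z⟫ = 0)
    (R : EucPlane →ₗ[ℝ] EucPlane) (hRw : R w = w) (hRz : R z = -z)
    (Λ : AddSubgroup EucPlane) (hΛ : IsPlanarLattice Λ)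
    (hsub : AddSubgroup.closure {w, z} ≤ Λ)
    (hinv : Λ.map R.toAddMonoidHom = Λ)
    (hpw : IsPrimitiveIn Λ w) (hpz : IsPrimitiveIn Λ z) :
    Λ = AddSubgroup.closure {w, z} ∨
      Λ = AddSubgroup.closure {((1 : ℝ) / 2) • (w + z), ((1 : ℝ) / 2) • (w - z)} := by
  have hwm := hpw.1
  have hzm := hpz.1
  have half : ∀ n : ℤ, (1 / 2 : ℝ) ≠ n := by
    intro n h
    have : (1 : ℝ) = 2 * n := by linarith
    have : (1 : ℤ) = 2 * n := by exact_mod_cast this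
    omega
  have hwh : ((1 : ℝ) / 2) • w ∉ Λ := fun h => by
    obtain ⟨n, hn⟩ := real_mul_primitive Λ hΛ w hpw _ h
    exact half n hn
  have hzh : ((1 : ℝ) / 2) • z ∉ Λ := fun h => by
    obtain ⟨n, hn⟩ := real_mul_primitive Λ hΛ z hpz _ h
    exact half n hn
  have hR : ∀ v ∈ Λ, R v ∈ Λ := fun v hv => by
    have : R.toAddMonoidHom v ∈ Λ.map R.toAddMonoidHom := AddSubgroup.mem_map_of_mem _ hv
    rw [hinv] at this
    exact this
  -- every lattice vector has half-integral coordinates, of equal parity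
  have main : ∀ v ∈ Λ, ∃ i j : ℤ, v = i • w + j • z ∨
      v = i • w + j • z + ((1 : ℝ) / 2) • (w + z) := by
    intro v hv
    obtain ⟨a, b, hab⟩ := exists_coords w z hw hz horth v
    have hRv : R v = a • w - b • z := by
      rw [hab, map_add, map_smul, map_smul, hRw, hRz]; module
    have h1 : (2 * a) • w ∈ Λ := by
      have := Λ.add_mem hv (hR v hv)
      rw [hRv, hab] at this
      convert this using 1; module
    have h2 : (2 * b) • z ∈ Λ := by
      have := Λ.sub_mem hv (hR v hv)
      rw [hRv, hab] at this
      convert this using 1; module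
    obtain ⟨m, hm⟩ := real_mul_primitive Λ hΛ w hpw _ h1
    obtain ⟨n, hn⟩ := real_mul_primitive Λ hΛ z hpz _ h2
    have hmem : ∀ i j : ℤ, v - (i • w + j • z) ∈ Λ := fun i j =>
      Λ.sub_mem hv (Λ.add_mem (Λ.zsmul_mem hwm i) (Λ.zsmul_mem hzm j))
    obtain ⟨i, hi⟩ := Int.even_or_odd' m
    obtain ⟨j, hj⟩ := Int.even_or_odd' n
    refine ⟨i, j, ?_⟩
    have hij := hmem i j
    simp only [← Int.cast_smul_eq_zsmul ℝ] at hij ⊢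
    rcases hi with rfl | rfl <;> rcases hj with rfl | rfl <;> push_cast at hm hn
    · left
      have ha : a = i := by linarith
      have hb : b = j := by linarith
      rw [hab, ha, hb]
    · exfalso
      have ha : a = i := by linarith
      have hb : b = j + 1 / 2 := by linarith
      apply hzh
      rw [hab, ha, hb] at hij
      convert hij using 1; module
    · exfalso
      have ha : a = i + 1 / 2 := by linarith
      have hb : b = j := by linarith
      apply hwh
      rw [hab, ha, hb] at hij
      convert hij using 1; module
    · right
      have ha : a = i + 1 / 2 := by linarith
      have hb : b = j + 1 / 2 := by linarith
      rw [hab, ha, hb]; module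
  by_cases hc : ((1 : ℝ) / 2) • (w + z) ∈ Λ
  · right
    apply le_antisymm
    · intro v hv
      rw [AddSubgroup.mem_closure_pair]
      obtain ⟨i, j, h | h⟩ := main v hv
      · refine ⟨i + j, i - j, ?_⟩
        rw [h]
        simp only [← Int.cast_smul_eq_zsmul ℝ]
        push_cast
        module
      · refine ⟨i + j + 1, i - j, ?_⟩
        rw [h]
        simp only [← Int.cast_smul_eq_zsmul ℝ]
        push_cast
        module
    · rw [AddSubgroup.closure_le]
      rintro v (rfl | rfl)
      · exact hc
      · have := Λ.sub_mem hc hzm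
        show _ ∈ Λ
        convert this using 1; module
  · left
    refine le_antisymm ?_ hsub
    intro v hv
    rw [AddSubgroup.mem_closure_pair]
    obtain ⟨i, j, h | h⟩ := main v hv
    · exact ⟨i, j, h.symm⟩
    · exfalso
      apply hc
      have := Λ.sub_mem hv (Λ.add_mem (Λ.zsmul_mem hwm i) (Λ.zsmul_mem hzm j))
      rw [h] at this
      convert this using 1; abel
end
end

section
/- Let Γ be a planar lattice, R a coincidence reflection of Γ, and suppose w, z ∈ Γ are primitive in Γ with Rw = w and Rz = −z (so ⟨w,z⟩ = 0). Set Γ_R = ℤw + ℤz and Γ̃_R = ℤ·(w+z)/2 + ℤ·(w−z)/2. Then Γ̃_R ⊆ Γ if and only if the index [Γ : Γ_R] is even. -/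
noncomputable section

open scoped RealInnerProductSpace

/-- The image of `Γ` under the linear isometry `R`. -/
def latticeMap (R : EucPlane ≃ₗᵢ[ℝ] EucPlane) (Γ : AddSubgroup EucPlane) :
    AddSubgroup EucPlane :=
  Γ.map (R.toLinearEquiv : EucPlane →ₗ[ℝ] EucPlane).toAddMonoidHom

/-- `R` is a coincidence reflection of `Γ`: a linear isometry of determinant `-1`
such that `Γ ∩ RΓ` has finite index in `Γ`. -/
def IsCoincidenceReflection (Γ : AddSubgroup EucPlane) (R : EucPlane ≃ₗᵢ[ℝ] EucPlane) : Prop :=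
  LinearMap.det (R.toLinearEquiv : EucPlane →ₗ[ℝ] EucPlane) = -1 ∧
    ((Γ ⊓ latticeMap R Γ).addSubgroupOf Γ).index ≠ 0

theorem tilde_lattice_sub_iff_even_index
    (Γ : AddSubgroup EucPlane) (hΓ : IsPlanarLattice Γ)
    (R : EucPlane ≃ₗᵢ[ℝ] EucPlane) (hR : IsCoincidenceReflection Γ R)
    (w z : EucPlane) (hpw : IsPrimitiveIn Γ w) (hpz : IsPrimitiveIn Γ z)
    (hRw : R w = w) (hRz : R z = -z) :
    AddSubgroup.closure {((1 : ℝ) / 2) • (w + z), ((1 : ℝ) / 2) • (w - z)} ≤ Γ ↔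
      Even (((AddSubgroup.closure {w, z}).addSubgroupOf Γ).index) := by
  obtain ⟨v₁, v₂, -, hv⟩ := hΓ
  obtain ⟨hw, hw'⟩ := hpw
  obtain ⟨hz, hz'⟩ := hpz
  have hw0 : w ≠ 0 := by
    rintro rfl
    rcases hw' 2 0 Γ.zero_mem (by simp) with h | h <;> omega
  have hz0 : z ≠ 0 := by
    rintro rfl
    rcases hz' 2 0 Γ.zero_mem (by simp) with h | h <;> omega
  have hind : ∀ p q : ℤ, p • w + q • z = 0 → p = 0 ∧ q = 0 := by
    intro p q h
    have h2 : p • w - q • z = 0 := by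
      have := congrArg R h
      rw [map_add, map_zsmul, map_zsmul, hRw, hRz, map_zero, smul_neg] at this
      rw [sub_eq_add_neg]; exact this
    have h3 : (2 * p) • w = 0 := by
      have : (2 * p) • w = (p • w + q • z) + (p • w - q • z) := by module
      rw [this, h, h2, add_zero]
    have h4 : (2 * q) • z = 0 := by
      have : (2 * q) • z = (p • w + q • z) - (p • w - q • z) := by module
      rw [this, h, h2, sub_zero]
    rw [← Int.cast_smul_eq_zsmul ℝ, smul_eq_zero, Int.cast_eq_zero] at h3 h4
    constructor
    · have := h3.resolve_right hw0
      omega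
    · have := h4.resolve_right hz0
      omega
  have hwΓ : w ∈ AddSubgroup.closure {w, z} := AddSubgroup.subset_closure (by simp)
  have hzΓ : z ∈ AddSubgroup.closure {w, z} := AddSubgroup.subset_closure (by simp)
  constructor
  · intro h
    have hu : ((1 : ℝ) / 2) • (w + z) ∈ Γ := h (AddSubgroup.subset_closure (by simp))
    have hu2 : (2 : ℕ) • (((1 : ℝ) / 2) • (w + z)) = w + z := by module
    generalize ((1 : ℝ) / 2) • (w + z) = u at hu hu2
    have hun : u ∉ AddSubgroup.closure {w, z} := by
      intro hm
      obtain ⟨m, n, hmn⟩ := AddSubgroup.mem_closure_pair.1 hm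
      have := hind (2 * m - 1) (2 * n - 1) (by
        have e : (2 * m - 1) • w + (2 * n - 1) • z = 2 • (m • w + n • z) - (w + z) := by module
        rw [e, hmn, hu2, sub_self])
      omega
    have hord : addOrderOf (QuotientAddGroup.mk (s := (AddSubgroup.closure {w, z}).addSubgroupOf Γ)
        (⟨u, hu⟩ : Γ)) = 2 := by
      apply addOrderOf_eq_prime
      · rw [← QuotientAddGroup.mk_nsmul, QuotientAddGroup.eq_zero_iff, AddSubgroup.mem_addSubgroupOf]
        change (2 : ℕ) • u ∈ _
        rw [hu2]
        exact add_mem hwΓ hzΓ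
      · rw [Ne, QuotientAddGroup.eq_zero_iff, AddSubgroup.mem_addSubgroupOf]
        exact hun
    rw [even_iff_two_dvd, AddSubgroup.index]
    exact (dvd_of_eq hord.symm).trans (addOrderOf_dvd_natCard _)
  · intro h
    have hfin : Finite (Γ ⧸ (AddSubgroup.closure {w, z}).addSubgroupOf Γ) := by
      have hfg : AddGroup.FG Γ := by
        rw [AddGroup.fg_iff_addSubgroup_fg]
        exact ⟨{v₁, v₂}, by simp [hv]⟩
      refine AddCommGroup.finite_of_fg_torsion _ ?_
      have hw1 := hw
      have hz1 := hz
      rw [hv] at hw1 hz1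
      obtain ⟨a, b, hab⟩ := AddSubgroup.mem_closure_pair.1 hw1
      obtain ⟨c, d, hcd⟩ := AddSubgroup.mem_closure_pair.1 hz1
      have e1 : (a * d - b * c) • v₁ = d • w + (-b) • z := by
        rw [← hab, ← hcd]; module
      have e2 : (a * d - b * c) • v₂ = (-c) • w + a • z := by
        rw [← hab, ← hcd]; module
      have hD : a * d - b * c ≠ 0 := by
        intro h0
        rw [h0, zero_smul] at e1 e2
        obtain ⟨-, hb⟩ := hind _ _ e1.symm
        obtain ⟨-, ha⟩ := hind _ _ e2.symm
        have hb' : b = 0 := by omega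
        apply hw0
        rw [← hab, ha, hb']; simp
      intro x
      obtain ⟨⟨x, hx⟩, rfl⟩ := QuotientAddGroup.mk_surjective x
      rw [isOfFinAddOrder_iff_zsmul_eq_zero]
      refine ⟨a * d - b * c, hD, ?_⟩
      rw [← QuotientAddGroup.mk_zsmul, QuotientAddGroup.eq_zero_iff, AddSubgroup.mem_addSubgroupOf]
      change (a * d - b * c) • x ∈ _
      have hx1 := hx
      rw [hv] at hx1
      obtain ⟨m, n, rfl⟩ := AddSubgroup.mem_closure_pair.1 hx1
      rw [smul_add, smul_comm _ m, smul_comm _ n, e1, e2]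
      exact add_mem (zsmul_mem (add_mem (zsmul_mem hwΓ _) (zsmul_mem hzΓ _)) _)
        (zsmul_mem (add_mem (zsmul_mem hwΓ _) (zsmul_mem hzΓ _)) _)
    rw [even_iff_two_dvd, AddSubgroup.index] at h
    haveI : Fact (Nat.Prime 2) := ⟨Nat.prime_two⟩
    obtain ⟨x, hx⟩ := exists_prime_addOrderOf_dvd_card' 2 h
    obtain ⟨⟨u, hu⟩, rfl⟩ := QuotientAddGroup.mk_surjective x
    rw [addOrderOf_eq_prime_iff, ← QuotientAddGroup.mk_nsmul, Ne, QuotientAddGroup.eq_zero_iff,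
      QuotientAddGroup.eq_zero_iff, AddSubgroup.mem_addSubgroupOf,
      AddSubgroup.mem_addSubgroupOf] at hx
    obtain ⟨hx1, hx2⟩ := hx
    change (2 : ℕ) • u ∈ _ at hx1
    change u ∉ _ at hx2
    obtain ⟨m, n, hmn⟩ := AddSubgroup.mem_closure_pair.1 hx1
    have hu' : u = ((1 : ℝ) / 2) • (m • w + n • z) := by
      rw [hmn]; module
    have key : ((1 : ℝ) / 2) • (w + z) ∈ Γ := by
      rcases Int.even_or_odd' m with ⟨k, hk | hk⟩ <;> rcases Int.even_or_odd' n with ⟨l, hl | hl⟩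
      · exfalso
        apply hx2
        have : u = k • w + l • z := by
          rw [hu', hk, hl]; module
        rw [this]
        exact add_mem (zsmul_mem hwΓ _) (zsmul_mem hzΓ _)
      · exfalso
        have := hz' 2 (u - k • w - l • z)
          (sub_mem (sub_mem hu (zsmul_mem hw _)) (zsmul_mem hz _)) (by
            rw [hu', hk, hl]; module)
        omega
      · exfalso
        have := hw' 2 (u - k • w - l • z)
          (sub_mem (sub_mem hu (zsmul_mem hw _)) (zsmul_mem hz _)) (by
            rw [hu', hk, hl]; module)
        omega
      · have : ((1 : ℝ) / 2) • (w + z) = u - k • w - l • z := by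
          rw [hu', hk, hl]; module
        rw [this]
        exact sub_mem (sub_mem hu (zsmul_mem hw _)) (zsmul_mem hz _)
    rw [AddSubgroup.closure_le]
    rintro x (rfl | rfl)
    · exact key
    · have : ((1 : ℝ) / 2) • (w - z) = ((1 : ℝ) / 2) • (w + z) - z := by module
      rw [this]
      exact sub_mem key hz
end
end

section
/- Let Γ be a planar lattice that is not rational. If v, w, v', w' ∈ Γ are nonzero vectors with ⟨v, w⟩ = 0 and ⟨v', w'⟩ = 0, then {ℝv', ℝw'} = {ℝv, ℝw}, i.e., v' lies on the line ℝv or on the line ℝw. In particular, Γ possesses at most one rational orthogonal frame, hence exactly one basic rectangular (or square) sublattice when it possesses a rectangular sublattice at all. -/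
noncomputable section

open scoped RealInnerProductSpace

/-- A planar lattice is rational if, after rescaling by some `c > 0`, all inner
products of lattice vectors are rational. -/
def IsRationalLattice (Γ : AddSubgroup EucPlane) : Prop :=
  ∃ c : ℝ, 0 < c ∧ ∀ v ∈ Γ, ∀ w ∈ Γ, ∃ q : ℚ, c * ⟪v, w⟫ = q

theorem non_rational_unique_orthogonal_frame
    (Γ : AddSubgroup EucPlane) (hΓ : IsPlanarLattice Γ) (hirr : ¬ IsRationalLattice Γ)
    (v w v' w' : EucPlane) (hv : v ∈ Γ) (hw : w ∈ Γ) (hv' : v' ∈ Γ) (hw' : w' ∈ Γ)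
    (hv0 : v ≠ 0) (hw0 : w ≠ 0) (hv'0 : v' ≠ 0) (hw'0 : w' ≠ 0)
    (horth : ⟪v, w⟫ = 0) (horth' : ⟪v', w'⟫ = 0) :
    (∃ t : ℝ, v' = t • v) ∨ (∃ t : ℝ, v' = t • w) := by
  obtain ⟨e, f, -, rfl⟩ := hΓ
  have hmem : ∀ x ∈ AddSubgroup.closure {e, f}, ∃ m n : ℤ, x = (m : ℝ) • e + (n : ℝ) • f := by
    intro x hx
    obtain ⟨m, n, h⟩ := AddSubgroup.mem_closure_pair.1 hx
    exact ⟨m, n, by rw [← h]; simp only [Int.cast_smul_eq_zsmul]⟩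
  have hvv : ⟪v, v⟫ ≠ 0 := fun h => hv0 (inner_self_eq_zero.1 h)
  have hww : ⟪w, w⟫ ≠ 0 := fun h => hw0 (inner_self_eq_zero.1 h)
  have horth2 : ⟪w, v⟫ = 0 := by rw [real_inner_comm]; exact horth
  have hindep : ∀ s t : ℝ, s • v + t • w = 0 → s = 0 ∧ t = 0 := by
    intro s t h
    have h1 : ⟪v, s • v + t • w⟫ = 0 := by rw [h, inner_zero_right]
    have h2 : ⟪w, s • v + t • w⟫ = 0 := by rw [h, inner_zero_right]
    rw [inner_add_right, real_inner_smul_right, real_inner_smul_right] at h1 h2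
    rw [horth, mul_zero, add_zero] at h1
    rw [horth2, mul_zero, zero_add] at h2
    exact ⟨(mul_eq_zero.1 h1).resolve_right hvv, (mul_eq_zero.1 h2).resolve_right hww⟩
  obtain ⟨a, b, hab⟩ := hmem v hv
  obtain ⟨c, d, hcd⟩ := hmem w hw
  have hD : (a * d - b * c : ℝ) ≠ 0 := by
    intro hD
    have h1 := hindep d (-b) (by
      rw [hab, hcd]
      linear_combination (norm := skip) hD • e
      match_scalars <;> ring)
    have h2 := hindep c (-a) (by
      rw [hab, hcd]
      linear_combination (norm := skip) (-hD) • f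
      match_scalars <;> ring)
    apply hv0
    rw [hab, neg_eq_zero.1 h1.2, neg_eq_zero.1 h2.2]
    simp
  have hrep : ∀ x ∈ AddSubgroup.closure {e, f}, ∃ p q : ℚ, x = (p : ℝ) • v + (q : ℝ) • w := by
    intro x hx
    obtain ⟨m, n, h⟩ := hmem x hx
    refine ⟨(m * d - n * c) / (a * d - b * c), (n * a - m * b) / (a * d - b * c), ?_⟩
    push_cast
    rw [h, hab, hcd]
    generalize hE : (a * d - b * c : ℝ) = E at hD ⊢
    match_scalars
    · field_simp
      rw [← hE]
      ring
    · field_simp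
      rw [← hE]
      ring
  have hin : ∀ p q r s : ℝ, ⟪p • v + q • w, r • v + s • w⟫ = p * r * ⟪v, v⟫ + q * s * ⟪w, w⟫ := by
    intro p q r s
    simp only [inner_add_left, inner_add_right, real_inner_smul_left, real_inner_smul_right,
      horth, horth2]
    ring
  obtain ⟨p, q, h1⟩ := hrep v' hv'
  obtain ⟨r, s, h2⟩ := hrep w' hw'
  by_cases hq : q = 0
  · left; exact ⟨p, by rw [h1, hq]; simp⟩
  by_cases hp : p = 0
  · right; exact ⟨q, by rw [h1, hp]; simp⟩
  exfalso
  rw [h1, h2, hin] at horth'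
  have hpR : (p : ℝ) ≠ 0 := by exact_mod_cast hp
  have hqR : (q : ℝ) ≠ 0 := by exact_mod_cast hq
  have hr : (r : ℝ) ≠ 0 := by
    intro hr
    rw [hr] at horth' h2
    have hs : (s : ℝ) = 0 := by simpa [hqR, hw0] using horth'
    exact hw'0 (by rw [h2, hs]; simp)
  apply hirr
  refine ⟨⟪w, w⟫⁻¹, inv_pos.2 (lt_of_le_of_ne real_inner_self_nonneg hww.symm), ?_⟩
  intro x hx y hy
  obtain ⟨x1, x2, rfl⟩ := hrep x hx
  obtain ⟨y1, y2, rfl⟩ := hrep y hy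
  refine ⟨x1 * y1 * (-(q * s) / (p * r)) + x2 * y2, ?_⟩
  rw [hin]
  have hk : ⟪v, v⟫ = (-(q * s) / (p * r)) * ⟪w, w⟫ := by
    field_simp
    linear_combination horth'
  rw [hk]
  generalize ⟪w, w⟫ = W at hww
  push_cast
  field_simp
end
end

section
/- Let τ ∈ ℂ ∖ ℝ, let Γ = ℤ + ℤτ ⊂ ℂ ≅ ℝ², and set n = |τ|² and t = τ + conj(τ) = 2·Re(τ). Then Γ has a well-rounded sublattice if and only if one of the following holds: (1) both t and n are rational; (2) t is rational and n is irrational; (3) t is irrational and there exist q, r ∈ ℚ with n = q + r·t and with q + r² the square of a rational number. -/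
noncomputable section

lemma wr_aux1 (A B : ℝ) (hA : 0 < A) (hB : 0 < B) (h1 : A ≤ 3 * B) (h2 : B ≤ 3 * A) (m n : ℤ)
    (h : ¬(m = 0 ∧ n = 0)) :
    A + B ≤ ((m : ℝ) + n) ^ 2 * A + ((m : ℝ) - n) ^ 2 * B := by
  have key : ∀ k : ℤ, k ≠ 0 → (1 : ℝ) ≤ (k : ℝ) ^ 2 := by
    intro k hk
    have : 1 ≤ k ^ 2 := by
      have := pow_pos (abs_pos.mpr hk) 2
      rw [sq_abs] at this
      omega
    exact_mod_cast this
  by_cases hp : m + n = 0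
  · have hn : n = -m := by omega
    have hm : m ≠ 0 := by omega
    have := key m hm
    subst hn
    push_cast
    nlinarith
  · by_cases hq : m - n = 0
    · have hn : n = m := by omega
      have hm : m ≠ 0 := by omega
      have := key m hm
      subst hn
      nlinarith
    · have h3 := key _ hp
      have h4 := key _ hq
      push_cast at h3 h4
      nlinarith

lemma wr_aux2 (P Q : ℝ) (hP : 0 < P) (hQ : 0 < Q) :
    ∃ k l : ℤ, 0 < k ∧ 0 < l ∧ (k : ℝ) ^ 2 * P ≤ 3 * ((l : ℝ) ^ 2 * Q) ∧
      (l : ℝ) ^ 2 * Q ≤ 3 * ((k : ℝ) ^ 2 * P) := by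
  set ρ := Real.sqrt (P / Q) with hρ
  have hρ0 : 0 < ρ := Real.sqrt_pos.mpr (by positivity)
  have hsq : ρ ^ 2 * Q = P := by
    rw [hρ, Real.sq_sqrt (by positivity)]; field_simp
  obtain ⟨r, hr1, hr2⟩ := exists_rat_btwn (show ρ < 3 / 2 * ρ by linarith)
  have hr0 : (0 : ℝ) < r := by linarith
  have hr0' : 0 < r := by exact_mod_cast hr0
  have hd : (0 : ℝ) < r.den := by exact_mod_cast r.den_pos
  have hnum : (r.num : ℝ) = r * r.den := by
    exact_mod_cast (Rat.mul_den_eq_num r).symm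
  refine ⟨r.den, r.num, by exact_mod_cast r.den_pos, Rat.num_pos.mpr hr0', ?_, ?_⟩
  · have : ρ ^ 2 ≤ (r : ℝ) ^ 2 := by gcongr
    have h2 : 0 ≤ (r.den : ℝ) ^ 2 * Q := by positivity
    rw [hnum, ← hsq]
    push_cast
    nlinarith [mul_le_mul_of_nonneg_left this h2, mul_nonneg h2 (sq_nonneg (r : ℝ))]
  · have : (r : ℝ) ^ 2 ≤ (3 / 2 * ρ) ^ 2 := by gcongr
    have h2 : 0 ≤ (r.den : ℝ) ^ 2 * Q := by positivity
    rw [hnum, ← hsq]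
    push_cast
    nlinarith [mul_le_mul_of_nonneg_left this h2, mul_nonneg h2 (sq_nonneg ρ)]

lemma wr_index (τ : ℂ) (Λ : AddSubgroup ℂ) (N : ℤ) (hN : N ≠ 0)
    (h : ∀ z ∈ AddSubgroup.closure {1, τ}, N • z ∈ Λ) :
    (Λ.addSubgroupOf (AddSubgroup.closure {1, τ})).index ≠ 0 := by
  set G := AddSubgroup.closure ({1, τ} : Set ℂ) with hG
  have hfg : AddGroup.FG G := by
    rw [AddGroup.fg_iff_addSubgroup_fg]
    refine (AddSubgroup.fg_iff _).mpr ⟨{1, τ}, rfl, by simp⟩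
  have hfgq : AddGroup.FG (G ⧸ Λ.addSubgroupOf G) :=
    AddGroup.fg_of_surjective (QuotientAddGroup.mk'_surjective (Λ.addSubgroupOf G))
  have htor : AddMonoid.IsTorsion (G ⧸ Λ.addSubgroupOf G) := by
    intro x
    induction x using QuotientAddGroup.induction_on with
    | H z =>
      rw [isOfFinAddOrder_iff_zsmul_eq_zero]
      refine ⟨N, hN, ?_⟩
      rw [← QuotientAddGroup.mk_zsmul, QuotientAddGroup.eq_zero_iff, AddSubgroup.mem_addSubgroupOf]
      exact h z z.2
  have : Finite (G ⧸ Λ.addSubgroupOf G) := AddCommGroup.finite_of_fg_torsion _ htor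
  exact AddSubgroup.index_ne_zero_of_finite

lemma wr_construct (τ : ℂ) (a b c d : ℤ)
    (hu : (a : ℂ) + b * τ ≠ 0) (hv : (c : ℂ) + d * τ ≠ 0)
    (ho : (a : ℝ) * c + (a * d + b * c) * τ.re + b * d * Complex.normSq τ = 0) :
    ∃ Λ : AddSubgroup ℂ, Λ ≤ AddSubgroup.closure {1, τ} ∧
        (Λ.addSubgroupOf (AddSubgroup.closure {1, τ})).index ≠ 0 ∧ IsWellRounded Λ := by
  obtain ⟨u, hu'⟩ : ∃ u : ℂ, u = a + b * τ := ⟨_, rfl⟩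
  obtain ⟨v, hv'⟩ : ∃ v : ℂ, v = c + d * τ := ⟨_, rfl⟩
  rw [← hu'] at hu
  rw [← hv'] at hv
  have hor : u.re * v.re + u.im * v.im = 0 := by
    rw [hu', hv', ← ho, Complex.normSq_apply]
    simp
    ring
  have hP := Complex.normSq_pos.mpr hu
  have hQ := Complex.normSq_pos.mpr hv
  have hcross : (u.re * v.im - u.im * v.re) ^ 2 = Complex.normSq u * Complex.normSq v := by
    simp only [Complex.normSq_apply]
    linear_combination -(u.re * v.re + u.im * v.im) * hor
  have hcr0 : u.re * v.im - u.im * v.re ≠ 0 := by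
    intro h0
    rw [h0] at hcross
    have := mul_pos hP hQ
    simp at hcross
    grind
  have hΔ : a * d - b * c ≠ 0 := by
    intro h0
    apply hcr0
    have h1 : (a : ℝ) * d - b * c = 0 := by exact_mod_cast h0
    rw [hu', hv']
    simp
    linear_combination τ.im * h1
  obtain ⟨k, l, hk, hl, hkl1, hkl2⟩ := wr_aux2 _ _ hP hQ
  have hkR : (0 : ℝ) < k := by exact_mod_cast hk
  have hlR : (0 : ℝ) < l := by exact_mod_cast hl
  have h1m : (1 : ℂ) ∈ AddSubgroup.closure ({1, τ} : Set ℂ) :=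
    AddSubgroup.subset_closure (by simp)
  have hτm : τ ∈ AddSubgroup.closure ({1, τ} : Set ℂ) :=
    AddSubgroup.subset_closure (by simp)
  have hum : u ∈ AddSubgroup.closure ({1, τ} : Set ℂ) :=
    AddSubgroup.mem_closure_pair.mpr ⟨a, b, by rw [hu']; simp⟩
  have hvm : v ∈ AddSubgroup.closure ({1, τ} : Set ℂ) :=
    AddSubgroup.mem_closure_pair.mpr ⟨c, d, by rw [hv']; simp⟩
  have hns : ∀ m n : ℤ, Complex.normSq (m • (k * u + l * v) + n • (k * u - l * v)) =
      ((m : ℝ) + n) ^ 2 * (k ^ 2 * Complex.normSq u) +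
      ((m : ℝ) - n) ^ 2 * (l ^ 2 * Complex.normSq v) := by
    intro m n
    simp [Complex.normSq_apply]
    linear_combination 2 * ((m : ℝ) + n) * (m - n) * k * l * hor
  have hx : (k * u + l * v : ℂ) ∈ AddSubgroup.closure ({(k * u + l * v : ℂ), k * u - l * v} : Set ℂ) :=
    AddSubgroup.subset_closure (by simp)
  have hy : (k * u - l * v : ℂ) ∈ AddSubgroup.closure ({(k * u + l * v : ℂ), k * u - l * v} : Set ℂ) :=
    AddSubgroup.subset_closure (by simp)
  have hmin : ∀ z ∈ AddSubgroup.closure ({(k * u + l * v : ℂ), k * u - l * v} : Set ℂ), z ≠ 0 →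
      k ^ 2 * Complex.normSq u + l ^ 2 * Complex.normSq v ≤ Complex.normSq z := by
    intro z hz hz0
    obtain ⟨m, n, rfl⟩ := AddSubgroup.mem_closure_pair.mp hz
    rw [hns]
    refine wr_aux1 _ _ (by positivity) (by positivity) hkl1 hkl2 m n ?_
    rintro ⟨rfl, rfl⟩
    simp at hz0
  refine ⟨AddSubgroup.closure {(k * u + l * v : ℂ), k * u - l * v}, ?_, ?_, ?_⟩
  · rw [AddSubgroup.closure_le]
    have e1 := AddSubgroup.zsmul_mem _ hum k
    have e2 := AddSubgroup.zsmul_mem _ hvm l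
    rw [zsmul_eq_mul] at e1 e2
    intro z hz
    rcases hz with rfl | rfl
    · exact AddSubgroup.add_mem _ e1 e2
    · exact AddSubgroup.sub_mem _ e1 e2
  · refine wr_index τ _ (2 * k * l * (a * d - b * c)) (by positivity) ?_
    intro z hz
    obtain ⟨m, n, rfl⟩ := AddSubgroup.mem_closure_pair.mp hz
    have := AddSubgroup.mem_closure_pair.mpr
      (⟨l * (m * d - n * c) + k * (n * a - m * b), l * (m * d - n * c) - k * (n * a - m * b), rfl⟩ :
        ∃ p q : ℤ, p • (k * u + l * v : ℂ) + q • (k * u - l * v : ℂ) = _)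
    convert this using 1
    rw [hu', hv']
    simp
    ring
  · refine ⟨_, _, hx, hy, ?_, ?_, ?_⟩
    · rw [LinearIndependent.pair_iff]
      intro s t hst
      have e1 := congrArg Complex.re hst
      have e2 := congrArg Complex.im hst
      simp at e1 e2
      have f1 : (s + t) * k * (u.re * v.im - u.im * v.re) = 0 := by
        linear_combination v.im * e1 - v.re * e2
      have f2 : (s - t) * l * (u.re * v.im - u.im * v.re) = 0 := by
        linear_combination u.re * e2 - u.im * e1
      have g1 : s + t = 0 := by
        rcases mul_eq_zero.mp f1 with h | h
        · rcases mul_eq_zero.mp h with h | h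
          · exact h
          · exact absurd h hkR.ne'
        · exact absurd h hcr0
      have g2 : s - t = 0 := by
        rcases mul_eq_zero.mp f2 with h | h
        · rcases mul_eq_zero.mp h with h | h
          · exact h
          · exact absurd h hlR.ne'
        · exact absurd h hcr0
      constructor <;> linarith
    · intro z hz hz0
      have h1 := hmin z hz hz0
      have h2 := hns 1 0
      simp at h2
      rw [← h2, Complex.normSq_eq_norm_sq, Complex.normSq_eq_norm_sq] at h1
      exact le_of_sq_le_sq h1 (norm_nonneg _)
    · intro z hz hz0
      have h1 := hmin z hz hz0
      have h2 := hns 0 1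
      simp at h2
      rw [← h2, Complex.normSq_eq_norm_sq, Complex.normSq_eq_norm_sq] at h1
      exact le_of_sq_le_sq h1 (norm_nonneg _)

lemma wr_ne (τ : ℂ) (hτ : τ.im ≠ 0) (a b : ℤ) (h : a ≠ 0 ∨ b ≠ 0) : (a : ℂ) + b * τ ≠ 0 := by
  intro h0
  have e2 := congrArg Complex.im h0
  have e1 := congrArg Complex.re h0
  simp [hτ] at e2
  subst e2
  simp at e1
  simp [e1] at h


theorem wellRounded_sublattice_existence_criterion (τ : ℂ) (hτ : τ.im ≠ 0) :
    (∃ Λ : AddSubgroup ℂ, Λ ≤ AddSubgroup.closure {1, τ} ∧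
        (Λ.addSubgroupOf (AddSubgroup.closure {1, τ})).index ≠ 0 ∧ IsWellRounded Λ) ↔
      ((∃ q : ℚ, 2 * τ.re = (q : ℝ)) ∧ (∃ q : ℚ, Complex.normSq τ = (q : ℝ))) ∨
      ((∃ q : ℚ, 2 * τ.re = (q : ℝ)) ∧ ¬(∃ q : ℚ, Complex.normSq τ = (q : ℝ))) ∨
      (¬(∃ q : ℚ, 2 * τ.re = (q : ℝ)) ∧
        ∃ q r : ℚ, Complex.normSq τ = (q : ℝ) + (r : ℝ) * (2 * τ.re) ∧
          ∃ m : ℚ, q + r ^ 2 = m ^ 2) := by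
  constructor
  · rintro ⟨Λ, hle, -, x, y, hx, hy, hli, hmx, hmy⟩
    by_cases ht : ∃ q : ℚ, 2 * τ.re = (q : ℝ)
    · by_cases hn : ∃ q : ℚ, Complex.normSq τ = (q : ℝ)
      · exact Or.inl ⟨ht, hn⟩
      · exact Or.inr (Or.inl ⟨ht, hn⟩)
    · refine Or.inr (Or.inr ⟨ht, ?_⟩)
      have hx0 : x ≠ 0 := hli.ne_zero 0
      have hy0 : y ≠ 0 := hli.ne_zero 1
      have hxy : ‖x‖ = ‖y‖ := le_antisymm (hmx y hy hy0) (hmy x hx hx0)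
      have hns : Complex.normSq x = Complex.normSq y := by
        rw [Complex.normSq_eq_norm_sq, Complex.normSq_eq_norm_sq, hxy]
      rw [LinearIndependent.pair_iff] at hli
      obtain ⟨a, b, hu⟩ := AddSubgroup.mem_closure_pair.mp
        (hle (AddSubgroup.add_mem _ hx hy))
      obtain ⟨c, d, hv⟩ := AddSubgroup.mem_closure_pair.mp
        (hle (AddSubgroup.sub_mem _ hx hy))
      have u1 := congrArg Complex.re hu
      have u2 := congrArg Complex.im hu
      have v1 := congrArg Complex.re hv
      have v2 := congrArg Complex.im hv
      simp at u1 u2 v1 v2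
      rw [Complex.normSq_apply, Complex.normSq_apply] at hns
      have ho : (a : ℝ) * c + (a * d + b * c) * τ.re + b * d * Complex.normSq τ = 0 := by
        have : (a + b * τ.re) * (c + d * τ.re) + (b * τ.im) * (d * τ.im) = 0 := by
          rw [u1, u2, v1, v2]; linear_combination hns
        rw [Complex.normSq_apply]
        linear_combination this
      have hu0 : ¬(a = 0 ∧ b = 0) := by
        rintro ⟨rfl, rfl⟩
        have := hli 1 1 (by simpa using hu.symm)
        simp at this
      have hv0 : ¬(c = 0 ∧ d = 0) := by
        rintro ⟨rfl, rfl⟩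
        have := hli 1 (-1) (by simpa [sub_eq_add_neg] using hv.symm)
        simp at this
      have hbd0 : ¬(b = 0 ∧ d = 0) := by
        rintro ⟨rfl, rfl⟩
        simp at ho
        rcases ho with h | h
        · exact hu0 ⟨h, rfl⟩
        · exact hv0 ⟨h, rfl⟩
      have hbd : b * d ≠ 0 := by
        intro h0
        have h0' : (b : ℝ) * d = 0 := by exact_mod_cast h0
        rw [h0'] at ho
        by_cases hs : a * d + b * c = 0
        · rcases mul_eq_zero.mp h0 with rfl | rfl
          · simp at hs hu0 hbd0
            rcases hs with h | h
            · exact hu0 h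
            · exact hbd0 h
          · simp at hs hv0 hbd0
            rcases hs with h | h
            · exact hbd0 h
            · exact hv0 h
        · apply ht
          refine ⟨-2 * (a * c) / (a * d + b * c), ?_⟩
          have hs' : (a : ℝ) * d + b * c ≠ 0 := by exact_mod_cast hs
          push_cast
          rw [eq_div_iff hs']
          linear_combination 2 * ho
      have hb : b ≠ 0 := left_ne_zero_of_mul hbd
      have hd : d ≠ 0 := right_ne_zero_of_mul hbd
      have hbR : (b : ℝ) ≠ 0 := by exact_mod_cast hb
      have hdR : (d : ℝ) ≠ 0 := by exact_mod_cast hd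
      have hbQ : (b : ℚ) ≠ 0 := by exact_mod_cast hb
      have hdQ : (d : ℚ) ≠ 0 := by exact_mod_cast hd
      refine ⟨-(a * c) / (b * d), -(a * d + b * c) / (2 * (b * d)), ?_,
        (a * d - b * c) / (2 * (b * d)), ?_⟩
      · push_cast
        field_simp
        linear_combination ho
      · field_simp
        ring
  · intro h
    have h' : (∃ q : ℚ, 2 * τ.re = (q : ℝ)) ∨ ∃ q r : ℚ,
        Complex.normSq τ = (q : ℝ) + (r : ℝ) * (2 * τ.re) ∧ ∃ m : ℚ, q + r ^ 2 = m ^ 2 := by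
      tauto
    rcases h' with ⟨q, hq⟩ | ⟨q, r, hn, m, hm⟩
    · have hd : (q.den : ℝ) ≠ 0 := by exact_mod_cast q.den_nz
      have hnum : (q.num : ℝ) = q * q.den := by
        exact_mod_cast (Rat.mul_den_eq_num q).symm
      refine wr_construct τ 1 0 (-q.num) (2 * q.den) (wr_ne τ hτ _ _ (by simp))
        (wr_ne τ hτ _ _ (by simp)) ?_
      push_cast
      rw [hnum]
      linear_combination (q.den : ℝ) * hq
    · obtain ⟨α, hα⟩ : ∃ α : ℚ, α = m - r := ⟨_, rfl⟩
      obtain ⟨γ, hγ⟩ : ∃ γ : ℚ, γ = -m - r := ⟨_, rfl⟩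
      have hnα : (α.num : ℝ) = α * α.den := by
        exact_mod_cast (Rat.mul_den_eq_num α).symm
      have hnγ : (γ.num : ℝ) = γ * γ.den := by
        exact_mod_cast (Rat.mul_den_eq_num γ).symm
      refine wr_construct τ α.num α.den γ.num γ.den (wr_ne τ hτ _ _ (by simp))
        (wr_ne τ hτ _ _ (by simp)) ?_
      have hmR : (q : ℝ) + r ^ 2 = m ^ 2 := by exact_mod_cast hm
      have hαR : (α : ℝ) = m - r := by rw [hα]; push_cast; ring
      have hγR : (γ : ℝ) = -m - r := by rw [hγ]; push_cast; ring
      push_cast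
      rw [hnα, hnγ, hαR, hγR]
      linear_combination (α.den : ℝ) * γ.den * (hn + hmR)
end
end

section
/- Let Γ be a planar lattice whose Gram matrix with respect to some (equivalently, any) ℤ-basis has integer entries whose greatest common divisor is 1 (an integral, primitive lattice), and let d = disc(Γ) be the determinant of this Gram matrix. Let Γ* = {u ∈ ℝ² : ⟨u, v⟩ ∈ ℤ for all v ∈ Γ} ∩ ℚΓ be the dual lattice, and for a primitive vector w ∈ Γ let g*(w) denote its coefficient with respect to Γ*, i.e., the unique positive rational g such that w = g·u₀ with u₀ primitive in Γ*. Let Γ_w = ℤw + (w^⊥ ∩ Γ) be the basic rectangular sublattice determined by w. Then g*(w) is a positive integer dividing d, and [Γ : Γ_w] = ⟨w, w⟩ / g*(w). -/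
noncomputable section

open scoped RealInnerProductSpace

/-- The additive subgroup of vectors orthogonal to `w`. -/
def perpSubgroup (w : EucPlane) : AddSubgroup EucPlane where
  carrier := {z : EucPlane | ⟪w, z⟫ = 0}
  zero_mem' := by simp
  add_mem' := by
    intro a b ha hb
    simp only [Set.mem_setOf_eq] at *
    rw [inner_add_right, ha, hb, add_zero]
  neg_mem' := by
    intro a ha
    simp only [Set.mem_setOf_eq] at *
    rw [inner_neg_right, ha, neg_zero]

/-- The dual lattice of `Γ`: all vectors having integral inner product with every
vector of `Γ` (for an integral planar lattice this coincides with `Γ* ∩ ℚΓ`). -/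
def dualLattice (Γ : AddSubgroup EucPlane) : AddSubgroup EucPlane where
  carrier := {u : EucPlane | ∀ v ∈ Γ, ∃ k : ℤ, ⟪u, v⟫ = (k : ℝ)}
  zero_mem' := by
    intro v _
    exact ⟨0, by simp⟩
  add_mem' := by
    intro a b ha hb v hv
    obtain ⟨k, hk⟩ := ha v hv
    obtain ⟨m, hm⟩ := hb v hv
    exact ⟨k + m, by rw [inner_add_left, hk, hm]; push_cast; ring⟩
  neg_mem' := by
    intro a ha v hv
    obtain ⟨k, hk⟩ := ha v hv
    exact ⟨-k, by rw [inner_neg_left, hk]; push_cast; ring⟩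

/-- The basic rectangular sublattice `Γ_w = ℤw + (w^⊥ ∩ Γ)` determined by a
primitive vector `w` of `Γ`. -/
def brsSublattice (Γ : AddSubgroup EucPlane) (w : EucPlane) : AddSubgroup EucPlane :=
  AddSubgroup.closure {w} ⊔ (Γ ⊓ perpSubgroup w)

theorem index_of_brsSublattice
    (Γ : AddSubgroup EucPlane) (v₁ v₂ : EucPlane)
    (hbasis : LinearIndependent ℝ ![v₁, v₂]) (hΓ : Γ = AddSubgroup.closure {v₁, v₂})
    (a b c : ℤ)
    (ha : ⟪v₁, v₁⟫ = (a : ℝ)) (hb : ⟪v₁, v₂⟫ = (b : ℝ)) (hc : ⟪v₂, v₂⟫ = (c : ℝ))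
    (hprim : Int.gcd (Int.gcd a b) c = 1)
    (w : EucPlane) (hw : IsPrimitiveIn Γ w)
    (g : ℚ) (hg : 0 < g) (u₀ : EucPlane)
    (hu₀ : IsPrimitiveIn (dualLattice Γ) u₀) (hwu : w = (g : ℝ) • u₀) :
    (∃ gz : ℤ, (gz : ℚ) = g ∧ gz ∣ (a * c - b ^ 2)) ∧
    (((brsSublattice Γ w).addSubgroupOf Γ).index : ℝ) * (g : ℝ) = ⟪w, w⟫ := by
  classical
  have hgR : (0 : ℝ) < (g : ℝ) := by exact_mod_cast hg
  have hv1 : v₁ ∈ Γ := by rw [hΓ]; exact AddSubgroup.subset_closure (by simp)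
  have hv2 : v₂ ∈ Γ := by rw [hΓ]; exact AddSubgroup.subset_closure (by simp)
  have hmem : ∀ z : EucPlane, z ∈ Γ ↔ ∃ m n : ℤ, m • v₁ + n • v₂ = z := by
    intro z; rw [hΓ]; exact AddSubgroup.mem_closure_pair
  have hw0 : w ≠ 0 := by
    intro h
    have := hw.2 2 0 Γ.zero_mem (by simp [h])
    omega
  have hdiv : ∀ (m : ℤ), m ≠ 0 → ∀ u : EucPlane, u = m • ((m : ℝ)⁻¹ • u) := by
    intro m hm u
    have : (m : ℝ) ≠ 0 := by exact_mod_cast hm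
    rw [← Int.cast_smul_eq_zsmul ℝ, smul_smul, mul_inv_cancel₀ this, one_smul]
  obtain ⟨k₁, hk1⟩ := hu₀.1 v₁ hv1
  obtain ⟨k₂, hk2⟩ := hu₀.1 v₂ hv2
  have hin : ∀ (u : EucPlane) (m n : ℤ), ⟪u, m • v₁ + n • v₂⟫ = m * ⟪u, v₁⟫ + n * ⟪u, v₂⟫ := by
    intro u m n
    rw [← Int.cast_smul_eq_zsmul ℝ, ← Int.cast_smul_eq_zsmul ℝ, inner_add_right,
      real_inner_smul_right, real_inner_smul_right]
  obtain ⟨p, q, hpq⟩ := (hmem w).1 hw.1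
  -- coprimality of the coordinates of `u₀` in the dual
  have hk : Int.gcd k₁ k₂ = 1 := by
    have h0 : ((Int.gcd k₁ k₂ : ℕ) : ℤ) ≠ 0 := by
      intro h
      have h' : k₁ = 0 ∧ k₂ = 0 := Int.gcd_eq_zero_iff.1 (by exact_mod_cast h)
      have : ⟪u₀, w⟫ = 0 := by
        rw [← hpq, hin, hk1, hk2, h'.1, h'.2]; simp
      apply hw0
      rw [← inner_self_eq_zero (𝕜 := ℝ)]
      nth_rewrite 1 [hwu]
      rw [real_inner_smul_left, this, mul_zero]
    have := hu₀.2 _ _ ?_ (hdiv _ h0 u₀)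
    · omega
    · intro v hv
      obtain ⟨m, n, rfl⟩ := (hmem v).1 hv
      obtain ⟨s, hs⟩ := Int.gcd_dvd_left k₁ k₂
      obtain ⟨t, ht⟩ := Int.gcd_dvd_right k₁ k₂
      have h0' : (((Int.gcd k₁ k₂ : ℕ) : ℤ) : ℝ) ≠ 0 := by exact_mod_cast h0
      refine ⟨m * s + n * t, ?_⟩
      have hs' : (k₁ : ℝ) = (((Int.gcd k₁ k₂ : ℕ) : ℤ) : ℝ) * s := by exact_mod_cast hs
      have ht' : (k₂ : ℝ) = (((Int.gcd k₁ k₂ : ℕ) : ℤ) : ℝ) * t := by exact_mod_cast ht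
      rw [real_inner_smul_left, hin, hk1, hk2, inv_mul_eq_iff_eq_mul₀ h0']
      generalize (((Int.gcd k₁ k₂ : ℕ) : ℤ) : ℝ) = D at *
      rw [hs', ht']
      push_cast
      ring
  have hp : Int.gcd p q = 1 := by
    have h0 : ((Int.gcd p q : ℕ) : ℤ) ≠ 0 := by
      intro h
      have h' : p = 0 ∧ q = 0 := Int.gcd_eq_zero_iff.1 (by exact_mod_cast h)
      apply hw0
      rw [← hpq, h'.1, h'.2]; simp
    obtain ⟨s, hs⟩ := Int.gcd_dvd_left p q
    obtain ⟨t, ht⟩ := Int.gcd_dvd_right p q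
    have := hw.2 (Int.gcd p q : ℕ) (s • v₁ + t • v₂) ((hmem _).2 ⟨s, t, rfl⟩) (by
      rw [smul_add, smul_smul, smul_smul, ← hs, ← ht, hpq])
    omega
  obtain ⟨x, y, hxy⟩ := Int.isCoprime_iff_gcd_eq_one.2 hk
  obtain ⟨r, s, hrs⟩ := Int.isCoprime_iff_gcd_eq_one.2 hp
  have hα : (g : ℝ) * k₁ = p * a + q * b := by
    rw [← hk1, ← real_inner_smul_left, ← hwu, real_inner_comm, ← hpq, hin, ha, hb]
  have hβ : (g : ℝ) * k₂ = p * b + q * c := by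
    rw [← hk2, ← real_inner_smul_left, ← hwu, real_inner_comm, ← hpq, hin, real_inner_comm, hb, hc]
  have hgz : (g : ℝ) = ((x * (p * a + q * b) + y * (p * b + q * c) : ℤ) : ℝ) := by
    have : (x : ℝ) * k₁ + y * k₂ = 1 := by exact_mod_cast hxy
    push_cast
    rw [← hα, ← hβ]
    linear_combination (-(g : ℝ)) * this
  refine ⟨⟨x * (p * a + q * b) + y * (p * b + q * c), by exact_mod_cast hgz.symm, ?_⟩, ?_⟩
  · rw [hgz] at hα hβ
    have hα' : (x * (p * a + q * b) + y * (p * b + q * c)) * k₁ = p * a + q * b := by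
      exact_mod_cast hα
    have hβ' : (x * (p * a + q * b) + y * (p * b + q * c)) * k₂ = p * b + q * c := by
      exact_mod_cast hβ
    generalize x * (p * a + q * b) + y * (p * b + q * c) = G at hα' hβ' ⊢
    refine ⟨r * (k₁ * c - k₂ * b) + s * (a * k₂ - b * k₁), ?_⟩
    linear_combination (-(a * c - b ^ 2)) * hrs + (-(r * c) + s * b) * hα' + (r * b - s * a) * hβ'
  · have hφ : ∀ z : Γ, ∃ k : ℤ, ⟪u₀, (z : EucPlane)⟫ = (k : ℝ) := fun z => hu₀.1 z z.2
    choose f hf using hφ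
    let φ : Γ →+ ℤ := AddMonoidHom.mk' f (by
      intro z z'
      have : ((f (z + z') : ℤ) : ℝ) = f z + f z' := by
        rw [← hf, ← hf, ← hf, ← inner_add_right]; rfl
      exact_mod_cast this)
    have hφ : ∀ z : Γ, ⟪u₀, (z : EucPlane)⟫ = (φ z : ℝ) := hf
    have hsurj : Function.Surjective φ := by
      intro n
      refine ⟨⟨(n * x) • v₁ + (n * y) • v₂, (hmem _).2 ⟨_, _, rfl⟩⟩, ?_⟩
      have : (x : ℝ) * k₁ + y * k₂ = 1 := by exact_mod_cast hxy
      have h2 := hφ ⟨(n * x) • v₁ + (n * y) • v₂, (hmem _).2 ⟨_, _, rfl⟩⟩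
      rw [hin, hk1, hk2] at h2
      have h3 : ((φ ⟨(n * x) • v₁ + (n * y) • v₂, (hmem _).2 ⟨_, _, rfl⟩⟩ : ℤ) : ℝ) = n := by
        rw [← h2]; push_cast; linear_combination (n : ℝ) * this
      exact_mod_cast h3
    let W : Γ := ⟨w, hw.1⟩
    have hww : ⟪w, w⟫ = (g : ℝ) * (φ W : ℝ) := by
      rw [← hφ W, ← real_inner_smul_left, ← hwu]
    have heq : (brsSublattice Γ w).addSubgroupOf Γ = (AddSubgroup.zmultiples (φ W)).comap φ := by
      ext z
      rw [AddSubgroup.mem_addSubgroupOf, AddSubgroup.mem_comap, AddSubgroup.mem_zmultiples_iff,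
        brsSublattice, AddSubgroup.mem_sup]
      constructor
      · rintro ⟨y', hy', t, ht, hyt⟩
        obtain ⟨n, rfl⟩ := AddSubgroup.mem_closure_singleton.1 hy'
        refine ⟨n, ?_⟩
        have hz : z = n • W + ⟨t, ht.1⟩ := Subtype.ext hyt.symm
        have ht0 : φ ⟨t, ht.1⟩ = 0 := by
          have h1 : ⟪w, t⟫ = 0 := ht.2
          rw [hwu, real_inner_smul_left] at h1
          have h2 := hφ ⟨t, ht.1⟩
          have h3 := (mul_eq_zero.1 h1).resolve_left hgR.ne'
          rw [h3] at h2
          exact_mod_cast h2.symm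
        rw [hz, map_add, ht0, map_zsmul, add_zero]
      · rintro ⟨n, hn⟩
        refine ⟨n • w, AddSubgroup.mem_closure_singleton.2 ⟨n, rfl⟩, (z - n • W : Γ),
          ⟨(z - n • W : Γ).2, ?_⟩, ?_⟩
        · change ⟪w, ((z - n • W : Γ) : EucPlane)⟫ = 0
          rw [hwu, real_inner_smul_left, hφ, map_sub, map_zsmul, hn]
          simp
        · simp [W]
    have hpos : 0 < (φ W : ℝ) := by
      have : 0 < ⟪w, w⟫ := real_inner_self_pos.2 hw0
      rw [hww] at this
      exact (mul_pos_iff_of_pos_left hgR).1 this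
    have hpos' : 0 < φ W := by exact_mod_cast hpos
    rw [heq, AddSubgroup.index_comap_of_surjective _ hsurj, Int.index_zmultiples, hww,
      Nat.cast_natAbs, abs_of_pos hpos', mul_comm]
end
end

section
/- Let Γ be a planar lattice whose Gram matrix with respect to some ℤ-basis has integer entries with greatest common divisor 1, let d be its discriminant, and let Γ* be its dual lattice. Let w, w' ∈ Γ be primitive vectors such that w − w' ∈ d·Γ* and w − w' ∈ 2·Γ, and let Γ_w = ℤw + (w^⊥ ∩ Γ) and Γ_{w'} = ℤw' + (w'^⊥ ∩ Γ) be the associated basic rectangular sublattices. Then [Γ : Γ_w] ≡ [Γ : Γ_{w'}] (mod 2). -/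
noncomputable section

open scoped RealInnerProductSpace

/-- Index formula: `[Γ : Γ_w] * [ℤ : ⟨w, Γ⟩] = ⟨w, w⟩`. -/
theorem brs_index_mul (Γ : AddSubgroup EucPlane) (w : EucPlane) (hw : w ∈ Γ)
    (f : Γ →+ ℤ) (hf : ∀ x : Γ, ⟪w, (x : EucPlane)⟫ = (f x : ℝ)) :
    ((brsSublattice Γ w).addSubgroupOf Γ).index * f.range.index = (f ⟨w, hw⟩).natAbs := by
  have h1 : (brsSublattice Γ w).addSubgroupOf Γ
      = (AddSubgroup.zmultiples (f ⟨w, hw⟩)).comap f := by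
    ext x
    rw [AddSubgroup.mem_addSubgroupOf, AddSubgroup.mem_comap, AddSubgroup.mem_zmultiples_iff,
      brsSublattice, AddSubgroup.mem_sup]
    constructor
    · rintro ⟨y, hy, z, hz, hyz⟩
      obtain ⟨n, rfl⟩ := AddSubgroup.mem_closure_singleton.mp hy
      refine ⟨n, ?_⟩
      have hz2 : ⟪w, z⟫ = 0 := hz.2
      have hx : x = n • (⟨w, hw⟩ : Γ) + ⟨z, hz.1⟩ := by
        apply Subtype.ext
        simp [← hyz]
      have hfz : f ⟨z, hz.1⟩ = 0 := by
        have := hf ⟨z, hz.1⟩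
        simp only [hz2] at this
        exact_mod_cast this.symm
      rw [hx, map_add, map_zsmul, hfz, add_zero]
    · rintro ⟨n, hn⟩
      refine ⟨n • w, AddSubgroup.mem_closure_singleton.mpr ⟨n, rfl⟩, (x : EucPlane) - n • w,
        ⟨Γ.sub_mem x.2 (Γ.zsmul_mem hw n), ?_⟩, by abel⟩
      change ⟪w, (x : EucPlane) - n • w⟫ = 0
      have h2 := hf (x - n • (⟨w, hw⟩ : Γ))
      rw [map_sub, map_zsmul, hn, sub_self] at h2
      simpa using h2
  rw [h1, AddSubgroup.index_comap, ← Int.index_zmultiples]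
  apply AddSubgroup.relIndex_mul_index
  rw [AddSubgroup.zmultiples_le]
  exact ⟨_, rfl⟩

theorem exists_pairing_hom (Γ : AddSubgroup EucPlane) (w : EucPlane)
    (h : ∀ x ∈ Γ, ∃ k : ℤ, ⟪w, x⟫ = (k : ℝ)) :
    ∃ f : Γ →+ ℤ, ∀ x : Γ, ⟪w, (x : EucPlane)⟫ = (f x : ℝ) := by
  choose g hg using fun x : Γ => h x x.2
  refine ⟨AddMonoidHom.mk' g ?_, hg⟩
  intro x y
  have : ((g (x + y) : ℤ) : ℝ) = ((g x + g y : ℤ) : ℝ) := by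
    push_cast
    rw [← hg, ← hg, ← hg, AddSubgroup.coe_add, inner_add_right]
  exact_mod_cast this

theorem disc_mem_range (Γ : AddSubgroup EucPlane) (v₁ v₂ : EucPlane)
    (hΓ : Γ = AddSubgroup.closure {v₁, v₂}) (a b c : ℤ)
    (ha : ⟪v₁, v₁⟫ = (a : ℝ)) (hb : ⟪v₁, v₂⟫ = (b : ℝ)) (hc : ⟪v₂, v₂⟫ = (c : ℝ))
    (w : EucPlane) (hw : IsPrimitiveIn Γ w)
    (f : Γ →+ ℤ) (hf : ∀ x : Γ, ⟪w, (x : EucPlane)⟫ = (f x : ℝ)) :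
    a * c - b ^ 2 ∈ f.range := by
  have hv1 : v₁ ∈ Γ := hΓ ▸ AddSubgroup.subset_closure (by simp)
  have hv2 : v₂ ∈ Γ := hΓ ▸ AddSubgroup.subset_closure (by simp)
  obtain ⟨hwΓ, hp⟩ := hw
  have hwc := hwΓ
  rw [hΓ, AddSubgroup.mem_closure_pair] at hwc
  obtain ⟨p, q, hpq⟩ := hwc
  have hgcd : Int.gcd p q = 1 := by
    obtain ⟨p', hp'⟩ := Int.gcd_dvd_left p q
    obtain ⟨q', hq'⟩ := Int.gcd_dvd_right p q
    have := hp (Int.gcd p q) (p' • v₁ + q' • v₂)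
      (Γ.add_mem (Γ.zsmul_mem hv1 _) (Γ.zsmul_mem hv2 _))
      (by rw [smul_add, smul_smul, smul_smul, ← hp', ← hq', hpq])
    omega
  obtain ⟨s, t, hst⟩ := Int.isCoprime_iff_gcd_eq_one.mpr hgcd
  have hb' : ⟪v₂, v₁⟫ = (b : ℝ) := by rw [real_inner_comm, hb]
  have key : ∀ (x : EucPlane) (m : ℤ), ⟪p • v₁ + q • v₂, m • x⟫
      = (m : ℝ) * (p * ⟪v₁, x⟫ + q * ⟪v₂, x⟫) := by
    intro x m
    simp only [← Int.cast_smul_eq_zsmul ℝ, inner_add_left, real_inner_smul_left,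
      real_inner_smul_right]
    ring
  refine ⟨⟨(s * c - t * b) • v₁ + (t * a - s * b) • v₂,
    Γ.add_mem (Γ.zsmul_mem hv1 _) (Γ.zsmul_mem hv2 _)⟩, ?_⟩
  have h := hf ⟨(s * c - t * b) • v₁ + (t * a - s * b) • v₂,
    Γ.add_mem (Γ.zsmul_mem hv1 _) (Γ.zsmul_mem hv2 _)⟩
  rw [← hpq, inner_add_right, key, key, ha, hb, hb', hc] at h
  have h' : (s * c - t * b) * (p * a + q * b) + (t * a - s * b) * (p * b + q * c)
      = f ⟨(s * c - t * b) • v₁ + (t * a - s * b) • v₂,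
    Γ.add_mem (Γ.zsmul_mem hv1 _) (Γ.zsmul_mem hv2 _)⟩ := by exact_mod_cast h
  rw [← h']
  linear_combination (a * c - b ^ 2) * hst

theorem parity_of_brs_index
    (Γ : AddSubgroup EucPlane) (v₁ v₂ : EucPlane)
    (hbasis : LinearIndependent ℝ ![v₁, v₂]) (hΓ : Γ = AddSubgroup.closure {v₁, v₂})
    (a b c : ℤ)
    (ha : ⟪v₁, v₁⟫ = (a : ℝ)) (hb : ⟪v₁, v₂⟫ = (b : ℝ)) (hc : ⟪v₂, v₂⟫ = (c : ℝ))
    (hprim : Int.gcd (Int.gcd a b) c = 1)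
    (w w' : EucPlane) (hw : IsPrimitiveIn Γ w) (hw' : IsPrimitiveIn Γ w')
    (hmodd : ∃ u ∈ dualLattice Γ, w - w' = (((a * c - b ^ 2 : ℤ)) : ℝ) • u)
    (hmod2 : ∃ v ∈ Γ, w - w' = (2 : ℝ) • v) :
    ((brsSublattice Γ w).addSubgroupOf Γ).index % 2 =
      ((brsSublattice Γ w').addSubgroupOf Γ).index % 2 := by
  have hv1 : v₁ ∈ Γ := hΓ ▸ AddSubgroup.subset_closure (by simp)
  have hv2 : v₂ ∈ Γ := hΓ ▸ AddSubgroup.subset_closure (by simp)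
  have hb' : ⟪v₂, v₁⟫ = (b : ℝ) := by rw [real_inner_comm, hb]
  have hint : ∀ w ∈ Γ, ∀ x ∈ Γ, ∃ k : ℤ, ⟪w, x⟫ = (k : ℝ) := by
    intro w hw x hx
    rw [hΓ, AddSubgroup.mem_closure_pair] at hw hx
    obtain ⟨p, q, rfl⟩ := hw
    obtain ⟨r, s, rfl⟩ := hx
    refine ⟨p * r * a + p * s * b + q * r * b + q * s * c, ?_⟩
    simp only [← Int.cast_smul_eq_zsmul ℝ, inner_add_left, inner_add_right,
      real_inner_smul_left, real_inner_smul_right, ha, hb, hb', hc]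
    push_cast
    ring
  obtain ⟨f, hf⟩ := exists_pairing_hom Γ w (hint w hw.1)
  obtain ⟨f', hf'⟩ := exists_pairing_hom Γ w' (hint w' hw'.1)
  have hd := disc_mem_range Γ v₁ v₂ hΓ a b c ha hb hc w hw f hf
  have hd' := disc_mem_range Γ v₁ v₂ hΓ a b c ha hb hc w' hw' f' hf'
  have hI := brs_index_mul Γ w hw.1 f hf
  have hI' := brs_index_mul Γ w' hw'.1 f' hf'
  obtain ⟨u, hu, hwu⟩ := hmodd
  obtain ⟨v, hv, hwv⟩ := hmod2
  have hdiff : ∀ x : Γ, ∃ k : ℤ, f x - f' x = k * (a * c - b ^ 2) := by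
    intro x
    obtain ⟨k, hk⟩ := hu x x.2
    refine ⟨k, ?_⟩
    have h : ⟪w - w', (x : EucPlane)⟫ = ((k * (a * c - b ^ 2) : ℤ) : ℝ) := by
      rw [hwu, real_inner_smul_left, hk]
      push_cast
      ring
    rw [inner_sub_left, hf, hf'] at h
    exact_mod_cast h
  have hrange : f'.range = f.range := by
    apply le_antisymm
    · rintro _ ⟨x, rfl⟩
      obtain ⟨k, hk⟩ := hdiff x
      have : f' x = f x - k • (a * c - b ^ 2) := by rw [smul_eq_mul]; linarith
      rw [this]
      exact f.range.sub_mem ⟨x, rfl⟩ (f.range.zsmul_mem hd k)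
    · rintro _ ⟨x, rfl⟩
      obtain ⟨k, hk⟩ := hdiff x
      have : f x = f' x + k • (a * c - b ^ 2) := by rw [smul_eq_mul]; linarith
      rw [this]
      exact f'.range.add_mem ⟨x, rfl⟩ (f'.range.zsmul_mem hd' k)
  rw [hrange] at hI'
  have hw0 : w ≠ 0 := by
    rintro rfl
    have := hw.2 0 0 Γ.zero_mem (by simp)
    omega
  have hN : 0 < f ⟨w, hw.1⟩ := by
    have h := hf ⟨w, hw.1⟩
    have h2 : 0 < ⟪w, w⟫ := real_inner_self_pos.mpr hw0
    rw [h] at h2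
    exact_mod_cast h2
  have hN' : 0 ≤ f' ⟨w', hw'.1⟩ := by
    have h := hf' ⟨w', hw'.1⟩
    have h2 : 0 ≤ ⟪w', w'⟫ := real_inner_self_nonneg
    rw [h] at h2
    exact_mod_cast h2
  have hNN : ∃ k : ℤ, f ⟨w, hw.1⟩ - f' ⟨w', hw'.1⟩ = 2 * (a * c - b ^ 2) * k := by
    obtain ⟨k, hk⟩ := hu (w' + v) (Γ.add_mem hw'.1 hv)
    refine ⟨k, ?_⟩
    have e1 : w = w' + (2 : ℝ) • v := by rw [← hwv]; abel
    have h : ⟪w, w⟫ - ⟪w', w'⟫ = 2 * ⟪w - w', w' + v⟫ := by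
      rw [hwv, e1]
      simp only [inner_add_left, inner_add_right, real_inner_smul_left, real_inner_smul_right]
      rw [real_inner_comm v w']
      ring
    rw [hwu, real_inner_smul_left, hk, hf ⟨w, hw.1⟩, hf' ⟨w', hw'.1⟩, ← mul_assoc] at h
    exact_mod_cast h
  have hgd : (f.range.index : ℤ) ∣ a * c - b ^ 2 := by
    obtain ⟨g, hg⟩ := Int.subgroup_cyclic f.range
    rw [← AddSubgroup.zmultiples_eq_closure] at hg
    rw [hg, Int.mem_zmultiples_iff] at hd
    rw [hg, Int.index_zmultiples]
    exact Int.natAbs_dvd.mpr hd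
  obtain ⟨k, hk⟩ := hNN
  obtain ⟨e, he⟩ := hgd
  zify at hI hI'
  rw [abs_of_pos hN] at hI
  rw [abs_of_nonneg hN'] at hI'
  have hg0 : (f.range.index : ℤ) ≠ 0 := by
    intro h
    rw [h, mul_zero] at hI
    omega
  have hfin : (((brsSublattice Γ w).addSubgroupOf Γ).index : ℤ)
      - ((brsSublattice Γ w').addSubgroupOf Γ).index = 2 * (e * k) := by
    apply mul_right_cancel₀ hg0
    rw [sub_mul, hI, hI', hk, he]
    ring
  omega
end
end
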